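/- arXiv:2103.07650 — 2 statements merged into one kernel-verified Lean document; each statement's English description precedes it below -/
import Mathlib

section
/- Let n ≥ 2 and let p > 1, q > 1 satisfy 4q − (n−1)pq + n + 3 > 0. Let f₁, g₁, f₂, g₂ ∈ C_c^∞(ℝⁿ) with ∫_{ℝⁿ} g₁(x) dx > 0 and ∫_{ℝⁿ} g₂(x) dx > 0, and let ε > 0. Then there exists no pair (u, v) of C² functions on [0,∞) × ℝⁿ satisfying ∂_t²u − Δu = |v|^p and ∂_t²v − Δv = |u|^q + |∂_t u|^{(n+1)/(n−1)} pointwise on (0,∞) × ℝⁿ, with u(0,·) = εf₁, ∂_t u(0,·) = εg₁, v(0,·) = εf₂, ∂_t v(0,·) = εg₂, and such that u, v, ∂_t u, ∂_t v are supported in {(t,x) : |x| ≤ t + 1}. -/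
/-!
Write `U(t) = ∫ u(t, x) dx` and `V(t) = ∫ v(t, x) dx`. Green's identity with test function `1`
(`hasDerivAt_green`) gives `U'' = ∫ |v|^p` and `V'' = ∫ |u|^q + ∫ |∂_t u|^{(n+1)/(n-1)}`, and Hölder's
inequality on the ball `|x| ≤ t + 1` (`holder_cone`) turns these into
`U'' ≳ t^{-n(p-1)} |V|^p` and `V'' ≳ t^{-n(q-1)} |U|^q`.

The derivative nonlinearity supplies the initial growth `V'' ≳ t^{(n-3)/2}` (`glassey_growth`).
Since `□u ≥ 0`, the flux `∫ (∂_t u ψ - u ∂_t ψ) dx` is nondecreasing for every nonnegative solution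
`ψ` of the wave equation (`flux_mono`). For a unit vector `θ` and a smooth step function, one adds
the fluxes at time `T` against the outgoing wave `step(⟨x,θ⟩ - t)` and the incoming wave
`step(⟨x,θ⟩ + t - 2T)`: at time `T` the two waves coincide and have opposite time derivatives, so the
terms containing `u` cancel, while at time `0` the first flux is `∫ ∂_t u(0)` and the second is `0`.
Hence `∫ ∂_t u(0) ≤ 2 ∫ ∂_t u(T) step(⟨x,θ⟩ - T)` (`direction_bound`). By finite speed of propagation
the right-hand side only sees the shell `T - 2 < |x| ≤ T + 1`, and each point of the shell only
contributes for `θ` in a cap of measure `O(T^{-(n-1)/2})` (`cap_volume`). Averaging over `θ` gives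
`∫_{shell} |∂_t u(T)| ≳ T^{(n-1)/2}` (`shell_mass`), and Hölder's inequality on the shell, of volume
`O(T^{n-1})`, gives `∫ |∂_t u|^{(n+1)/(n-1)} ≳ T^{(n-3)/2}`.

Under the hypothesis on `p` and `q`, iterating the three differential inequalities from
`V ≳ t^{(n+1)/2}` raises the exponent by at least a fixed `δ > 0` each time. So `U` and `V` outgrow
every power of `t`, the weights can be absorbed, and `Z = U + V` satisfies `Z'' ≥ c Z^s` with
`s > 1`, which is impossible for all time (`kato`, `ode_blow_up`).
-/

open MeasureTheory Real ENNReal FourierTransform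
open scoped ContDiff

noncomputable section

/-- Euclidean space ℝⁿ. -/
abbrev Spc (n : ℕ) := EuclideanSpace ℝ (Fin n)

/-- Space-time ℝ × ℝⁿ. -/
abbrev STn (n : ℕ) := ℝ × Spc n

variable {n : ℕ}

/-- Directional derivative in the space-time direction `v`. -/
def dirD (v : STn n) (f : STn n → ℝ) : STn n → ℝ := fun p => fderiv ℝ f p v

/-- Time derivative ∂_t. -/
def dtD : (STn n → ℝ) → STn n → ℝ := dirD (1, 0)

/-- Spatial derivative ∂_j. -/
def dxD (j : Fin n) : (STn n → ℝ) → STn n → ℝ := dirD (0, EuclideanSpace.single j 1)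

/-- Spatial Laplacian. -/
def lapD (f : STn n → ℝ) : STn n → ℝ := fun p => ∑ j, dxD j (dxD j f) p

/-- d'Alembertian □ = ∂_t² − Δ. -/
def boxD (f : STn n → ℝ) : STn n → ℝ := fun p => dtD (dtD f) p - lapD f p

/-- Lorentz boost L_j = t ∂_j + x_j ∂_t. -/
def LD (j : Fin n) (f : STn n → ℝ) : STn n → ℝ := fun p => p.1 * dxD j f p + p.2 j * dtD f p

/-- Rotation Ω_{jk} = x_j ∂_k − x_k ∂_j. -/
def RotD (j k : Fin n) (f : STn n → ℝ) : STn n → ℝ := fun p => p.2 j * dxD k f p - p.2 k * dxD j f p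

/-- Scaling S = t ∂_t + x·∇. -/
def SD (f : STn n → ℝ) : STn n → ℝ := fun p => p.1 * dtD f p + ∑ j, p.2 j * dxD j f p

/-- Index type for the Klainerman vector fields. -/
def GIdx (n : ℕ) := Option (Fin n) ⊕ Fin n ⊕ (Fin n × Fin n) ⊕ Unit

instance : Fintype (GIdx n) := by unfold GIdx; infer_instance
instance : DecidableEq (GIdx n) := by unfold GIdx; infer_instance

/-- The Klainerman vector field with index `i`. -/
def Gop : GIdx n → (STn n → ℝ) → STn n → ℝ
  | Sum.inl none => dtD
  | Sum.inl (some j) => dxD j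
  | Sum.inr (Sum.inl j) => LD j
  | Sum.inr (Sum.inr (Sum.inl jk)) => RotD jk.1 jk.2
  | Sum.inr (Sum.inr (Sum.inr _)) => SD

/-- Iterated composition Γ^α along a word of indices. -/
def GwL : List (GIdx n) → (STn n → ℝ) → STn n → ℝ
  | [], f => f
  | a :: l, f => Gop a (GwL l f)

/-- Sum of a quantity over all products of at most `N` Klainerman vector fields. -/
def SumW (N : ℕ) (Φ : (STn n → ℝ) → ℝ≥0∞) (f : STn n → ℝ) : ℝ≥0∞ :=
  ∑ m ∈ Finset.range (N + 1), ∑ w : Fin m → GIdx n, Φ (GwL (List.ofFn w) f)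

/-- Pointwise norm of the full space-time gradient ∂u = (∂_t u, ∇_x u). -/
def gradN (f : STn n → ℝ) (p : STn n) : ℝ := Real.sqrt ((dtD f p) ^ 2 + ∑ j, (dxD j f p) ^ 2)

/-- Fourier transform (in space) of a real valued function. -/
def fourierS (g : Spc n → ℝ) : Spc n → ℂ := 𝓕 (fun x => (g x : ℂ))

/-- ‖ |D|^s g ‖_{L²}, i.e. the L² norm of ξ ↦ |ξ|^s (ℱ g)(ξ). -/
def DsN (s : ℝ) (g : Spc n → ℝ) : ℝ≥0∞ :=
  eLpNorm (fun ξ : Spc n => ‖ξ‖ ^ s * ‖fourierS g ξ‖) 2 volume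

/-- The surface measure on the unit sphere of ℝⁿ. -/
def sphM (n : ℕ) : Measure (Metric.sphere (0 : Spc n) 1) := (volume : Measure (Spc n)).toSphere

/-- The L^q norm of g(r ω) over the unit sphere. -/
def sphN (n : ℕ) (q : ℝ) (g : Spc n → ℝ) (r : ℝ) : ℝ≥0∞ :=
  (∫⁻ o, (‖g (r • (o : Spc n))‖₊ : ℝ≥0∞) ^ q ∂(sphM n)) ^ (1 / q)

/-- The mixed norm ‖g‖_{p,q} = (∫_0^∞ ‖g(r·)‖_{L^q(S^{n-1})}^p r^{n-1} dr)^{1/p}. -/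
def mixN (n : ℕ) (p q : ℝ) (g : Spc n → ℝ) : ℝ≥0∞ :=
  (∫⁻ r in Set.Ioi (0 : ℝ), (sphN n q g r) ^ p * ENNReal.ofReal (r ^ (n - 1))) ^ (1 / p)

/-- A space-time function which is Schwartz in the space variable for each fixed time. -/
def SchwartzInX (v : STn n → ℝ) : Prop :=
  ∀ t : ℝ, ∃ φ : SchwartzMap (Spc n) ℝ, ∀ x, v (t, x) = φ x

/-- The space-time partial derivatives ∂_0 = ∂_t, ∂_j (j = 1,2,3) on ℝ × ℝ³. -/
def pd4 (α : Fin 4) : (STn 3 → ℝ) → STn 3 → ℝ := Fin.cases dtD (fun j => dxD j) α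

/-- The null condition for a set of coefficients {A^{αβ}}. -/
def NullCond (A : Fin 4 → Fin 4 → ℝ) : Prop :=
  ∀ X : Fin 4 → ℝ, (X 0) ^ 2 = (X 1) ^ 2 + (X 2) ^ 2 + (X 3) ^ 2 →
    ∑ α, ∑ β, A α β * X α * X β = 0

/-- The null form A^{αβ} (∂_α v)(∂_β w). -/
def QF (A : Fin 4 → Fin 4 → ℝ) (v w : STn 3 → ℝ) (p : STn 3) : ℝ :=
  ∑ α, ∑ β, A α β * pd4 α v p * pd4 β w p

/-- The good derivative T_j = ∂_j + (x_j/|x|) ∂_t. -/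
def TD (j : Fin 3) (f : STn 3 → ℝ) (p : STn 3) : ℝ := dxD j f p + (p.2 j / ‖p.2‖) * dtD f p

end

/-! ### Ordinary differential inequalities -/

/-- Eventual power lower bound: `g t ≥ c t ^ a` for some `c > 0` and all large `t`. -/
def EvPow (g : ℝ → ℝ) (a : ℝ) : Prop :=
  ∃ c : ℝ, 0 < c ∧ ∀ᶠ t in Filter.atTop, c * t ^ a ≤ g t

lemma EvPow.mono {g : ℝ → ℝ} {a b : ℝ} (h : EvPow g a) (hba : b ≤ a) : EvPow g b := by
  obtain ⟨c, hc, h⟩ := h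
  refine ⟨c, hc, ?_⟩
  filter_upwards [h, Filter.eventually_ge_atTop 1] with t ht h1
  refine le_trans ?_ ht
  gcongr

/-- Integrating a power lower bound raises the exponent by one. The mean value theorem on
`[t/2, t]`, rather than integration from a fixed time, makes this valid for every real `b`,
including `b ≤ -1`. -/
lemma EvPow.integrate {g g' : ℝ → ℝ} {b : ℝ} (hg : ∀ t > 0, HasDerivAt g (g' t) t)
    (h : EvPow g' b) (hpos : ∀ᶠ t in Filter.atTop, 0 ≤ g t) : EvPow g (b + 1) := by
  obtain ⟨c, hc, h⟩ := h
  obtain ⟨T, hT⟩ := Filter.eventually_atTop.1 (h.and hpos)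
  refine ⟨c * min 1 (2 ^ (-b)) / 2, by positivity, ?_⟩
  filter_upwards [Filter.eventually_ge_atTop (2 * max T 1)] with t ht
  have h1 : max T 1 ≤ t / 2 := by linarith
  have hT2 : T ≤ t / 2 := le_trans (le_max_left _ _) h1
  have h12 : 1 ≤ t / 2 := le_trans (le_max_right _ _) h1
  have ht0 : 0 < t := by linarith
  have htb : 0 ≤ t ^ b := by positivity
  have hcont : ContinuousOn g (Set.Icc (t / 2) t) := fun x hx =>
    (hg x (by linarith [hx.1])).continuousAt.continuousWithinAt
  obtain ⟨ξ, hξ, hξe⟩ := exists_hasDerivAt_eq_slope g g' (by linarith : t / 2 < t) hcont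
    (fun x hx => hg x (by linarith [hx.1]))
  have hξ1 := (hT ξ (by linarith [hξ.1])).1
  have hg0 := (hT (t / 2) hT2).2
  have key : min 1 ((2 : ℝ) ^ (-b)) * t ^ b ≤ ξ ^ b := by
    rcases le_total 0 b with hb | hb
    · calc min 1 ((2 : ℝ) ^ (-b)) * t ^ b ≤ 2 ^ (-b) * t ^ b := by
            exact mul_le_mul_of_nonneg_right (min_le_right _ _) htb
        _ = (t / 2) ^ b := by
            rw [Real.div_rpow (by linarith) (by norm_num), Real.rpow_neg (by norm_num)]
            field_simp
        _ ≤ ξ ^ b := Real.rpow_le_rpow (by linarith) hξ.1.le hb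
    · calc min 1 ((2 : ℝ) ^ (-b)) * t ^ b ≤ 1 * t ^ b := by
            exact mul_le_mul_of_nonneg_right (min_le_left _ _) htb
        _ ≤ ξ ^ b := by
            rw [one_mul]
            exact Real.rpow_le_rpow_of_nonpos (by linarith [hξ.1]) hξ.2.le hb
  have e : g t = g (t / 2) + g' ξ * (t / 2) := by
    rw [hξe, show t - t / 2 = t / 2 by ring, div_mul_cancel₀ _ (by linarith)]
    ring
  rw [e, Real.rpow_add_one (by linarith)]
  have : c * (min 1 ((2 : ℝ) ^ (-b)) * t ^ b) ≤ g' ξ := le_trans (by gcongr) hξ1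
  have : c * (min 1 ((2 : ℝ) ^ (-b)) * t ^ b) * (t / 2) ≤ g' ξ * (t / 2) := by gcongr
  nlinarith

/-- Feeding `V ≳ t^a` into the differential inequality `W ≳ t^{-α} |V|^p`. -/
lemma EvPow.step {V W : ℝ → ℝ} {a α p : ℝ} (hp : 1 < p) (hV : EvPow V a)
    (hW : ∃ c : ℝ, 0 < c ∧ ∀ᶠ t in Filter.atTop, c * t ^ (-α) * |V t| ^ p ≤ W t) :
    EvPow W (-α + a * p) := by
  obtain ⟨c, hc, h⟩ := hV
  obtain ⟨d, hd, h'⟩ := hW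
  refine ⟨d * c ^ p, by positivity, ?_⟩
  filter_upwards [h, h', Filter.eventually_ge_atTop 1] with t ht ht' h1
  refine le_trans ?_ ht'
  have h0 : 0 < t := by linarith
  have : (c * t ^ a) ^ p ≤ |V t| ^ p :=
    Real.rpow_le_rpow (by positivity) (ht.trans (le_abs_self _)) (by linarith)
  rw [Real.mul_rpow hc.le (by positivity), ← Real.rpow_mul h0.le] at this
  rw [Real.rpow_add h0]
  calc d * c ^ p * (t ^ (-α) * t ^ (a * p)) = d * t ^ (-α) * (c ^ p * t ^ (a * p)) := by ring
    _ ≤ _ := by gcongr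

/-- Kato-type blow-up: a function tending to infinity with `Z' ≥ d > 0` cannot satisfy
`Z'' ≥ c Z^s` with `s > 1` for all large times. Multiplying by `Z'` gives `Z' ≳ Z^{(s+1)/2}`, so
`Z^{-(s-1)/2}` decreases at least linearly and would become negative. -/
lemma kato {Z Z1 Z2 : ℝ → ℝ} {c d s : ℝ} (hc : 0 < c) (hd : 0 < d) (hs : 1 < s)
    (hZ : ∀ t > 0, HasDerivAt Z (Z1 t) t) (hZ1 : ∀ t > 0, HasDerivAt Z1 (Z2 t) t)
    (hpos : ∀ t > 0, d ≤ Z1 t) (h : ∀ᶠ t in Filter.atTop, c * Z t ^ s ≤ Z2 t)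
    (hlim : Filter.Tendsto Z Filter.atTop Filter.atTop) : False := by
  obtain ⟨T, hT⟩ := Filter.eventually_atTop.1
    (h.and ((hlim.eventually_ge_atTop 1).and (Filter.eventually_gt_atTop 0)))
  set k := 2 * c / (s + 1) with hk
  have hk0 : 0 < k := by positivity
  have hE : ∀ t, T ≤ t → Z1 T ^ 2 - k * Z T ^ (s + 1) ≤ Z1 t ^ 2 - k * Z t ^ (s + 1) := by
    have hder : ∀ t, T ≤ t → HasDerivAt (fun t => Z1 t ^ 2 - k * Z t ^ (s + 1))
        (2 * Z1 t * (Z2 t - c * Z t ^ s)) t := by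
      intro t ht
      obtain ⟨-, h1, h0⟩ := hT t ht
      have a1 := (hZ1 t h0).pow 2
      have a2 := ((hZ t h0).rpow_const (p := s + 1) (Or.inl (by linarith))).const_mul k
      refine (a1.sub a2).congr_deriv ?_
      rw [hk]
      simp only [add_sub_cancel_right]
      field_simp
      ring
    have hmono : MonotoneOn (fun t => Z1 t ^ 2 - k * Z t ^ (s + 1)) (Set.Ici T) := by
      refine monotoneOn_of_deriv_nonneg (convex_Ici T)
        (fun t ht => (hder t ht).continuousAt.continuousWithinAt)
        (fun t ht => (hder t (interior_subset ht)).differentiableAt.differentiableWithinAt) ?_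
      intro t ht
      have ht' : T ≤ t := interior_subset ht
      rw [(hder t ht').deriv]
      obtain ⟨h2, h1, h0⟩ := hT t ht'
      have := hpos t h0
      have : 0 ≤ Z2 t - c * Z t ^ s := by linarith
      have : 0 ≤ Z1 t := by linarith
      positivity
    intro t ht
    exact hmono (Set.self_mem_Ici) ht ht
  have hlim2 : Filter.Tendsto (fun t => k / 2 * Z t ^ (s + 1)) Filter.atTop Filter.atTop :=
    ((tendsto_rpow_atTop (by linarith : 0 < s + 1)).comp hlim).const_mul_atTop (by positivity)
  obtain ⟨T', hT'⟩ := Filter.eventually_atTop.1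
    ((hlim2.eventually_ge_atTop (-(Z1 T ^ 2 - k * Z T ^ (s + 1)))).and
      (Filter.eventually_ge_atTop T))
  -- from this time on, half of `k Z^{s+1}` controls the constant of integration, so
  -- `Z1 ^ 2 ≥ (k / 2) Z^{s+1}`
  set κ := (s - 1) / 2 * Real.sqrt (k / 2) with hκ
  have hκ0 : 0 < κ := by
    have : 0 < s - 1 := by linarith
    positivity
  have hG : ∀ t, T' ≤ t → HasDerivAt (fun t => Z t ^ (-((s - 1) / 2)) + κ * t)
      (Z1 t * (-((s - 1) / 2)) * Z t ^ (-((s - 1) / 2) - 1) + κ * 1) t := by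
    intro t ht
    obtain ⟨-, h1, h0⟩ := hT t (hT' t ht).2
    exact ((hZ t h0).rpow_const (Or.inl (by linarith))).add ((hasDerivAt_id t).const_mul κ)
  have hanti : AntitoneOn (fun t => Z t ^ (-((s - 1) / 2)) + κ * t) (Set.Ici T') := by
    refine antitoneOn_of_deriv_nonpos (convex_Ici T')
      (fun t ht => (hG t ht).continuousAt.continuousWithinAt)
      (fun t ht => (hG t (interior_subset ht)).differentiableAt.differentiableWithinAt) ?_
    intro t ht
    have ht' : T' ≤ t := interior_subset ht
    rw [(hG t ht').deriv]
    obtain ⟨h3, h4⟩ := hT' t ht'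
    obtain ⟨h2, h1, h0⟩ := hT t h4
    have hp := hpos t h0
    have hE' := hE t h4
    have hz : 0 < Z t := by linarith
    have hsq : k / 2 * Z t ^ (s + 1) ≤ Z1 t ^ 2 := by linarith
    have hsq' : Real.sqrt (k / 2) * Z t ^ ((s + 1) / 2) ≤ Z1 t := by
      have h5 := Real.sqrt_le_sqrt hsq
      rw [Real.sqrt_sq (by linarith), Real.sqrt_mul (by positivity),
        Real.sqrt_eq_rpow (Z t ^ (s + 1)), ← Real.rpow_mul hz.le] at h5
      convert h5 using 3
      ring
    have e1 : Z t ^ ((s + 1) / 2) * Z t ^ (-((s - 1) / 2) - 1) = 1 := by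
      rw [← Real.rpow_add hz]
      convert Real.rpow_zero (Z t) using 2
      ring
    have h6 : Real.sqrt (k / 2) ≤ Z1 t * Z t ^ (-((s - 1) / 2) - 1) := by
      calc Real.sqrt (k / 2) = Real.sqrt (k / 2) * Z t ^ ((s + 1) / 2) *
            Z t ^ (-((s - 1) / 2) - 1) := by rw [mul_assoc, e1, mul_one]
        _ ≤ _ := by gcongr
    have h7 : 0 < (s - 1) / 2 := by linarith
    rw [hκ]
    nlinarith
  have hzT : 0 < Z T' := by linarith [(hT T' (hT' T' le_rfl).2).2.1]
  have hpw : 0 < Z T' ^ (-((s - 1) / 2)) := by positivity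
  set t := T' + Z T' ^ (-((s - 1) / 2)) / κ with ht
  have htT : T' ≤ t := by
    have : 0 < Z T' ^ (-((s - 1) / 2)) / κ := by positivity
    linarith
  have h8 := hanti Set.self_mem_Ici htT htT
  simp only at h8
  have hzt : 0 < Z t := by linarith [(hT t (hT' t htT).2).2.1]
  have hpw' : 0 < Z t ^ (-((s - 1) / 2)) := by positivity
  have : κ * t = κ * T' + Z T' ^ (-((s - 1) / 2)) := by
    rw [ht]; field_simp
  linarith

/-- When `V` grows faster than every power of `t`, a power weight `t^{-α}` costs only an
arbitrarily small part of the exponent `p`. -/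
lemma absorb {V W : ℝ → ℝ} {α p s : ℝ} (hs : s < p)
    (hV : ∀ a, EvPow V a)
    (hW : ∃ c : ℝ, 0 < c ∧ ∀ᶠ t in Filter.atTop, c * t ^ (-α) * |V t| ^ p ≤ W t) :
    ∃ c : ℝ, 0 < c ∧ ∀ᶠ t in Filter.atTop, c * V t ^ s ≤ W t := by
  obtain ⟨c, hc, h⟩ := hW
  obtain ⟨d, hd, h'⟩ := hV (α / (p - s))
  refine ⟨c * d ^ (p - s), by positivity, ?_⟩
  filter_upwards [h, h', Filter.eventually_ge_atTop 1] with t ht ht' h1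
  have h0 : 0 < t := by linarith
  have hV0 : 0 < V t := lt_of_lt_of_le (by positivity) ht'
  refine le_trans ?_ ht
  rw [abs_of_pos hV0]
  have hps : 0 < p - s := by linarith
  have h2 : (d * t ^ (α / (p - s))) ^ (p - s) ≤ V t ^ (p - s) :=
    Real.rpow_le_rpow (by positivity) ht' hps.le
  rw [Real.mul_rpow hd.le (by positivity), ← Real.rpow_mul h0.le,
    div_mul_cancel₀ _ hps.ne'] at h2
  have e : V t ^ p = V t ^ s * V t ^ (p - s) := by
    rw [← Real.rpow_add hV0]; congr 1; ring
  have e2 : t ^ (-α) * t ^ α = 1 := by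
    rw [← Real.rpow_add h0]; simp
  calc c * d ^ (p - s) * V t ^ s = c * t ^ (-α) * (V t ^ s * (d ^ (p - s) * t ^ α)) := by
        linear_combination (-(c * d ^ (p - s) * V t ^ s)) * e2
    _ ≤ c * t ^ (-α) * V t ^ p := by
        rw [e]; gcongr

lemma tendsto_of_deriv_ge {U U1 : ℝ → ℝ} {d : ℝ} (hd : 0 < d)
    (hU : ∀ t > 0, HasDerivAt U (U1 t) t) (hpos : ∀ t > 0, d ≤ U1 t) :
    Filter.Tendsto U Filter.atTop Filter.atTop := by
  have hmono : MonotoneOn (fun t => U t - d * t) (Set.Ici 1) := by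
    have hder : ∀ t : ℝ, 1 ≤ t → HasDerivAt (fun t => U t - d * t) (U1 t - d * 1) t :=
      fun t ht => (hU t (by linarith)).sub ((hasDerivAt_id t).const_mul d)
    refine monotoneOn_of_deriv_nonneg (convex_Ici 1)
        (fun t ht => (hder t ht).continuousAt.continuousWithinAt)
        (fun t ht => (hder t (interior_subset ht)).differentiableAt.differentiableWithinAt) ?_
    intro t ht
    have ht' : 1 ≤ t := interior_subset ht
    rw [(hder t ht').deriv]
    linarith [hpos t (by linarith)]
  have hl : Filter.Tendsto (fun t : ℝ => d * t + (U 1 - d * 1)) Filter.atTop Filter.atTop :=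
    Filter.tendsto_atTop_add_const_right _ _ (Filter.tendsto_id.const_mul_atTop hd)
  refine Filter.tendsto_atTop_mono' _ ?_ hl
  filter_upwards [Filter.eventually_ge_atTop 1] with t ht
  have := hmono Set.self_mem_Ici ht ht
  simp only at this
  linarith

/-- Nonexistence for the system of ordinary differential inequalities satisfied by the spatial
means: `U'' ≳ t^{-N(p-1)} |V|^p`, `V'' ≳ t^{-N(q-1)} |U|^q` and `V'' ≳ t^{(N-3)/2}`. A bound
`V ≳ t^a` improves to `V ≳ t^{N + 2 + 2q + pq(a - N)}`; at `a = (N+1)/2` the gain is exactly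
`δ = (4q - (N-1)pq + N + 3)/2 > 0`, and it only grows with `a`. Hence `U` and `V` outgrow every
power, and `U + V` falls under `kato`. -/
lemma ode_blow_up {N p q : ℝ} (hp : 1 < p) (hq : 1 < q)
    (hpq : 0 < 4 * q - (N - 1) * p * q + N + 3)
    {U U1 U2 V V1 V2 : ℝ → ℝ} {d : ℝ} (hd : 0 < d)
    (hU : ∀ t > 0, HasDerivAt U (U1 t) t) (hU1 : ∀ t > 0, HasDerivAt U1 (U2 t) t)
    (hV : ∀ t > 0, HasDerivAt V (V1 t) t) (hV1 : ∀ t > 0, HasDerivAt V1 (V2 t) t)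
    (hUpos : ∀ t > 0, d ≤ U1 t) (hVpos : ∀ t > 0, d ≤ V1 t)
    (hU2 : ∃ c : ℝ, 0 < c ∧ ∀ᶠ t in Filter.atTop, c * t ^ (-(N * (p - 1))) * |V t| ^ p ≤ U2 t)
    (hV2 : ∃ c : ℝ, 0 < c ∧ ∀ᶠ t in Filter.atTop, c * t ^ (-(N * (q - 1))) * |U t| ^ q ≤ V2 t)
    (hV3 : EvPow V2 ((N - 3) / 2)) : False := by
  have tU := tendsto_of_deriv_ge hd hU hUpos
  have tV := tendsto_of_deriv_ge hd hV hVpos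
  have pU := tU.eventually_ge_atTop 0
  have pV := tV.eventually_ge_atTop 0
  have pU1 : ∀ᶠ t in Filter.atTop, 0 ≤ U1 t := by
    filter_upwards [Filter.eventually_gt_atTop 0] with t ht using hd.le.trans (hUpos t ht)
  have pV1 : ∀ᶠ t in Filter.atTop, 0 ≤ V1 t := by
    filter_upwards [Filter.eventually_gt_atTop 0] with t ht using hd.le.trans (hVpos t ht)
  have hVU : ∀ a, EvPow V a → EvPow U (-(N * (p - 1)) + a * p + 1 + 1) := fun a ha =>
    EvPow.integrate hU (EvPow.integrate hU1 (ha.step hp hU2) pU1) pU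
  have hUV : ∀ a, EvPow U a → EvPow V (-(N * (q - 1)) + a * q + 1 + 1) := fun a ha =>
    EvPow.integrate hV (EvPow.integrate hV1 (ha.step hq hV2) pV1) pV
  have h0 : EvPow V ((N - 3) / 2 + 1 + 1) :=
    EvPow.integrate hV (EvPow.integrate hV1 hV3 pV1) pV
  set δ := (4 * q - (N - 1) * p * q + N + 3) / 2 with hδ
  have hδ0 : 0 < δ := by positivity
  have hiter : ∀ k : ℕ, EvPow V ((N + 1) / 2 + k * δ) := by
    intro k
    induction k with
    | zero => exact h0.mono (by push_cast; linarith)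
    | succ k ih =>
      refine (hUV _ (hVU _ ih)).mono ?_
      have h1 : 1 ≤ p * q := by nlinarith
      have h2 : 0 ≤ (k : ℝ) * δ := by positivity
      have h3 : k * δ ≤ p * q * (k * δ) := by nlinarith
      push_cast
      rw [hδ] at *
      nlinarith
  have allV : ∀ a, EvPow V a := by
    intro a
    obtain ⟨k, hk⟩ := exists_nat_gt ((a - (N + 1) / 2) / δ)
    refine (hiter k).mono ?_
    rw [div_lt_iff₀ hδ0] at hk
    linarith
  have allU : ∀ a, EvPow U a := by
    intro a
    refine (hVU ((a + N * (p - 1) - 2) / p) (allV _)).mono ?_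
    rw [div_mul_cancel₀ _ (by linarith)]
    linarith
  -- any exponent strictly between `1` and `min p q` leaves room to absorb the weights
  obtain ⟨s, hs1, hs⟩ := exists_between (lt_min hp hq)
  obtain ⟨a, ha, ha'⟩ := absorb (hs.trans_le (min_le_left _ _)) allV hU2
  obtain ⟨b, hb, hb'⟩ := absorb (hs.trans_le (min_le_right _ _)) allU hV2
  refine kato (Z := fun t => U t + V t) (Z1 := fun t => U1 t + V1 t)
    (Z2 := fun t => U2 t + V2 t) (c := min a b * 2 ^ (-s)) (d := d) (s := s)
    (by positivity) hd hs1 (fun t ht => (hU t ht).add (hV t ht))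
    (fun t ht => (hU1 t ht).add (hV1 t ht)) (fun t ht => by linarith [hUpos t ht, hVpos t ht])
    ?_ (tU.atTop_add_atTop tV)
  filter_upwards [ha', hb', pU, pV] with t h1 h2 h3 h4
  have key : ((U t + V t) / 2) ^ s ≤ U t ^ s + V t ^ s := by
    rcases le_total (U t) (V t) with h | h
    · calc ((U t + V t) / 2) ^ s ≤ V t ^ s :=
            Real.rpow_le_rpow (by linarith) (by linarith) (by linarith)
        _ ≤ _ := by have := Real.rpow_nonneg h3 s; linarith
    · calc ((U t + V t) / 2) ^ s ≤ U t ^ s :=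
            Real.rpow_le_rpow (by linarith) (by linarith) (by linarith)
        _ ≤ _ := by have := Real.rpow_nonneg h4 s; linarith
  have e : ((U t + V t) / 2) ^ s = 2 ^ (-s) * (U t + V t) ^ s := by
    rw [Real.div_rpow (by linarith) (by norm_num), Real.rpow_neg (by norm_num)]
    field_simp
  have h5 := Real.rpow_nonneg h3 s
  have h6 := Real.rpow_nonneg h4 s
  calc min a b * 2 ^ (-s) * (U t + V t) ^ s = min a b * ((U t + V t) / 2) ^ s := by
        rw [e]; ring
    _ ≤ min a b * (U t ^ s + V t ^ s) := by gcongr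
    _ = min a b * V t ^ s + min a b * U t ^ s := by ring
    _ ≤ a * V t ^ s + b * U t ^ s := by
        gcongr
        · exact min_le_left _ _
        · exact min_le_right _ _
    _ ≤ _ := by linarith

/-! ### Green's identity for functions supported in the forward cone -/

/-- `f` vanishes outside the forward cone `|x| ≤ t + 1`, for `t ≥ 0`. -/
def ConeSupp {n : ℕ} (f : STn n → ℝ) : Prop :=
  ∀ z : STn n, 0 ≤ z.1 → z.1 + 1 < ‖z.2‖ → f z = 0

lemma contDiff_dirD {n : ℕ} {f : STn n → ℝ} (hf : ContDiff ℝ 2 f) (w : STn n) :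
    ContDiff ℝ 1 (dirD w f) :=
  (hf.fderiv_right (m := 1) (by norm_num)).clm_apply contDiff_const

lemma continuous_dirD {n : ℕ} {f : STn n → ℝ} (hf : ContDiff ℝ 1 f) (w : STn n) :
    Continuous (dirD w f) :=
  (hf.continuous_fderiv (by norm_num)).clm_apply continuous_const

lemma dirD_mul {n : ℕ} {f g : STn n → ℝ} (hf : ContDiff ℝ 1 f) (hg : ContDiff ℝ 1 g)
    (w z : STn n) : dirD w (fun y => f y * g y) z = dirD w f z * g z + f z * dirD w g z := by
  have h1 := (hf.differentiable (by norm_num) z).hasFDerivAt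
  have h2 := (hg.differentiable (by norm_num) z).hasFDerivAt
  have h3 : fderiv ℝ (fun y => f y * g y) z = _ := (h1.mul h2).fderiv
  unfold dirD
  rw [h3]
  simp
  ring

/-- The first-order Wronskian `(∂_w u) ψ - u ∂_w ψ`, whose `w`-derivative is
`(∂_w² u) ψ - u ∂_w² ψ`. -/
noncomputable def wronsk {n : ℕ} (w : STn n) (u ψ : STn n → ℝ) : STn n → ℝ :=
  fun z => dirD w u z * ψ z - u z * dirD w ψ z

lemma contDiff_wronsk {n : ℕ} {u ψ : STn n → ℝ} (hu : ContDiff ℝ 2 u) (hψ : ContDiff ℝ 2 ψ)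
    (w : STn n) : ContDiff ℝ 1 (wronsk w u ψ) :=
  ((contDiff_dirD hu w).mul (hψ.of_le (by norm_num))).sub
    ((hu.of_le (by norm_num)).mul (contDiff_dirD hψ w))

lemma dirD_wronsk {n : ℕ} {u ψ : STn n → ℝ} (hu : ContDiff ℝ 2 u) (hψ : ContDiff ℝ 2 ψ)
    (w z : STn n) :
    dirD w (wronsk w u ψ) z = dirD w (dirD w u) z * ψ z - u z * dirD w (dirD w ψ) z := by
  have hu1 : ContDiff ℝ 1 u := hu.of_le (by norm_num)
  have hψ1 : ContDiff ℝ 1 ψ := hψ.of_le (by norm_num)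
  have hdu := contDiff_dirD hu w
  have hdψ := contDiff_dirD hψ w
  have e : dirD w (wronsk w u ψ) z = dirD w (fun y => dirD w u y * ψ y) z
      - dirD w (fun y => u y * dirD w ψ y) z := by
    have h1 := ((hdu.mul hψ1).differentiable (by norm_num) z).hasFDerivAt
    have h2 := ((hu1.mul hdψ).differentiable (by norm_num) z).hasFDerivAt
    have h3 := (h1.sub h2).fderiv
    have : wronsk w u ψ = (fun y => dirD w u y * ψ y) - (fun y => u y * dirD w ψ y) := rfl
    rw [this]
    change fderiv ℝ _ z w = _
    rw [h3]
    rfl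
  rw [e, dirD_mul hdu hψ1, dirD_mul hu1 hdψ]
  ring

lemma continuous_slice {n : ℕ} {f : STn n → ℝ} (hf : Continuous f) (t : ℝ) :
    Continuous (fun x : Spc n => f (t, x)) :=
  hf.comp (continuous_const.prodMk continuous_id)

lemma ConeSupp.integral_eq {n : ℕ} {f : STn n → ℝ} (hs : ConeSupp f) {t R : ℝ} (ht : 0 ≤ t)
    (hR : t + 1 ≤ R) : ∫ x in Metric.closedBall (0 : Spc n) R, f (t, x) = ∫ x, f (t, x) := by
  refine setIntegral_eq_integral_of_forall_compl_eq_zero fun x hx => ?_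
  refine hs (t, x) ht ?_
  simp only [Metric.mem_closedBall, dist_zero_right, not_le] at hx
  exact lt_of_le_of_lt hR hx

lemma hasCompactSupport_of_ball {n : ℕ} {f : Spc n → ℝ} {R : ℝ} (h : ∀ x, R < ‖x‖ → f x = 0) :
    HasCompactSupport f := by
  refine HasCompactSupport.of_support_subset_isCompact (isCompact_closedBall (0 : Spc n) R) ?_
  intro x hx
  by_contra hc
  simp only [Metric.mem_closedBall, dist_zero_right, not_le] at hc
  exact hx (h x hc)

lemma ConeSupp.compact {n : ℕ} {f : STn n → ℝ} (hs : ConeSupp f) {t : ℝ} (ht : 0 ≤ t) :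
    HasCompactSupport (fun x : Spc n => f (t, x)) :=
  hasCompactSupport_of_ball (R := t + 1) fun x hx => hs (t, x) ht hx

lemma ConeSupp.fderiv_eq_zero {n : ℕ} {f : STn n → ℝ} (hs : ConeSupp f) {z : STn n}
    (h0 : 0 < z.1) (h : z.1 + 1 < ‖z.2‖) : fderiv ℝ f z = 0 := by
  have hopen : IsOpen {y : STn n | 0 < y.1 ∧ y.1 + 1 < ‖y.2‖} :=
    (isOpen_lt continuous_const continuous_fst).inter
      (isOpen_lt (continuous_fst.add continuous_const) continuous_snd.norm)
  have : f =ᶠ[nhds z] fun _ => 0 := by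
    filter_upwards [hopen.mem_nhds ⟨h0, h⟩] with y hy using hs y hy.1.le hy.2
  rw [this.fderiv_eq]
  simp

lemma hasDerivAt_integral_ball {n : ℕ} {F : STn n → ℝ} (hF : ContDiff ℝ 1 F) (R t : ℝ) :
    HasDerivAt (fun s => ∫ x in Metric.closedBall (0 : Spc n) R, F (s, x))
      (∫ x in Metric.closedBall (0 : Spc n) R, dtD F (t, x)) t := by
  have hc : Continuous (dtD F) := continuous_dirD hF _
  obtain ⟨M, hM⟩ := ((isCompact_Icc (a := t - 1) (b := t + 1)).prod
    (isCompact_closedBall (0 : Spc n) R)).exists_bound_of_continuousOn hc.continuousOn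
  have hfin : IsFiniteMeasure (volume.restrict (Metric.closedBall (0 : Spc n) R)) :=
    isFiniteMeasure_restrict.2 (isCompact_closedBall _ _).measure_lt_top.ne
  refine (hasDerivAt_integral_of_dominated_loc_of_deriv_le (s := Set.Icc (t - 1) (t + 1))
    (F := fun s x => F (s, x)) (F' := fun s x => dtD F (s, x)) (bound := fun _ => M)
    (Icc_mem_nhds (by linarith) (by linarith)) ?_ ?_ ?_ ?_ (integrable_const _) ?_).2
  · exact Filter.Eventually.of_forall fun s =>
      (continuous_slice hF.continuous s).aestronglyMeasurable
  · exact (continuous_slice hF.continuous t).continuousOn.integrableOn_compact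
      (isCompact_closedBall _ _)
  · exact (continuous_slice hc t).aestronglyMeasurable
  · filter_upwards [ae_restrict_mem (measurableSet_closedBall)] with x hx s hs
    exact hM (s, x) ⟨hs, hx⟩
  · refine Filter.Eventually.of_forall fun x s _ => ?_
    have h1 := (hF.differentiable (by norm_num) (s, x)).hasFDerivAt
    exact h1.comp_hasDerivAt s ((hasDerivAt_id s).prodMk (hasDerivAt_const s x))

lemma ConeSupp.hasDerivAt_integral {n : ℕ} {F : STn n → ℝ} (hs : ConeSupp F)
    (hF : ContDiff ℝ 1 F) {t : ℝ} (ht : 0 < t) :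
    HasDerivAt (fun s => ∫ x, F (s, x)) (∫ x, dtD F (t, x)) t := by
  have h := hasDerivAt_integral_ball hF (t + 2) t
  have e : ∫ x in Metric.closedBall (0 : Spc n) (t + 2), dtD F (t, x) = ∫ x, dtD F (t, x) := by
    refine setIntegral_eq_integral_of_forall_compl_eq_zero fun x hx => ?_
    simp only [Metric.mem_closedBall, dist_zero_right, not_le] at hx
    change fderiv ℝ F (t, x) _ = 0
    rw [hs.fderiv_eq_zero ht (by simp only; linarith)]
    rfl
  rw [e] at h
  refine h.congr_of_eventuallyEq ?_
  filter_upwards [Ioo_mem_nhds ht (by linarith : t < t + 1)] with s hs'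
  exact (hs.integral_eq hs'.1.le (by linarith [hs'.2])).symm

lemma ConeSupp.continuousOn_integral {n : ℕ} {F : STn n → ℝ} (hs : ConeSupp F)
    (hF : ContDiff ℝ 1 F) : ContinuousOn (fun s => ∫ x, F (s, x)) (Set.Ici 0) := by
  intro t ht
  have h := (hasDerivAt_integral_ball hF (t + 2) t).continuousAt.continuousWithinAt
    (s := Set.Ici 0)
  refine h.congr_of_eventuallyEq ?_ (hs.integral_eq ht (by linarith)).symm
  filter_upwards [self_mem_nhdsWithin,
    mem_nhdsWithin_of_mem_nhds (Iio_mem_nhds (by linarith : t < t + 1))] with s h0 h1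
  exact (hs.integral_eq h0 (by linarith [Set.mem_Iio.1 h1])).symm

lemma integral_fderiv_apply_eq_zero {n : ℕ} {f : Spc n → ℝ} (hf : ContDiff ℝ 1 f)
    (hc : HasCompactSupport f) (w : Spc n) : ∫ x, fderiv ℝ f x w = 0 := by
  have hcd : Continuous (fun x => fderiv ℝ f x w) :=
    (hf.continuous_fderiv (by norm_num)).clm_apply continuous_const
  have h := integral_mul_fderiv_eq_neg_fderiv_mul_of_integrable (μ := (volume : Measure (Spc n)))
    (f := fun _ => (1 : ℝ)) (g := f) (v := w) (by simp)
    (by simpa using hcd.integrable_of_hasCompactSupport (hc.fderiv_apply ℝ w))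
    (by simpa using hf.continuous.integrable_of_hasCompactSupport hc)
    (fun x _ => differentiableAt_const _) (fun x _ => hf.differentiable (by norm_num) x)
  simpa using h

lemma dxD_eq_slice {n : ℕ} {f : STn n → ℝ} (hf : ContDiff ℝ 1 f) (j : Fin n) (t : ℝ)
    (x : Spc n) :
    dxD j f (t, x) = fderiv ℝ (fun y => f (t, y)) x (EuclideanSpace.single j 1) := by
  have h1 := (hf.differentiable (by norm_num) (t, x)).hasFDerivAt
  have h2 : HasFDerivAt (fun y : Spc n => (t, y)) (ContinuousLinearMap.inr ℝ ℝ (Spc n)) x :=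
    hasFDerivAt_prodMk_right t x
  have h3 : fderiv ℝ (fun y : Spc n => f (t, y)) x = _ := (h1.comp x h2).fderiv
  rw [h3]
  rfl

lemma ConeSupp.dxD {n : ℕ} {f : STn n → ℝ} (hs : ConeSupp f) (hf : ContDiff ℝ 1 f)
    (j : Fin n) : ConeSupp (dxD j f) := by
  rintro ⟨t, x⟩ ht hx
  rw [dxD_eq_slice hf]
  have : (fun y : Spc n => f (t, y)) =ᶠ[nhds x] fun _ => 0 := by
    filter_upwards [(isOpen_lt (continuous_const (y := t + 1)) continuous_norm).mem_nhds hx]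
      with y hy using hs (t, y) ht hy
  rw [this.fderiv_eq]
  simp

lemma ConeSupp.wronsk {n : ℕ} {u : STn n → ℝ} {w : STn n} (hs : ConeSupp u)
    (hs' : ConeSupp (dirD w u)) (ψ : STn n → ℝ) : ConeSupp (wronsk w u ψ) := by
  intro z h0 h
  simp [_root_.wronsk, hs z h0 h, hs' z h0 h]

/-- Green's second identity on time slices: for `u` supported in the cone,
`d/dt ∫ (∂_t u ψ - u ∂_t ψ) dx = ∫ (□u ψ - u □ψ) dx`. -/
lemma hasDerivAt_green {n : ℕ} {u ψ : STn n → ℝ} (hu : ContDiff ℝ 2 u) (hψ : ContDiff ℝ 2 ψ)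
    (hs : ConeSupp u) (hs' : ConeSupp (dtD u)) {t : ℝ} (ht : 0 < t) :
    HasDerivAt (fun s => ∫ x, wronsk (1, 0) u ψ (s, x))
      (∫ x, (boxD u (t, x) * ψ (t, x) - u (t, x) * boxD ψ (t, x))) t := by
  have hw := contDiff_wronsk hu hψ (1, 0)
  have hu1 : ContDiff ℝ 1 u := hu.of_le (by norm_num)
  refine ((hs.wronsk hs' ψ).hasDerivAt_integral hw ht).congr_deriv ?_
  have hj : ∀ j : Fin n, Continuous (fun x => dxD j (wronsk (0, EuclideanSpace.single j 1) u ψ)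
      (t, x)) := fun j => continuous_slice (continuous_dirD (contDiff_wronsk hu hψ _) _) t
  have hjs : ∀ j : Fin n, ConeSupp (wronsk (0, EuclideanSpace.single j 1) u ψ) := fun j =>
    hs.wronsk (hs.dxD hu1 j) ψ
  have hjz : ∀ j : Fin n,
      ∫ x, dxD j (wronsk (0, EuclideanSpace.single j 1) u ψ) (t, x) = 0 := by
    intro j
    have hc1 := contDiff_wronsk hu hψ (0, EuclideanSpace.single j 1)
    simp_rw [dxD_eq_slice hc1]
    exact integral_fderiv_apply_eq_zero (hc1.comp (contDiff_const.prodMk contDiff_id))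
      ((hjs j).compact ht.le) _
  have hji : ∀ j : Fin n, Integrable (fun x : Spc n =>
      dxD j (wronsk (0, EuclideanSpace.single j 1) u ψ) (t, x)) := fun j =>
    (hj j).integrable_of_hasCompactSupport
      (((hjs j).dxD (contDiff_wronsk hu hψ _) j).compact ht.le)
  have hti : Integrable (fun x : Spc n => dtD (wronsk (1, 0) u ψ) (t, x)) := by
    refine (continuous_slice (continuous_dirD hw _) t).integrable_of_hasCompactSupport
      (hasCompactSupport_of_ball (R := t + 1) fun x hx => ?_)
    change fderiv ℝ (wronsk (1, 0) u ψ) (t, x) _ = 0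
    rw [(hs.wronsk hs' ψ).fderiv_eq_zero ht hx]
    rfl
  -- the right-hand side is a space-time divergence whose spatial part integrates to zero
  have e : ∀ x : Spc n, boxD u (t, x) * ψ (t, x) - u (t, x) * boxD ψ (t, x)
      = dtD (wronsk (1, 0) u ψ) (t, x)
        - ∑ j, dxD j (wronsk (0, EuclideanSpace.single j 1) u ψ) (t, x) := by
    intro x
    simp only [boxD, lapD, dtD, dxD, dirD_wronsk hu hψ, Finset.sum_sub_distrib, ← Finset.sum_mul,
      ← Finset.mul_sum]
    ring
  simp_rw [e]
  rw [integral_sub hti (integrable_finsetSum _ fun j _ => hji j),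
    integral_finsetSum _ fun j _ => hji j]
  simp [hjz]

/-- If `□u ≥ 0` for positive times, the flux `∫ (∂_t u ψ - u ∂_t ψ) dx` against a nonnegative
solution `ψ` of the wave equation is nondecreasing in time. -/
lemma flux_mono {n : ℕ} {u ψ : STn n → ℝ} (hu : ContDiff ℝ 2 u) (hψ : ContDiff ℝ 2 ψ)
    (hs : ConeSupp u) (hs' : ConeSupp (dtD u)) (hbox : ∀ z : STn n, 0 < z.1 → 0 ≤ boxD u z)
    (hψ0 : ∀ z, 0 ≤ ψ z) (hψb : ∀ z, boxD ψ z = 0) {t : ℝ} (ht : 0 ≤ t) :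
    ∫ x, wronsk (1, 0) u ψ (0, x) ≤ ∫ x, wronsk (1, 0) u ψ (t, x) := by
  have hmono : MonotoneOn (fun s => ∫ x, wronsk (1, 0) u ψ (s, x)) (Set.Ici 0) := by
    refine monotoneOn_of_deriv_nonneg (convex_Ici 0)
      ((hs.wronsk hs' ψ).continuousOn_integral (contDiff_wronsk hu hψ _)) ?_ ?_
    · intro s h
      rw [interior_Ici] at h
      exact (hasDerivAt_green hu hψ hs hs' h).differentiableAt.differentiableWithinAt
    · intro s h
      rw [interior_Ici] at h
      rw [(hasDerivAt_green hu hψ hs hs' h).deriv]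
      refine integral_nonneg fun x => ?_
      simp only [hψb, mul_zero, sub_zero]
      exact mul_nonneg (hbox _ h) (hψ0 _)
  exact hmono Set.self_mem_Ici ht ht

/-! ### Plane waves -/

/-- The plane wave `(t, x) ↦ h (⟨x, θ⟩ + σ t + c)`. -/
noncomputable def planeW {n : ℕ} (h : ℝ → ℝ) (θ : Spc n) (σ c : ℝ) : STn n → ℝ :=
  fun z => h (inner ℝ z.2 θ + σ * z.1 + c)

lemma contDiff_planeW {n : ℕ} {h : ℝ → ℝ} {m : WithTop ℕ∞} (hh : ContDiff ℝ m h) (θ : Spc n)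
    (σ c : ℝ) : ContDiff ℝ m (planeW h θ σ c) := by
  refine hh.comp ?_
  exact ((contDiff_snd.inner ℝ contDiff_const).add (contDiff_const.mul contDiff_fst)).add
    contDiff_const

lemma dirD_planeW {n : ℕ} {h : ℝ → ℝ} (hh : ContDiff ℝ 1 h) (θ : Spc n) (σ c : ℝ)
    (w z : STn n) : dirD w (planeW h θ σ c) z
      = (inner ℝ w.2 θ + σ * w.1) * planeW (deriv h) θ σ c z := by
  have hd := (hh.differentiable (by norm_num) (inner ℝ z.2 θ + σ * z.1 + c)).hasDerivAt
  have hl : HasFDerivAt (fun y : STn n => inner ℝ y.2 θ + σ * y.1 + c)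
      (((innerSL ℝ θ).comp (ContinuousLinearMap.snd ℝ ℝ (Spc n)))
        + σ • ContinuousLinearMap.fst ℝ ℝ (Spc n)) z := by
    have a := ((innerSL ℝ θ).comp (ContinuousLinearMap.snd ℝ ℝ (Spc n))).hasFDerivAt (x := z)
    have b := (ContinuousLinearMap.fst ℝ ℝ (Spc n)).hasFDerivAt (x := z)
    refine ((a.add (b.const_mul σ)).add_const c).congr_of_eventuallyEq ?_
    refine Filter.Eventually.of_forall fun y => ?_
    simp [real_inner_comm]
  have h3 : fderiv ℝ (planeW h θ σ c) z = _ := (hd.comp_hasFDerivAt z hl).fderiv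
  unfold dirD
  rw [h3]
  simp [planeW, real_inner_comm]
  ring

lemma dirD_dirD_planeW {n : ℕ} {h : ℝ → ℝ} (hh : ContDiff ℝ 2 h) (θ : Spc n) (σ c : ℝ)
    (w z : STn n) : dirD w (dirD w (planeW h θ σ c)) z
      = (inner ℝ w.2 θ + σ * w.1) ^ 2 * planeW (deriv (deriv h)) θ σ c z := by
  have hh' : ContDiff ℝ 1 (deriv h) := by
    have : ContDiff ℝ (1 + 1) h := hh
    exact (contDiff_succ_iff_deriv.1 this).2.2
  have e : dirD w (planeW h θ σ c)
      = fun z => (inner ℝ w.2 θ + σ * w.1) * planeW (deriv h) θ σ c z := by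
    funext y
    exact dirD_planeW (hh.of_le (by norm_num)) θ σ c w y
  rw [e]
  have := dirD_mul (contDiff_const (c := inner ℝ w.2 θ + σ * w.1))
    (contDiff_planeW hh' θ σ c) w z
  rw [this, dirD_planeW hh']
  simp [dirD]
  ring

lemma boxD_planeW {n : ℕ} {h : ℝ → ℝ} (hh : ContDiff ℝ 2 h) {θ : Spc n} {σ : ℝ} (c : ℝ)
    (hθ : ‖θ‖ ^ 2 = σ ^ 2) (z : STn n) : boxD (planeW h θ σ c) z = 0 := by
  simp only [boxD, lapD, dtD, dxD, dirD_dirD_planeW hh]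
  simp only [EuclideanSpace.inner_single_left, ← Finset.sum_mul]
  simp only [inner_zero_left, mul_one, mul_zero, zero_add, add_zero, map_one, one_mul]
  rw [← hθ, EuclideanSpace.real_norm_sq_eq]
  ring

/-- A smooth step, vanishing on `(-∞, -2]` and equal to `1` on `[-1, ∞)`. -/
noncomputable def step (s : ℝ) : ℝ := Real.smoothTransition (s + 2)

lemma contDiff_step : ContDiff ℝ 2 step :=
  Real.smoothTransition.contDiff.comp (contDiff_id.add contDiff_const)

lemma step_eq_zero {s : ℝ} (h : s ≤ -2) : step s = 0 :=
  Real.smoothTransition.zero_of_nonpos (by linarith)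

lemma step_eq_one {s : ℝ} (h : -1 ≤ s) : step s = 1 :=
  Real.smoothTransition.one_of_one_le (by linarith)

lemma deriv_step_eq_zero {s : ℝ} (h : s ≤ -2 ∨ -1 ≤ s) : deriv step s = 0 := by
  -- outside `(-2, -1)` the step attains its minimum `0` or its maximum `1`
  rcases h with h | h
  · have : IsLocalMin step s := Filter.Eventually.of_forall fun y => by
      rw [step_eq_zero h]
      exact Real.smoothTransition.nonneg _
    exact this.deriv_eq_zero
  · have : IsLocalMax step s := Filter.Eventually.of_forall fun y => by
      rw [step_eq_one h]
      exact Real.smoothTransition.le_one _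
    exact this.deriv_eq_zero

/-- A unit direction captures mass of `∂_t u` near the light cone: adding the fluxes against the
outgoing wave `step (⟨x, θ⟩ - t)` and the incoming wave `step (⟨x, θ⟩ + t - 2 T)`, which agree
at `t = T`, cancels the terms carrying `u` itself. At `t = 0` the first flux is `∫ ∂_t u(0)`
and the second one vanishes. -/
lemma direction_bound {n : ℕ} {u : STn n → ℝ} (hu : ContDiff ℝ 2 u)
    (hs : ConeSupp u) (hs' : ConeSupp (dtD u)) (hbox : ∀ z : STn n, 0 < z.1 → 0 ≤ boxD u z)
    {T : ℝ} (hT : 2 ≤ T) {θ : Spc n} (hθ : ‖θ‖ = 1) :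
    ∫ x, dtD u (0, x) ≤ 2 * ∫ x, dtD u (T, x) * step (inner ℝ x θ - T) := by
  have hst := contDiff_step
  have hst1 : ContDiff ℝ 1 step := hst.of_le (by norm_num)
  have hnn : ∀ s, 0 ≤ step s := fun s => Real.smoothTransition.nonneg _
  have hψ : ∀ σ c, ContDiff ℝ 2 (planeW step θ σ c) := fun σ c => contDiff_planeW hst θ σ c
  have hW : ∀ σ c t (x : Spc n), wronsk (1, 0) u (planeW step θ σ c) (t, x)
      = dtD u (t, x) * step (inner ℝ x θ + σ * t + c)
        - u (t, x) * (σ * deriv step (inner ℝ x θ + σ * t + c)) := by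
    intro σ c t x
    simp only [wronsk, dirD_planeW hst1]
    simp [planeW, dtD]
  have hin : ∀ x : Spc n, |inner ℝ x θ| ≤ ‖x‖ := fun x => by
    simpa [hθ] using abs_real_inner_le_norm x θ
  have h1 := flux_mono hu (hψ (-1) 0) hs hs' hbox (fun z => hnn _)
    (boxD_planeW hst 0 (by rw [hθ]; norm_num)) (by linarith : 0 ≤ T)
  have h2 := flux_mono hu (hψ 1 (-2 * T)) hs hs' hbox (fun z => hnn _)
    (boxD_planeW hst _ (by rw [hθ])) (by linarith : 0 ≤ T)
  have e1 : ∫ x, wronsk (1, 0) u (planeW step θ (-1) 0) (0, x) = ∫ x, dtD u (0, x) := by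
    refine integral_congr_ae (Filter.Eventually.of_forall fun x => ?_)
    simp only [hW]
    by_cases hx : ‖x‖ ≤ 1
    · have := (abs_le.1 (hin x)).1
      rw [step_eq_one (by linarith), deriv_step_eq_zero (Or.inr (by linarith))]
      ring
    · push Not at hx
      rw [hs (0, x) le_rfl (by simpa using hx), hs' (0, x) le_rfl (by simpa using hx)]
      ring
  have e2 : ∫ x, wronsk (1, 0) u (planeW step θ 1 (-2 * T)) (0, x) = 0 := by
    refine integral_eq_zero_of_ae (Filter.Eventually.of_forall fun x => ?_)
    simp only [hW, Pi.zero_apply]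
    by_cases hx : ‖x‖ ≤ 1
    · have := (abs_le.1 (hin x)).2
      rw [step_eq_zero (by linarith), deriv_step_eq_zero (Or.inl (by linarith))]
      ring
    · push Not at hx
      rw [hs (0, x) le_rfl (by simpa using hx), hs' (0, x) le_rfl (by simpa using hx)]
      ring
  have hint : ∀ σ c, Integrable (fun x : Spc n => wronsk (1, 0) u (planeW step θ σ c) (T, x)) :=
    fun σ c => (continuous_slice (contDiff_wronsk hu (hψ σ c) _).continuous
      T).integrable_of_hasCompactSupport ((hs.wronsk hs' _).compact (by linarith))
  rw [e1] at h1
  rw [e2] at h2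
  have h3 : ∫ x, dtD u (0, x) ≤ ∫ x, (wronsk (1, 0) u (planeW step θ (-1) 0) (T, x)
      + wronsk (1, 0) u (planeW step θ 1 (-2 * T)) (T, x)) := by
    rw [integral_add (hint _ _) (hint _ _)]
    linarith
  rw [← integral_const_mul]
  refine h3.trans_eq (integral_congr_ae (Filter.Eventually.of_forall fun x => ?_))
  simp only [hW]
  rw [show inner ℝ x θ + -1 * T + 0 = inner ℝ x θ - T by ring,
    show inner ℝ x θ + 1 * T + -2 * T = inner ℝ x θ - T by ring]
  ring

/-! ### Volumes of caps and shells -/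

/-- Measure of a spherical cap of opening `~ T^{-1/2}`, thickened radially to a subset of the
unit ball. Stretching the directions orthogonal to `x` by a factor `ρ⁻¹ ~ T^{1/2}` maps the cap
into a fixed ball, and this linear map has determinant `ρ^{-(n-1)}`. -/
lemma cap_volume {n : ℕ} (hn : 1 ≤ n) {T : ℝ} (hT : 3 ≤ T) {x : Spc n} (hx : ‖x‖ ≤ T + 1) :
    volume {θ : Spc n | θ ∈ Metric.ball 0 1 ∧ (T - 2) * ‖θ‖ < inner ℝ x θ}
      ≤ ENNReal.ofReal (Real.sqrt (6 / T) ^ (n - 1)) * volume (Metric.closedBall (0 : Spc n) 2) := by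
  rcases eq_or_ne x 0 with rfl | hx0
  · have : {θ : Spc n | θ ∈ Metric.ball 0 1 ∧ (T - 2) * ‖θ‖ < inner ℝ (0 : Spc n) θ} = ∅ := by
      ext θ
      simp only [inner_zero_left, Set.mem_ofPred_eq, Set.mem_empty_iff_false, iff_false, not_and,
        not_lt]
      intro _
      have : 0 ≤ T - 2 := by linarith
      positivity
    rw [this]
    simp
  set ρ := Real.sqrt (6 / T) with hρ
  have hρ0 : 0 < ρ := Real.sqrt_pos.2 (by positivity)
  have hρ2 : ρ ^ 2 = 6 / T := Real.sq_sqrt (by positivity)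
  have hxn : 0 < ‖x‖ := norm_pos_iff.2 hx0
  set e : Spc n := ‖x‖⁻¹ • x with he
  have hen : ‖e‖ = 1 := by
    rw [he, norm_smul, norm_inv, norm_norm, inv_mul_cancel₀ hxn.ne']
  have hee : inner ℝ e e = 1 := by rw [real_inner_self_eq_norm_sq, hen]; norm_num
  -- `M` fixes `e` and multiplies the orthogonal complement of `e` by `ρ⁻¹`
  set M : Spc n →ₗ[ℝ] Spc n :=
    ρ⁻¹ • LinearMap.transvection (innerₛₗ ℝ e) ((ρ - 1) • e) with hM
  have hdet : LinearMap.det M = (ρ⁻¹) ^ (n - 1) := by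
    rw [hM, LinearMap.det_smul, LinearMap.transvection.det]
    simp only [finrank_euclideanSpace, Fintype.card_fin, innerₛₗ_apply_apply, inner_smul_right,
      hee]
    obtain ⟨m, rfl⟩ : ∃ m, n = m + 1 := ⟨n - 1, by omega⟩
    rw [pow_succ]
    simp
    field_simp
  have hMn : ∀ θ, ‖M θ‖ ^ 2 = ρ⁻¹ ^ 2 * (‖θ‖ ^ 2 - inner ℝ e θ ^ 2) + inner ℝ e θ ^ 2 := by
    intro θ
    have e1 : M θ = ρ⁻¹ • (θ + inner ℝ e θ • ((ρ - 1) • e)) := by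
      simp [hM, LinearMap.transvection.apply]
    rw [e1, norm_smul, mul_pow, norm_add_sq_real, smul_smul, inner_smul_right, norm_smul, hen,
      real_inner_comm θ e]
    simp only [Real.norm_eq_abs, sq_abs, mul_one]
    field_simp
    ring
  have hsub : {θ : Spc n | θ ∈ Metric.ball 0 1 ∧ (T - 2) * ‖θ‖ < inner ℝ x θ}
      ⊆ M ⁻¹' Metric.closedBall 0 2 := by
    rintro θ ⟨h1, h2⟩
    have h1' : ‖θ‖ < 1 := by simpa using h1
    have hxe : inner ℝ x θ = ‖x‖ * inner ℝ e θ := by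
      rw [he, inner_smul_left]
      simp
      field_simp
    set a := inner ℝ e θ with ha
    have ha1 : a ≤ ‖θ‖ := by simpa [hen] using real_inner_le_norm e θ
    have hθ0 := norm_nonneg θ
    have ha0 : 0 < a := by
      have : 0 ≤ (T - 2) * ‖θ‖ := mul_nonneg (by linarith) hθ0
      rw [hxe] at h2
      exact pos_of_mul_pos_right (this.trans_lt h2) hxn.le
    have h3 : (T - 2) * ‖θ‖ ≤ (T + 1) * a := by
      rw [hxe] at h2
      nlinarith
    have h4 : T * (‖θ‖ - a) ≤ 3 := by nlinarith
    have h5 : T * (‖θ‖ ^ 2 - a ^ 2) ≤ 6 := by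
      have : 0 ≤ T * (‖θ‖ - a) := mul_nonneg (by linarith) (by linarith)
      nlinarith
    have h6 : ρ⁻¹ ^ 2 * (‖θ‖ ^ 2 - a ^ 2) ≤ 1 := by
      rw [inv_pow, hρ2, inv_div, div_mul_eq_mul_div, div_le_one (by norm_num)]
      exact h5
    have h7 : ‖M θ‖ ^ 2 ≤ 2 ^ 2 := by
      rw [hMn]
      nlinarith
    simp only [Set.mem_preimage, Metric.mem_closedBall, dist_zero_right]
    exact le_of_sq_le_sq h7 (by norm_num)
  refine (measure_mono hsub).trans_eq ?_
  rw [Measure.addHaar_preimage_linearMap _ (by rw [hdet]; positivity), hdet, ← inv_pow, inv_inv,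
    abs_of_pos (by positivity)]

/-- The shell `T - 2 < |x| ≤ T + 1` around the light cone has volume `O(T^{n-1})`. -/
lemma shell_volume {n : ℕ} {T : ℝ} (hT : 3 ≤ T) :
    volume.real (Metric.closedBall (0 : Spc n) (T + 1) \ Metric.closedBall 0 (T - 2))
      ≤ 3 * n * (2 * T) ^ (n - 1) * volume.real (Metric.ball (0 : Spc n) 1) := by
  rw [measureReal_sdiff (Metric.closedBall_subset_closedBall (by linarith))
    measurableSet_closedBall (isCompact_closedBall _ _).measure_lt_top.ne,
    Measure.addHaar_real_closedBall _ _ (by linarith),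
    Measure.addHaar_real_closedBall _ _ (by linarith), ← sub_mul]
  gcongr
  simp only [finrank_euclideanSpace, Fintype.card_fin]
  refine (le_abs_self _).trans ((abs_pow_sub_pow_le _ _ _).trans ?_)
  rw [show T + 1 - (T - 2) = 3 by ring, abs_of_pos (by norm_num : (0 : ℝ) < 3)]
  gcongr
  rw [abs_of_pos (by linarith), abs_of_pos (by linarith)]
  exact max_le (by linarith) (by linarith)

/-! ### Averaging over directions -/

/-- Hölder's inequality against the indicator function of `S`. -/
lemma holder_set {n : ℕ} {f : Spc n → ℝ} (hf : Continuous f) (hc : HasCompactSupport f)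
    (h0 : ∀ x, 0 ≤ f x) {S : Set (Spc n)} (hS : volume S ≠ ⊤) {r : ℝ} (hr : 1 < r) :
    (∫ x in S, f x) ^ r ≤ volume.real S ^ (r - 1) * ∫ x, f x ^ r := by
  have hfin : IsFiniteMeasure (volume.restrict S) := isFiniteMeasure_restrict.2 hS
  have hr0 : 0 < r := by linarith
  have hconj := Real.HolderConjugate.conjExponent hr
  have h := integral_mul_le_Lp_mul_Lq_of_nonneg (μ := volume.restrict S) hconj
    (f := f) (g := fun _ => (1 : ℝ)) (Filter.Eventually.of_forall h0)
    (Filter.Eventually.of_forall fun _ => zero_le_one)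
    ((hf.memLp_of_hasCompactSupport hc).restrict S) (memLp_const 1)
  simp only [mul_one, Real.one_rpow, integral_const, smul_eq_mul] at h
  have hI : 0 ≤ ∫ x in S, f x := integral_nonneg h0
  have hJ : 0 ≤ ∫ x in S, f x ^ r := integral_nonneg fun x => Real.rpow_nonneg (h0 x) r
  have hm : (volume.restrict S).real Set.univ = volume.real S := by simp [measureReal_def]
  rw [hm] at h
  have h2 := Real.rpow_le_rpow hI h hr0.le
  rw [Real.mul_rpow (by positivity) (by positivity), ← Real.rpow_mul hJ,
    ← Real.rpow_mul measureReal_nonneg] at h2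
  have e1 : 1 / r * r = 1 := by field_simp
  have e2 : 1 / r.conjExponent * r = r - 1 := by
    rw [Real.conjExponent]
    field_simp
  rw [e1, e2, Real.rpow_one, mul_comm] at h2
  refine h2.trans (mul_le_mul_of_nonneg_left ?_ (by positivity))
  refine setIntegral_le_integral ?_ (Filter.Eventually.of_forall fun x => Real.rpow_nonneg (h0 x) r)
  refine (hf.rpow_const fun x => Or.inr hr0.le).integrable_of_hasCompactSupport ?_
  exact hc.comp_left (g := fun y : ℝ => y ^ r) (Real.zero_rpow hr0.ne')

set_option maxHeartbeats 1000000 in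
/-- Averaging `direction_bound` over all directions: the mass of `|∂_t u|` in the shell
`T - 2 < |x| ≤ T + 1` is at least of order `T^{(n-1)/2}`. Each `x` in the shell is seen by a cap
of directions of measure `O(T^{-(n-1)/2})` only. -/
lemma shell_mass {n : ℕ} (hn : 2 ≤ n) {u : STn n → ℝ} (hu : ContDiff ℝ 2 u)
    (hs : ConeSupp u) (hs' : ConeSupp (dtD u)) (hbox : ∀ z : STn n, 0 < z.1 → 0 ≤ boxD u z)
    {T : ℝ} (hT : 3 ≤ T) :
    (∫ x, dtD u (0, x)) / 2 * volume.real (Metric.ball (0 : Spc n) 1)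
      ≤ Real.sqrt (6 / T) ^ (n - 1) * volume.real (Metric.closedBall (0 : Spc n) 2)
        * ∫ x in Metric.closedBall (0 : Spc n) (T + 1) \ Metric.closedBall 0 (T - 2),
            |dtD u (T, x)| := by
  have : Nonempty (Fin n) := ⟨⟨0, by omega⟩⟩
  have : Nontrivial (Spc n) := inferInstance
  set D := ∫ x, dtD u (0, x) with hD
  set h : Spc n → ℝ := fun x => |dtD u (T, x)| with hh
  set S := Metric.closedBall (0 : Spc n) (T + 1) \ Metric.closedBall 0 (T - 2) with hSdef
  have hSm : MeasurableSet S := measurableSet_closedBall.diff measurableSet_closedBall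
  have hdc : Continuous (fun x : Spc n => dtD u (T, x)) :=
    continuous_slice (contDiff_dirD hu _).continuous T
  have hdcs : HasCompactSupport (fun x : Spc n => dtD u (T, x)) := hs'.compact (by linarith)
  have hhc : Continuous h := hdc.abs
  have hhs : HasCompactSupport h := hdcs.comp_left (g := fun y : ℝ => |y|) abs_zero
  have hhi : Integrable h := hhc.integrable_of_hasCompactSupport hhs
  -- directions are parametrized by `θ` in the unit ball, normalized to `θ / |θ|`; `A` is the
  -- set of pairs `(θ, x)` on which the step of `direction_bound` can be nonzero
  set A : Set (Spc n × Spc n) := {y | (T - 2) * ‖y.1‖ < inner ℝ y.2 y.1} with hA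
  have hAm : MeasurableSet A :=
    (isOpen_lt (continuous_const.mul continuous_fst.norm)
      (continuous_snd.inner continuous_fst)).measurableSet
  have hdir : ∀ θ : Spc n, θ ≠ 0 →
      ENNReal.ofReal (D / 2) ≤ ∫⁻ x, A.indicator (fun y => ENNReal.ofReal (h y.2)) (θ, x) := by
    intro θ hθ
    have hθn : 0 < ‖θ‖ := norm_pos_iff.2 hθ
    have hun : ‖‖θ‖⁻¹ • θ‖ = 1 := by
      rw [norm_smul, norm_inv, norm_norm, inv_mul_cancel₀ hθn.ne']
    have h1 := direction_bound hu hs hs' hbox (by linarith : 2 ≤ T) hun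
    have hstc : Continuous (fun x : Spc n => step (inner ℝ x (‖θ‖⁻¹ • θ) - T)) :=
      contDiff_step.continuous.comp ((continuous_id.inner continuous_const).sub continuous_const)
    have hi1 : Integrable (fun x => dtD u (T, x) * step (inner ℝ x (‖θ‖⁻¹ • θ) - T)) :=
      (hdc.mul hstc).integrable_of_hasCompactSupport hdcs.mul_right
    have hi2 : Integrable (fun x => h x * step (inner ℝ x (‖θ‖⁻¹ • θ) - T)) :=
      (hhc.mul hstc).integrable_of_hasCompactSupport hhs.mul_right
    have hnn : ∀ s, 0 ≤ step s := fun s => Real.smoothTransition.nonneg _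
    have h2 : D / 2 ≤ ∫ x, h x * step (inner ℝ x (‖θ‖⁻¹ • θ) - T) := by
      have := integral_mono hi1 hi2 fun x => mul_le_mul_of_nonneg_right (le_abs_self _) (hnn _)
      linarith
    refine (ENNReal.ofReal_le_ofReal h2).trans ?_
    rw [ofReal_integral_eq_lintegral_ofReal hi2
      (Filter.Eventually.of_forall fun x => mul_nonneg (abs_nonneg _) (hnn _))]
    refine lintegral_mono fun x => ?_
    by_cases hx : (θ, x) ∈ A
    · rw [Set.indicator_of_mem hx]
      refine ENNReal.ofReal_le_ofReal ?_
      exact mul_le_of_le_one_right (abs_nonneg _) (Real.smoothTransition.le_one _)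
    · have hx' : inner ℝ x θ ≤ (T - 2) * ‖θ‖ := not_lt.1 hx
      have : inner ℝ x (‖θ‖⁻¹ • θ) ≤ T - 2 := by
        rw [inner_smul_right, inv_mul_le_iff₀ hθn]
        linarith
      rw [step_eq_zero (by linarith)]
      simp
  have hL : ENNReal.ofReal (D / 2) * volume (Metric.ball (0 : Spc n) 1)
      ≤ ∫⁻ θ in Metric.ball (0 : Spc n) 1,
        ∫⁻ x, A.indicator (fun y => ENNReal.ofReal (h y.2)) (θ, x) := by
    rw [← setLIntegral_const]
    refine lintegral_mono_ae (ae_restrict_of_ae ?_)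
    filter_upwards [compl_mem_ae_iff.2 (measure_singleton (0 : Spc n))] with θ hθ
    exact hdir θ hθ
  have hmeas : Measurable (fun y : Spc n × Spc n =>
      A.indicator (fun y => ENNReal.ofReal (h y.2)) y) :=
    ((ENNReal.measurable_ofReal.comp hhc.measurable).comp measurable_snd).indicator hAm
  rw [lintegral_lintegral_swap (f := fun θ x => A.indicator (fun y => ENNReal.ofReal (h y.2))
    (θ, x)) hmeas.aemeasurable] at hL
  set K := ENNReal.ofReal (Real.sqrt (6 / T) ^ (n - 1))
    * volume (Metric.closedBall (0 : Spc n) 2) with hK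
  have hpt : ∀ x : Spc n, ∫⁻ θ in Metric.ball (0 : Spc n) 1,
      A.indicator (fun y => ENNReal.ofReal (h y.2)) (θ, x)
        ≤ S.indicator (fun x => ENNReal.ofReal (h x) * K) x := by
    intro x
    set C := {θ : Spc n | (T - 2) * ‖θ‖ < inner ℝ x θ} with hC
    have hCm : MeasurableSet C := (isOpen_lt (continuous_const.mul continuous_norm)
      (continuous_const.inner continuous_id)).measurableSet
    have e : ∀ θ, A.indicator (fun y => ENNReal.ofReal (h y.2)) (θ, x)
        = C.indicator (fun _ => ENNReal.ofReal (h x)) θ := fun θ => rfl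
    simp_rw [e]
    rw [lintegral_indicator_const hCm, Measure.restrict_apply hCm]
    by_cases h1 : T + 1 < ‖x‖
    · have : h x = 0 := by
        rw [hh]
        simp only
        rw [hs' (T, x) (by simp only; linarith) h1, abs_zero]
      simp [this]
    · push Not at h1
      by_cases h2 : ‖x‖ ≤ T - 2
      · have : C = ∅ := by
          ext θ
          simp only [hC, Set.mem_ofPred_eq, Set.mem_empty_iff_false, iff_false, not_lt]
          exact (real_inner_le_norm x θ).trans (by gcongr)
        simp [this]
      · have hxS : x ∈ S := by
          simp only [hSdef, Set.mem_sdiff, Metric.mem_closedBall, dist_zero_right]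
          exact ⟨h1, h2⟩
        rw [Set.indicator_of_mem hxS]
        gcongr
        refine le_trans (measure_mono ?_) (cap_volume (by omega) hT h1)
        exact fun θ hθ => ⟨hθ.2, hθ.1⟩
  have hfinal := hL.trans (lintegral_mono hpt)
  have hKtop : K ≠ ⊤ :=
    ENNReal.mul_ne_top ENNReal.ofReal_ne_top (isCompact_closedBall _ _).measure_lt_top.ne
  rw [lintegral_indicator hSm, lintegral_mul_const _
    hhc.measurable.ennreal_ofReal,
    ← ofReal_integral_eq_lintegral_ofReal hhi.integrableOn
      (Filter.Eventually.of_forall fun x => abs_nonneg _)] at hfinal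
  have h3 := ENNReal.toReal_mono (ENNReal.mul_ne_top ENNReal.ofReal_ne_top hKtop) hfinal
  rw [ENNReal.toReal_mul, ENNReal.toReal_mul, hK, ENNReal.toReal_mul,
    ENNReal.toReal_ofReal (r := √(6 / T) ^ (n - 1)) (by positivity),
    ENNReal.toReal_ofReal (integral_nonneg fun x => abs_nonneg _)] at h3
  have h4 : D / 2 ≤ (ENNReal.ofReal (D / 2)).toReal := by
    rw [ENNReal.toReal_ofReal']
    exact le_max_left _ _
  calc D / 2 * volume.real (Metric.ball (0 : Spc n) 1)
      ≤ (ENNReal.ofReal (D / 2)).toReal * volume.real (Metric.ball (0 : Spc n) 1) := by gcongr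
    _ ≤ _ := h3
    _ = _ := by rw [mul_comm, measureReal_def]

/-- The critical Glassey nonlinearity drives growth:
`∫ |∂_t u|^{(n+1)/(n-1)} dx ≥ c t^{(n-3)/2}`. -/
lemma glassey_growth {n : ℕ} (hn : 2 ≤ n) {u : STn n → ℝ} (hu : ContDiff ℝ 2 u)
    (hs : ConeSupp u) (hs' : ConeSupp (dtD u)) (hbox : ∀ z : STn n, 0 < z.1 → 0 ≤ boxD u z)
    (hD : 0 < ∫ x, dtD u (0, x)) :
    EvPow (fun t => ∫ x, |dtD u (t, x)| ^ (((n : ℝ) + 1) / ((n : ℝ) - 1)))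
      (((n : ℝ) - 3) / 2) := by
  have hn2 : (2 : ℝ) ≤ n := by exact_mod_cast hn
  set r := ((n : ℝ) + 1) / ((n : ℝ) - 1) with hr
  have hr1 : 1 < r := by
    rw [hr, one_lt_div (by linarith)]
    linarith
  set b := volume.real (Metric.ball (0 : Spc n) 1) with hb
  have hb0 : 0 < b := by
    refine ENNReal.toReal_pos (Metric.measure_ball_pos _ _ one_pos).ne' measure_ball_lt_top.ne
  set B := volume.real (Metric.closedBall (0 : Spc n) 2) with hB
  have hB0 : 0 < B := by
    refine ENNReal.toReal_pos (Metric.measure_closedBall_pos _ _ two_pos).ne'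
      (isCompact_closedBall _ _).measure_lt_top.ne
  set D := ∫ x, dtD u (0, x) with hDdef
  set k := D / 2 * b with hk
  have hk0 : 0 < k := by positivity
  -- constants from the cap and shell estimates
  set c1 := Real.sqrt 6 ^ (n - 1) * B with hc1
  have hc10 : 0 < c1 := by positivity
  set c2 := 3 * n * 2 ^ (n - 1) * b with hc2
  have hc20 : 0 < c2 := by positivity
  refine ⟨(k / c1) ^ r / c2 ^ (r - 1), by positivity, ?_⟩
  filter_upwards [Filter.eventually_ge_atTop 3] with T hT
  have hT0 : 0 < T := by linarith
  have h1 := shell_mass hn hu hs hs' hbox hT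
  set S := Metric.closedBall (0 : Spc n) (T + 1) \ Metric.closedBall 0 (T - 2) with hS
  have hdc : Continuous (fun x : Spc n => dtD u (T, x)) :=
    continuous_slice (contDiff_dirD hu _).continuous T
  have hdcs : HasCompactSupport (fun x : Spc n => dtD u (T, x)) := hs'.compact (by linarith)
  have h2 := holder_set (S := S) (r := r) hdc.abs
    (hdcs.comp_left (g := fun y : ℝ => |y|) abs_zero) (fun x => abs_nonneg _)
    (measure_ne_top_of_subset Set.sdiff_subset (isCompact_closedBall _ _).measure_lt_top.ne) hr1
  have h3 := shell_volume (n := n) hT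
  set I := ∫ x in S, |dtD u (T, x)| with hI
  set J := ∫ x, |dtD u (T, x)| ^ r with hJ
  have hJ0 : 0 ≤ J := integral_nonneg fun x => by positivity
  have hcast : ((n - 1 : ℕ) : ℝ) = (n : ℝ) - 1 := by
    rw [Nat.cast_sub (by omega)]; simp
  have e1 : Real.sqrt (6 / T) ^ (n - 1) * B = c1 * T ^ (-(((n : ℝ) - 1) / 2)) := by
    rw [hc1, Real.sqrt_div (by norm_num), div_pow, Real.rpow_neg hT0.le,
      Real.sqrt_eq_rpow T, ← Real.rpow_natCast (T ^ _), ← Real.rpow_mul hT0.le, hcast]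
    rw [show 1 / 2 * ((n : ℝ) - 1) = ((n : ℝ) - 1) / 2 by ring]
    ring
  have e2 : 3 * n * (2 * T) ^ (n - 1) * b = c2 * T ^ ((n : ℝ) - 1) := by
    rw [hc2, mul_pow, ← Real.rpow_natCast T, hcast]
    ring
  rw [e1] at h1
  rw [e2] at h3
  have h4 : k / c1 * T ^ (((n : ℝ) - 1) / 2) ≤ I := by
    have : T ^ (-(((n : ℝ) - 1) / 2)) * T ^ (((n : ℝ) - 1) / 2) = 1 := by
      rw [← Real.rpow_add hT0]; simp
    rw [div_mul_eq_mul_div, div_le_iff₀ hc10]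
    calc k * T ^ (((n : ℝ) - 1) / 2)
        ≤ (c1 * T ^ (-(((n : ℝ) - 1) / 2)) * I) * T ^ (((n : ℝ) - 1) / 2) := by gcongr
      _ = I * c1 := by linear_combination (c1 * I) * this
  have h5 : (k / c1 * T ^ (((n : ℝ) - 1) / 2)) ^ r ≤ (c2 * T ^ ((n : ℝ) - 1)) ^ (r - 1) * J := by
    calc _ ≤ I ^ r := Real.rpow_le_rpow (by positivity) h4 (by linarith)
      _ ≤ _ := h2
      _ ≤ _ := by
        gcongr
  rw [Real.mul_rpow (by positivity) (by positivity), Real.mul_rpow (by positivity) (by positivity),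
    ← Real.rpow_mul hT0.le, ← Real.rpow_mul hT0.le] at h5
  have hn1 : (n : ℝ) - 1 ≠ 0 := by linarith
  have e3 : ((n : ℝ) - 1) / 2 * r = ((n : ℝ) - 3) / 2 + ((n : ℝ) - 1) * (r - 1) := by
    rw [hr]; field_simp; ring
  rw [e3, Real.rpow_add hT0] at h5
  rw [div_mul_eq_mul_div, div_le_iff₀ (by positivity)]
  have hpos : 0 < T ^ (((n : ℝ) - 1) * (r - 1)) := by positivity
  refine le_of_mul_le_mul_right ?_ hpos
  calc _ = (k / c1) ^ r * (T ^ (((n : ℝ) - 3) / 2) * T ^ (((n : ℝ) - 1) * (r - 1))) := by ring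
    _ ≤ _ := h5
    _ = _ := by ring

/-! ### Spatial means -/

/-- Hölder's inequality on the ball `|x| ≤ t + 1` carrying `w(t, ·)`:
`t^{-n(r-1)} |∫ w|^r ≲ ∫ |w|^r`. -/
lemma holder_cone {n : ℕ} {w : STn n → ℝ} (hw : Continuous w) (hs : ConeSupp w) {r : ℝ}
    (hr : 1 < r) : ∃ c : ℝ, 0 < c ∧ ∀ t : ℝ, 1 ≤ t →
      c * t ^ (-((n : ℝ) * (r - 1))) * |∫ x, w (t, x)| ^ r ≤ ∫ x, |w (t, x)| ^ r := by
  set b := volume.real (Metric.ball (0 : Spc n) 1) with hb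
  have hb0 : 0 < b := by
    refine ENNReal.toReal_pos (Metric.measure_ball_pos _ _ one_pos).ne' measure_ball_lt_top.ne
  refine ⟨((2 ^ n * b) ^ (r - 1))⁻¹, by positivity, fun t ht => ?_⟩
  have ht0 : 0 < t := by linarith
  have hc := continuous_slice hw t
  have hcs := hs.compact ht0.le
  have h1 := holder_set (S := Metric.closedBall (0 : Spc n) (t + 1)) (r := r) hc.abs
    (hcs.comp_left (g := fun y : ℝ => |y|) abs_zero) (fun x => abs_nonneg _)
    (isCompact_closedBall _ _).measure_lt_top.ne hr
  have h2 : |∫ x, w (t, x)| ≤ ∫ x in Metric.closedBall (0 : Spc n) (t + 1), |w (t, x)| := by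
    rw [← hs.integral_eq ht0.le le_rfl]
    exact abs_integral_le_integral_abs
  have h3 : volume.real (Metric.closedBall (0 : Spc n) (t + 1)) ≤ 2 ^ n * b * t ^ (n : ℝ) := by
    rw [Measure.addHaar_real_closedBall _ _ (by linarith)]
    simp only [finrank_euclideanSpace, Fintype.card_fin, Real.rpow_natCast]
    calc (t + 1) ^ n * b ≤ (2 * t) ^ n * b := by
          gcongr
          linarith
      _ = _ := by rw [mul_pow]; ring
  set J := ∫ x, |w (t, x)| ^ r with hJ
  have hJ0 : 0 ≤ J := integral_nonneg fun x => by positivity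
  have h4 : |∫ x, w (t, x)| ^ r ≤ (2 ^ n * b) ^ (r - 1) * t ^ ((n : ℝ) * (r - 1)) * J := by
    calc _ ≤ (∫ x in Metric.closedBall (0 : Spc n) (t + 1), |w (t, x)|) ^ r :=
          Real.rpow_le_rpow (abs_nonneg _) h2 (by linarith)
      _ ≤ _ := h1
      _ ≤ (2 ^ n * b * t ^ (n : ℝ)) ^ (r - 1) * J := by
          have : 0 ≤ r - 1 := by linarith
          gcongr
      _ = _ := by
          rw [Real.mul_rpow (by positivity) (by positivity), ← Real.rpow_mul ht0.le]
  rw [Real.rpow_neg ht0.le, ← mul_inv, inv_mul_le_iff₀ (by positivity)]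
  exact h4

lemma dirD_const {n : ℕ} (w : STn n) (c : ℝ) : dirD w (fun _ : STn n => c) = fun _ => 0 := by
  funext z
  simp [dirD]

lemma boxD_one {n : ℕ} (z : STn n) : boxD (fun _ : STn n => (1 : ℝ)) z = 0 := by
  simp [boxD, lapD, dtD, dxD, dirD_const]

/-- The spatial mean of `∂_t u` has derivative `∫ □u`: Green's identity with `ψ = 1`. -/
lemma mean_hasDerivAt {n : ℕ} {u : STn n → ℝ} (hu : ContDiff ℝ 2 u)
    (hs : ConeSupp u) (hs' : ConeSupp (dtD u)) {t : ℝ} (ht : 0 < t) :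
    HasDerivAt (fun s => ∫ x, dtD u (s, x)) (∫ x, boxD u (t, x)) t := by
  have h := hasDerivAt_green hu (contDiff_const (c := (1 : ℝ))) hs hs' ht
  simpa [wronsk, dirD_const, boxD_one, dtD] using h

lemma mean_deriv_ge {n : ℕ} {u : STn n → ℝ} (hu : ContDiff ℝ 2 u)
    (hs : ConeSupp u) (hs' : ConeSupp (dtD u)) (hbox : ∀ z : STn n, 0 < z.1 → 0 ≤ boxD u z)
    {t : ℝ} (ht : 0 ≤ t) : ∫ x, dtD u (0, x) ≤ ∫ x, dtD u (t, x) := by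
  have h := flux_mono hu (contDiff_const (c := (1 : ℝ))) hs hs' hbox (fun _ => zero_le_one)
    (fun z => boxD_one z) ht
  simpa [wronsk, dtD, dirD_const] using h

/-! ### Conclusion -/

/-- Blow up for the system □u = |v|^p, □v = |u|^q + |∂_t u|^{(n+1)/(n-1)}
(Theorem 2.1 of Hidano–Yokoyama). -/
theorem blow_up (n : ℕ) (hn : 2 ≤ n) (p q : ℝ) (hp : 1 < p) (hq : 1 < q)
    (hpq : 0 < 4 * q - ((n : ℝ) - 1) * p * q + n + 3)
    (f₁ g₁ f₂ g₂ : Spc n → ℝ)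
    (hf₁ : ContDiff ℝ ∞ f₁) (hf₁c : HasCompactSupport f₁)
    (hg₁ : ContDiff ℝ ∞ g₁) (hg₁c : HasCompactSupport g₁)
    (hf₂ : ContDiff ℝ ∞ f₂) (hf₂c : HasCompactSupport f₂)
    (hg₂ : ContDiff ℝ ∞ g₂) (hg₂c : HasCompactSupport g₂)
    (hg₁pos : 0 < ∫ x, g₁ x) (hg₂pos : 0 < ∫ x, g₂ x)
    (ε : ℝ) (hε : 0 < ε) :
    ¬ ∃ u v : STn n → ℝ, ContDiff ℝ 2 u ∧ ContDiff ℝ 2 v ∧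
      (∀ z : STn n, 0 < z.1 → boxD u z = |v z| ^ p) ∧
      (∀ z : STn n, 0 < z.1 →
        boxD v z = |u z| ^ q + |dtD u z| ^ (((n : ℝ) + 1) / ((n : ℝ) - 1))) ∧
      (∀ x, u (0, x) = ε * f₁ x) ∧ (∀ x, dtD u (0, x) = ε * g₁ x) ∧
      (∀ x, v (0, x) = ε * f₂ x) ∧ (∀ x, dtD v (0, x) = ε * g₂ x) ∧
      (∀ z : STn n, 0 ≤ z.1 → z.1 + 1 < ‖z.2‖ →
        u z = 0 ∧ v z = 0 ∧ dtD u z = 0 ∧ dtD v z = 0) := by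
  rintro ⟨u, v, hu, hv, eu, ev, -, u1, -, v1, hsupp⟩
  have hsu : ConeSupp u := fun z h0 h => (hsupp z h0 h).1
  have hsv : ConeSupp v := fun z h0 h => (hsupp z h0 h).2.1
  have hsu' : ConeSupp (dtD u) := fun z h0 h => (hsupp z h0 h).2.2.1
  have hsv' : ConeSupp (dtD v) := fun z h0 h => (hsupp z h0 h).2.2.2
  have hn2 : (2 : ℝ) ≤ n := by exact_mod_cast hn
  set r := ((n : ℝ) + 1) / ((n : ℝ) - 1) with hr
  have hr0 : 0 < r := by
    rw [hr]
    exact div_pos (by linarith) (by linarith)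
  have hbu : ∀ z : STn n, 0 < z.1 → 0 ≤ boxD u z := fun z hz => by
    rw [eu z hz]
    positivity
  have hbv : ∀ z : STn n, 0 < z.1 → 0 ≤ boxD v z := fun z hz => by
    rw [ev z hz]
    positivity
  have hDu : 0 < ∫ x, dtD u (0, x) := by
    simp_rw [u1]
    rw [integral_const_mul]
    positivity
  have hDv : 0 < ∫ x, dtD v (0, x) := by
    simp_rw [v1]
    rw [integral_const_mul]
    positivity
  have hcu1 := (contDiff_dirD hu (1, 0)).continuous
  have hint1 : ∀ t > 0, Integrable (fun x : Spc n => |u (t, x)| ^ q) := fun t ht => by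
    refine ((continuous_slice hu.continuous t).abs.rpow_const
      fun x => Or.inr (by linarith)).integrable_of_hasCompactSupport ?_
    exact (hsu.compact ht.le).comp_left (g := fun y : ℝ => |y| ^ q)
      (by rw [abs_zero, Real.zero_rpow (by linarith)])
  have hint2 : ∀ t > 0, Integrable (fun x : Spc n => |dtD u (t, x)| ^ r) := fun t ht => by
    refine ((continuous_slice hcu1 t).abs.rpow_const
      fun x => Or.inr hr0.le).integrable_of_hasCompactSupport ?_
    exact (hsu'.compact ht.le).comp_left (g := fun y : ℝ => |y| ^ r)
      (by rw [abs_zero, Real.zero_rpow hr0.ne'])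
  have eU : ∀ t > 0, ∫ x : Spc n, boxD u (t, x) = ∫ x, |v (t, x)| ^ p := fun t ht => by
    simp_rw [fun x : Spc n => eu (t, x) ht]
  have eV : ∀ t > 0, ∫ x : Spc n, boxD v (t, x)
      = (∫ x, |u (t, x)| ^ q) + ∫ x, |dtD u (t, x)| ^ r := fun t ht => by
    simp_rw [fun x : Spc n => ev (t, x) ht]
    exact integral_add (hint1 t ht) (hint2 t ht)
  refine ode_blow_up hp hq hpq (lt_min hDu hDv)
    (U := fun t => ∫ x, u (t, x)) (U1 := fun t => ∫ x, dtD u (t, x))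
    (U2 := fun t => ∫ x, boxD u (t, x))
    (V := fun t => ∫ x, v (t, x)) (V1 := fun t => ∫ x, dtD v (t, x))
    (V2 := fun t => ∫ x, boxD v (t, x))
    (fun t ht => hsu.hasDerivAt_integral (hu.of_le (by norm_num)) ht)
    (fun t ht => mean_hasDerivAt hu hsu hsu' ht)
    (fun t ht => hsv.hasDerivAt_integral (hv.of_le (by norm_num)) ht)
    (fun t ht => mean_hasDerivAt hv hsv hsv' ht)
    (fun t ht => (min_le_left _ _).trans (mean_deriv_ge hu hsu hsu' hbu (le_of_lt ht)))
    (fun t ht => (min_le_right _ _).trans (mean_deriv_ge hv hsv hsv' hbv (le_of_lt ht)))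
    ?_ ?_ ?_
  · obtain ⟨c, hc, h⟩ := holder_cone hv.continuous hsv hp
    refine ⟨c, hc, ?_⟩
    filter_upwards [Filter.eventually_ge_atTop 1] with t ht
    rw [eU t (by linarith)]
    exact h t ht
  · obtain ⟨c, hc, h⟩ := holder_cone hu.continuous hsu hq
    refine ⟨c, hc, ?_⟩
    filter_upwards [Filter.eventually_ge_atTop 1] with t ht
    rw [eV t (by linarith)]
    have : 0 ≤ ∫ x : Spc n, |dtD u (t, x)| ^ r := integral_nonneg fun x => by positivity
    linarith [h t ht]
  · obtain ⟨c, hc, h⟩ := glassey_growth hn hu hsu hsu' hbu hDu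
    refine ⟨c, hc, ?_⟩
    filter_upwards [h, Filter.eventually_ge_atTop 1] with t h1 ht
    rw [eV t (by linarith)]
    have : 0 ≤ ∫ x : Spc n, |u (t, x)| ^ q := integral_nonneg fun x => by positivity
    linarith
end

section
/- Let n ≥ 2 and let p > 1, q > 1 satisfy 4q − (n−1)pq + n + 3 > 0. Let f₁, g₁, f₂, g₂ ∈ C_c^∞(ℝⁿ) with ∫_{ℝⁿ} g₁(x) dx > 0 and ∫_{ℝⁿ} g₂(x) dx > 0. Then there exists a constant C > 0 (depending on n, p, q and the data but not on ε) such that for every ε > 0 and every T > 1, if (u, v) is a pair of C² functions on [0,T) × ℝⁿ satisfying ∂_t²u − Δu = |v|^p and ∂_t²v − Δv = |u|^q + |∂_t u|^{(n+1)/(n−1)} pointwise, with u(0,·) = εf₁, ∂_t u(0,·) = εg₁, v(0,·) = εf₂, ∂_t v(0,·) = εg₂, and with u, v, ∂_t u, ∂_t v supported in {(t,x) : |x| ≤ t + 1}, then T ≤ C ε^{−2(n+1)(pq−1)/((n−1)(4q−(n−1)pq+n+3))}. -/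
/-!
The proof follows the spatial averages `F(t) = ∫ u(t,x) dx` and `G(t) = ∫ v(t,x) dx`. By finite
speed of propagation and Hölder's inequality on the ball `|x| ≤ t + 1`,
`F'' = ∫ |v|^p ≳ (1+t)^{-n(p-1)} |G|^p` and `G'' ≥ ∫ |u|^q ≳ (1+t)^{-n(q-1)} |F|^q`.
A Kato type iteration (`kato_blowup`) shows that such a system cannot survive from time `τ` to time
`2τ` unless `G(τ)^{pq-1} τ^{2q+2-n(pq-1)}` is bounded.

A lower bound for `G` comes from the derivative nonlinearity, with `r = (n+1)/(n-1)`. For every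
`ξ ∈ ℝⁿ` the moment `M(t) = ∫ u(t,x) e^{ξ·x} dx` satisfies `M'' ≥ |ξ|² M`, so
`e^{-|ξ|t} ∫ ∂_t u e^{ξ·x} dx ≳ ε` for all sufficiently small `ξ` (`exists_freq`); this uses only
`∫ g₁ > 0`. Integrating over a shell of frequencies replaces `e^{ξ·x-|ξ|t}` by a weight concentrated
in a bounded neighbourhood of the light cone, of size `t^{-(n-1)/2}` and mass `t^{(n-1)/2}`
(`coneW_bound`, `radial_bound`). Hölder's inequality with this weight gives
`∫ |∂_t u|^r dx ≳ ε^r (1+t)^{(n-3)/2}` (`integral_rpow_lower`), hence `G(τ) ≳ ε^r τ^{(n+1)/2}` for `τ`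
larger than a constant depending on the data. With `τ = T/4` the Kato bound becomes
`ε^{r(pq-1)} T^D ≲ 1` with `D = (4q - (n-1)pq + n + 3)/2 > 0`, which is the claim (`MomSys.small`).

The constant has to serve all `ε > 0`. For `ε` above some `ε₀` the same argument on `(0,1)` rules out
any solution with `T > 1` (`MomSys.large`), and for `ε < ε₀` bounded values of `T` are absorbed into
the constant.
-/

open MeasureTheory Real ENNReal FourierTransform
open scoped ContDiff

/-! ### Second order differential inequalities -/

/-- First order Taylor lower bounds for a function with `H'' ≥ m`. -/
theorem taylor_lower {H H' H'' : ℝ → ℝ} (h1 : ∀ t, HasDerivAt H (H' t) t)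
    (h2 : ∀ t, HasDerivAt H' (H'' t) t) {s e m : ℝ} (hse : s ≤ e)
    (hm : ∀ t ∈ Set.Ioo s e, m ≤ H'' t) :
    H' s + m * (e - s) ≤ H' e ∧ H s + H' s * (e - s) + m * (e - s) ^ 2 / 2 ≤ H e := by
  have key : MonotoneOn (fun t => H' t - m * (t - s)) (Set.Icc s e) := by
    have hd : ∀ t, HasDerivAt (fun t => H' t - m * (t - s)) (H'' t - m) t := fun t => by
      exact ((h2 t).sub (((hasDerivAt_id t).sub_const s).const_mul m)).congr_deriv (by simp)
    refine monotoneOn_of_hasDerivWithinAt_nonneg (convex_Icc s e)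
      (fun t _ => (hd t).continuousAt.continuousWithinAt)
      (fun t _ => (hd t).hasDerivWithinAt) fun t ht => ?_
    rw [interior_Icc] at ht
    linarith [hm t ht]
  have k1 : ∀ t ∈ Set.Icc s e, H' s + m * (t - s) ≤ H' t := fun t ht => by
    have := key (Set.left_mem_Icc.2 hse) ht ht.1
    simp at this
    linarith
  refine ⟨k1 e (Set.right_mem_Icc.2 hse), ?_⟩
  have key2 : MonotoneOn (fun t => H t - H' s * (t - s) - m * (t - s) ^ 2 / 2)
      (Set.Icc s e) := by
    have hd : ∀ t, HasDerivAt (fun t => H t - H' s * (t - s) - m * (t - s) ^ 2 / 2)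
        (H' t - H' s - m * (t - s)) t := fun t => by
      have hid := (hasDerivAt_id t).sub_const s
      refine (((h1 t).sub (hid.const_mul (H' s))).sub
        (((hid.pow 2).const_mul m).div_const 2)).congr_deriv ?_
      simp
      ring
    refine monotoneOn_of_hasDerivWithinAt_nonneg (convex_Icc s e)
      (fun t _ => (hd t).continuousAt.continuousWithinAt)
      (fun t _ => (hd t).hasDerivWithinAt) fun t ht => ?_
    linarith [k1 t (interior_subset ht)]
  have := key2 (Set.left_mem_Icc.2 hse) (Set.right_mem_Icc.2 hse) hse
  simp at this
  linarith

/-- The constant in `kato_blowup`; the exponent `(2q+2)/(pq-1)` is the growth rate for which the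
loss of time steps `2^{-k(2q+2)}` in the iteration is exactly compensated. -/
noncomputable def katoC (p q : ℝ) : ℝ :=
  8 ^ (q + 1) * 2 ^ (2 * q + 2) * 2 ^ ((2 * q + 2) / (p * q - 1))

theorem katoC_pos (p q : ℝ) : 0 < katoC p q := by unfold katoC; positivity

/-- The algebra of one iteration step of `kato_blowup`. -/
theorem kato_step {p q τ α β G0 : ℝ} (hp : 1 < p) (hq : 1 < q) (hτ : 0 < τ) (hα : 0 < α)
    (hβ : 0 < β) (hG0 : 0 < G0)
    (hbig : katoC p q ≤ β * α ^ q * G0 ^ (p * q - 1) * τ ^ (2 * q + 2)) (k : ℕ) :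
    G0 * ((2 : ℝ) ^ ((2 * q + 2) / (p * q - 1))) ^ (k + 1) ≤
      β * (α * (G0 * ((2 : ℝ) ^ ((2 * q + 2) / (p * q - 1))) ^ k) ^ p *
        (τ * (1 / 2) ^ (k + 1) / 2) ^ 2 / 2) ^ q * (τ * (1 / 2) ^ (k + 1) / 2) ^ 2 / 2 := by
  have hpq : 0 < p * q - 1 := by nlinarith
  have hpq0 := hpq.ne'
  set σ := (2 * q + 2) / (p * q - 1) with hσ
  have hσ' : σ * (p * q) = σ + (2 * q + 2) := by
    have : σ * (p * q - 1) = 2 * q + 2 := div_mul_cancel₀ _ hpq0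
    linarith
  -- all factors are written as powers of positive bases
  have e1 : ((2 : ℝ) ^ σ) ^ k = 2 ^ (σ * k) := by rw [Real.rpow_mul (by norm_num), Real.rpow_natCast]
  have e2 : ((2 : ℝ) ^ σ) ^ (k + 1) = 2 ^ (σ * k + σ) := by
    rw [Real.rpow_add (by norm_num), ← e1, pow_succ]
  have e3 : ((1 : ℝ) / 2) ^ (k + 1) = 2 ^ (-((k : ℝ) + 1)) := by
    rw [Real.rpow_neg (by norm_num), one_div, inv_pow]
    congr 1
    exact_mod_cast (Real.rpow_natCast (2 : ℝ) (k + 1)).symm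
  have e4 : (τ * (1 / 2) ^ (k + 1) / 2) ^ 2 / 2 = τ ^ (2 : ℝ) * 2 ^ (-(2 * ((k : ℝ) + 1))) / 8 := by
    rw [e3, show -(2 * ((k : ℝ) + 1)) = -((k : ℝ) + 1) + -((k : ℝ) + 1) by ring,
      Real.rpow_add (by norm_num), Real.rpow_two]
    ring
  have e5 : β * (α * (G0 * ((2 : ℝ) ^ σ) ^ k) ^ p * (τ * (1 / 2) ^ (k + 1) / 2) ^ 2 / 2) ^ q *
        (τ * (1 / 2) ^ (k + 1) / 2) ^ 2 / 2 =
      (β * α ^ q * G0 ^ (p * q - 1) * τ ^ (2 * q + 2)) * G0 *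
        (2 ^ (σ * k * (p * q)) * 2 ^ (-((2 * q + 2) * ((k : ℝ) + 1)))) / 8 ^ (q + 1) := by
    rw [mul_div_assoc (α * _), mul_div_assoc (β * _), e4, e1,
      Real.mul_rpow (by positivity) (by positivity),
      Real.mul_rpow (by positivity) (by positivity), Real.div_rpow (by positivity) (by positivity),
      Real.mul_rpow hG0.le (by positivity), Real.mul_rpow (by positivity) (by positivity),
      Real.mul_rpow (by positivity) (by positivity), ← Real.rpow_mul hG0.le, ← Real.rpow_mul (by positivity),
      ← Real.rpow_mul (by norm_num), ← Real.rpow_mul hτ.le, ← Real.rpow_mul (by norm_num),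
      Real.rpow_add hτ, Real.rpow_sub hG0, Real.rpow_one,
      Real.rpow_add (by norm_num : (0 : ℝ) < 8), Real.rpow_one,
      show -((2 * q + 2) * ((k : ℝ) + 1)) = -(2 * ((k : ℝ) + 1)) * q + -(2 * ((k : ℝ) + 1)) by ring,
      Real.rpow_add (by norm_num : (0 : ℝ) < 2)]
    field_simp
  rw [e5, e2, ← Real.rpow_add (by norm_num), le_div_iff₀ (by positivity)]
  calc G0 * 2 ^ (σ * k + σ) * 8 ^ (q + 1)
      = katoC p q * G0 * 2 ^ (σ * ↑k * (p * q) + -((2 * q + 2) * (↑k + 1))) := by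
        have : σ * (k : ℝ) * (p * q) + -((2 * q + 2) * (↑k + 1)) = σ * k - (2 * q + 2) := by
          linear_combination (k : ℝ) * hσ'
        rw [this, katoC, ← hσ, Real.rpow_add (by norm_num), Real.rpow_sub (by norm_num)]
        field_simp
    _ ≤ _ := by gcongr

/-- A Kato type lemma: a solution of `F'' ≥ α |G|^p`, `G'' ≥ β |F|^q` with nonnegative increasing
data cannot reach time `2τ` if `G(τ)` is large. On the dyadic times `τ(2 - 2^{-k})` the function
`G` would grow geometrically in `k`. -/
theorem kato_blowup {p q τ α β G0 : ℝ} (hp : 1 < p) (hq : 1 < q) (hτ : 0 < τ) (hα : 0 < α)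
    (hβ : 0 < β) (hG0 : 0 < G0) {F F' F'' G G' G'' : ℝ → ℝ}
    (hF1 : ∀ t, HasDerivAt F (F' t) t) (hF2 : ∀ t, HasDerivAt F' (F'' t) t)
    (hG1 : ∀ t, HasDerivAt G (G' t) t) (hG2 : ∀ t, HasDerivAt G' (G'' t) t)
    (hF : ∀ t ∈ Set.Ioo τ (2 * τ), α * |G t| ^ p ≤ F'' t)
    (hG : ∀ t ∈ Set.Ioo τ (2 * τ), β * |F t| ^ q ≤ G'' t)
    (hF0 : 0 ≤ F τ) (hF0' : 0 ≤ F' τ) (hG0' : 0 ≤ G' τ) (hGτ : G0 ≤ G τ) :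
    β * α ^ q * G0 ^ (p * q - 1) * τ ^ (2 * q + 2) ≤ katoC p q := by
  by_contra! hbig
  have hpq : 0 < p * q - 1 := by nlinarith
  have hF'n : ∀ t ∈ Set.Ioo τ (2 * τ), 0 ≤ F'' t := fun t ht =>
    le_trans (by positivity) (hF t ht)
  have hG'n : ∀ t ∈ Set.Ioo τ (2 * τ), 0 ≤ G'' t := fun t ht =>
    le_trans (by positivity) (hG t ht)
  have hF'0 : ∀ t ∈ Set.Icc τ (2 * τ), 0 ≤ F' t := fun t ht => by
    have := (taylor_lower hF1 hF2 ht.1 (m := 0)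
      fun r hr => hF'n r ⟨hr.1, hr.2.trans_le ht.2⟩).1
    linarith
  have hG'0 : ∀ t ∈ Set.Icc τ (2 * τ), 0 ≤ G' t := fun t ht => by
    have := (taylor_lower hG1 hG2 ht.1 (m := 0)
      fun r hr => hG'n r ⟨hr.1, hr.2.trans_le ht.2⟩).1
    linarith
  have mono : ∀ s e m, τ ≤ s → s ≤ e → e ≤ 2 * τ → (∀ t ∈ Set.Ioo s e, m ≤ F'' t) →
      F s + m * (e - s) ^ 2 / 2 ≤ F e := fun s e m h1 h2 h3 h4 => by
    have := (taylor_lower hF1 hF2 h2 h4).2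
    nlinarith [hF'0 s ⟨h1, h2.trans h3⟩]
  have monoG : ∀ s e m, τ ≤ s → s ≤ e → e ≤ 2 * τ → (∀ t ∈ Set.Ioo s e, m ≤ G'' t) →
      G s + m * (e - s) ^ 2 / 2 ≤ G e := fun s e m h1 h2 h3 h4 => by
    have := (taylor_lower hG1 hG2 h2 h4).2
    nlinarith [hG'0 s ⟨h1, h2.trans h3⟩]
  have incF : ∀ s e, τ ≤ s → s ≤ e → e ≤ 2 * τ → F s ≤ F e := fun s e h1 h2 h3 => by
    have := mono s e 0 h1 h2 h3 fun r hr => hF'n r ⟨h1.trans_lt hr.1, hr.2.trans_le h3⟩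
    linarith
  have incG : ∀ s e, τ ≤ s → s ≤ e → e ≤ 2 * τ → G s ≤ G e := fun s e h1 h2 h3 => by
    have := monoG s e 0 h1 h2 h3 fun r hr => hG'n r ⟨h1.trans_lt hr.1, hr.2.trans_le h3⟩
    linarith
  -- `G` gains a fixed factor `μ > 1` on each of the intervals of length `τ 2^{-(k+1)}`
  set μ : ℝ := (2 : ℝ) ^ ((2 * q + 2) / (p * q - 1)) with hμ
  have hμ1 : 1 < μ := Real.one_lt_rpow (by norm_num) (by positivity)
  have hs : ∀ k : ℕ, τ ≤ τ * (2 - (1 / 2) ^ k) ∧ τ * (2 - (1 / 2) ^ k) ≤ 2 * τ := fun k => by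
    have h1 : (0 : ℝ) < (1 / 2) ^ k := by positivity
    have h2 : ((1 : ℝ) / 2) ^ k ≤ 1 := pow_le_one₀ (by norm_num) (by norm_num)
    constructor <;> nlinarith
  have main : ∀ k : ℕ, G0 * μ ^ k ≤ G (τ * (2 - (1 / 2) ^ k)) := by
    intro k
    induction k with
    | zero => simpa [show τ * (2 - 1) = τ by ring] using hGτ
    | succ k ih =>
      set s := τ * (2 - (1 / 2) ^ k) with hsk
      set d := τ * (1 / 2) ^ (k + 1) / 2 with hd
      have hdpos : 0 < d := by positivity
      have hnext : τ * (2 - (1 / 2) ^ (k + 1)) = s + d + d := by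
        rw [hsk, hd]; ring
      have b1 := hs k
      have b2 := hs (k + 1)
      rw [hnext] at b2 ⊢
      rw [← hsk] at b1
      -- the first half of the interval makes `F` large, the second half then makes `G` large
      have hFmid : α * (G0 * μ ^ k) ^ p * d ^ 2 / 2 ≤ F (s + d) := by
        have := mono s (s + d) (α * (G0 * μ ^ k) ^ p) b1.1 (by linarith) (by linarith) ?_
        · have h0 := incF τ s le_rfl b1.1 b1.2
          simp only [add_sub_cancel_left] at this
          linarith
        · intro t ht
          have hGt := incG s t b1.1 ht.1.le (by linarith [ht.2])
          refine le_trans ?_ (hF t ⟨b1.1.trans_lt ht.1, by linarith [ht.2]⟩)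
          gcongr
          exact (ih.trans hGt).trans (le_abs_self _)
      have := monoG (s + d) (s + d + d) (β * (α * (G0 * μ ^ k) ^ p * d ^ 2 / 2) ^ q)
        (by linarith) (by linarith) b2.2 ?_
      · have h0 := incG τ (s + d) le_rfl (by linarith) (by linarith)
        have h1 := kato_step hp hq hτ hα hβ hG0 hbig.le k
        rw [← hμ, ← hd] at h1
        simp only [add_sub_cancel_left] at this
        linarith
      · intro t ht
        have hFt := incF (s + d) t (by linarith) ht.1.le (by linarith [ht.2])
        refine le_trans ?_ (hG t ⟨by linarith [ht.1], by linarith [ht.2]⟩)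
        gcongr
        exact (hFmid.trans hFt).trans (le_abs_self _)
  obtain ⟨k, hk⟩ := pow_unbounded_of_one_lt (G (2 * τ) / G0) hμ1
  rw [div_lt_iff₀ hG0] at hk
  have := (main k).trans (incG _ _ (hs k).1 (hs k).2 le_rfl)
  linarith

/-! ### Exponential moments of solutions -/

/-- The moment `∫_{|x| ≤ R} w(t,x) e^{ξ·x} dx`. Truncating to a fixed ball makes it a smooth function
of every `t ∈ ℝ`; for `R` larger than the radius of the support it is the full integral. -/
noncomputable def mom {n : ℕ} (R : ℝ) (ξ : Spc n) (w : STn n → ℝ) (t : ℝ) : ℝ :=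
  ∫ x in Metric.closedBall (0 : Spc n) R, w (t, x) * Real.exp (inner ℝ ξ x)

section
variable {n : ℕ}

theorem contDiff_dirD_s1 {m k : WithTop ℕ∞} (hmk : m + 1 ≤ k) {w : STn n → ℝ} (hw : ContDiff ℝ k w)
    (v : STn n) : ContDiff ℝ m (dirD v w) :=
  (hw.fderiv_right hmk).clm_apply contDiff_const

theorem continuous_boxD {w : STn n → ℝ} (hw : ContDiff ℝ 2 w) : Continuous (boxD w) := by
  have h1 : ∀ v, ContDiff ℝ 1 (dirD v w) := fun v => contDiff_dirD_s1 (by norm_num) hw v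
  have h2 : ∀ v, Continuous (dirD v (dirD v w)) := fun v =>
    (contDiff_dirD_s1 (m := 0) (by norm_num) (h1 v) v).continuous
  exact (h2 _).sub (continuous_finsetSum _ fun j _ => h2 _)

theorem integrableOn_ball_of_continuous {f : Spc n → ℝ} (hf : Continuous f) (R : ℝ) :
    IntegrableOn f (Metric.closedBall (0 : Spc n) R) :=
  hf.continuousOn.integrableOn_compact (isCompact_closedBall _ _)

theorem hasDerivAt_mom {w : STn n → ℝ} (hw : ContDiff ℝ 1 w) (R : ℝ) (ξ : Spc n) (t : ℝ) :
    HasDerivAt (mom R ξ w) (mom R ξ (dtD w) t) t := by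
  have hc : Continuous w := hw.continuous
  have hd : Continuous (dtD w) := (contDiff_dirD_s1 (m := 0) (by norm_num) hw _).continuous
  have hbd : ∃ M, ∀ z ∈ Set.Icc (t - 1) (t + 1) ×ˢ Metric.closedBall (0 : Spc n) R,
      ‖dtD w z * Real.exp (inner ℝ ξ z.2)‖ ≤ M :=
    (isCompact_Icc.prod (isCompact_closedBall _ _)).exists_bound_of_continuousOn
      (by fun_prop)
  obtain ⟨M, hM⟩ := hbd
  refine (hasDerivAt_integral_of_dominated_loc_of_deriv_le
    (F := fun s x => w (s, x) * Real.exp (inner ℝ ξ x))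
    (F' := fun s x => dtD w (s, x) * Real.exp (inner ℝ ξ x)) (bound := fun _ => M)
    (Icc_mem_nhds (by linarith : t - 1 < t) (by linarith : t < t + 1)) ?_ ?_ ?_ ?_ ?_ ?_).2
  · exact Filter.Eventually.of_forall fun s => Continuous.aestronglyMeasurable (by fun_prop)
  · exact integrableOn_ball_of_continuous (by fun_prop) R
  · exact Continuous.aestronglyMeasurable (by fun_prop)
  · filter_upwards [ae_restrict_mem Metric.isClosed_closedBall.measurableSet] with x hx s hs
    exact hM (s, x) ⟨hs, hx⟩
  · exact integrableOn_ball_of_continuous continuous_const R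
  · refine Filter.Eventually.of_forall fun x s _ => HasDerivAt.mul_const ?_ _
    exact ((hw.differentiable (by norm_num)) (s, x)).hasFDerivAt.comp_hasDerivAt s
      ((hasDerivAt_id s).prodMk (hasDerivAt_const s x))

theorem integral_fderiv_mul_exp {h : Spc n → ℝ} (hh : ContDiff ℝ 1 h) (hc : HasCompactSupport h)
    (ξ e : Spc n) :
    ∫ x, fderiv ℝ h x e * Real.exp (inner ℝ ξ x) =
      -(inner ℝ ξ e * ∫ x, h x * Real.exp (inner ℝ ξ x)) := by
  have hd : ∀ x, HasFDerivAt (fun x : Spc n => Real.exp (inner ℝ ξ x))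
      (Real.exp (inner ℝ ξ x) • innerSL ℝ ξ) x := fun x =>
    (innerSL ℝ ξ).hasFDerivAt.exp
  have hfd : ∀ x, fderiv ℝ (fun x : Spc n => Real.exp (inner ℝ ξ x)) x e =
      Real.exp (inner ℝ ξ x) * inner ℝ ξ e := fun x => by simp [(hd x).fderiv]
  have hh' : Continuous fun x => fderiv ℝ h x e :=
    (hh.continuous_fderiv (by norm_num)).clm_apply continuous_const
  have hc' : HasCompactSupport fun x => fderiv ℝ h x e := hc.fderiv_apply ℝ e
  have := integral_mul_fderiv_eq_neg_fderiv_mul_of_integrable (μ := (volume : Measure (Spc n)))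
    (f := fun x : Spc n => Real.exp (inner ℝ ξ x)) (g := h) (v := e) ?_ ?_ ?_
    (fun x _ => (hd x).differentiableAt) (fun x _ => hh.differentiable (by norm_num) x)
  · simp_rw [hfd] at this
    rw [← integral_const_mul, ← integral_neg] at *
    simp_rw [mul_comm (fderiv ℝ h _ e)]
    rw [this]
    congr 1
    ext x
    ring
  · simp_rw [hfd]
    exact Continuous.integrable_of_hasCompactSupport
      (by have := hh.continuous; fun_prop) hc.mul_left
  · exact Continuous.integrable_of_hasCompactSupport (by fun_prop) hc'.mul_left
  · exact Continuous.integrable_of_hasCompactSupport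
      (by have := hh.continuous; fun_prop) hc.mul_left

theorem supp_slice {w : STn n → ℝ} {t : ℝ} (hs : ∀ x, t + 1 < ‖x‖ → w (t, x) = 0) :
    tsupport (fun x => w (t, x)) ⊆ Metric.closedBall (0 : Spc n) (t + 1) := by
  refine closure_minimal (fun x hx => ?_) Metric.isClosed_closedBall
  rw [mem_closedBall_zero_iff]
  by_contra! hcon
  exact hx (hs x hcon)

/-- Integration by parts for the Laplacian of a compactly supported slice against `e^{ξ·x}`. -/
theorem mom_lapD {w : STn n → ℝ} (hw : ContDiff ℝ 2 w) {t R : ℝ} (hR : t + 1 < R)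
    (hs : ∀ x, t + 1 < ‖x‖ → w (t, x) = 0) (ξ : Spc n) :
    mom R ξ (lapD w) t = ‖ξ‖ ^ 2 * mom R ξ w t := by
  set h : Spc n → ℝ := fun x => w (t, x) with hh
  have hsl : ContDiff ℝ 2 h := hw.comp (contDiff_const.prodMk contDiff_id)
  have hts : tsupport h ⊆ Metric.closedBall (0 : Spc n) (t + 1) := supp_slice hs
  have hcs : HasCompactSupport h :=
    (isCompact_closedBall (0 : Spc n) (t + 1)).of_isClosed_subset (isClosed_tsupport _) hts
  have slice : ∀ (g : STn n → ℝ), ContDiff ℝ 1 g → ∀ (e x : Spc n),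
      dirD (0, e) g (t, x) = fderiv ℝ (fun y => g (t, y)) x e := fun g hg e x => by
    have h1 : HasFDerivAt (fun y : Spc n => ((t, y) : STn n))
        (ContinuousLinearMap.inr ℝ ℝ (Spc n)) x := hasFDerivAt_prodMk_right t x
    have := ((hg.differentiable (by norm_num)) (t, x)).hasFDerivAt.comp x h1
    have h2 : fderiv ℝ (fun y => g (t, y)) x = _ := this.fderiv
    rw [h2]
    simp [dirD]
  have lap : ∀ x, lapD w (t, x) = ∑ j : Fin n, fderiv ℝ (fun y => fderiv ℝ h y
      (EuclideanSpace.single j 1)) x (EuclideanSpace.single j 1) := fun x => by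
    refine Finset.sum_congr rfl fun j _ => ?_
    have h1 : ContDiff ℝ 1 (dirD (0, EuclideanSpace.single j 1) w) :=
      contDiff_dirD_s1 (by norm_num) hw _
    unfold dxD
    rw [slice _ h1]
    congr 2
    ext y
    exact slice w (hw.of_le (by norm_num)) _ y
  have hd1 : ∀ e, ContDiff ℝ 1 fun y => fderiv ℝ h y e := fun e =>
    (hsl.fderiv_right (m := 1) (by norm_num)).clm_apply contDiff_const
  have hc1 : ∀ e, HasCompactSupport fun y => fderiv ℝ h y e := fun e => hcs.fderiv_apply ℝ e
  have one : ∀ e, ∫ x, fderiv ℝ (fun y => fderiv ℝ h y e) x e * Real.exp (inner ℝ ξ x) =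
      (inner ℝ ξ e) ^ 2 * ∫ x, h x * Real.exp (inner ℝ ξ x) := fun e => by
    rw [integral_fderiv_mul_exp (hd1 e) (hc1 e),
      integral_fderiv_mul_exp (hsl.of_le (by norm_num)) hcs]
    ring
  have full : ∀ g : Spc n → ℝ, tsupport g ⊆ tsupport h →
      ∫ x in Metric.closedBall (0 : Spc n) R, g x * Real.exp (inner ℝ ξ x) =
        ∫ x, g x * Real.exp (inner ℝ ξ x) := fun g hg => by
    refine setIntegral_eq_integral_of_forall_compl_eq_zero fun x hx => ?_
    have : x ∉ tsupport g := fun hx' => hx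
      (Metric.closedBall_subset_closedBall hR.le (hts (hg hx')))
    rw [image_eq_zero_of_notMem_tsupport this, zero_mul]
  have hcont : ∀ e, Continuous fun x => fderiv ℝ (fun y => fderiv ℝ h y e) x e := fun e =>
    ((hd1 e).continuous_fderiv (by norm_num)).clm_apply continuous_const
  unfold mom
  simp_rw [lap, Finset.sum_mul]
  have hint : ∀ j : Fin n, IntegrableOn (fun x => fderiv ℝ (fun y => fderiv ℝ h y
      (EuclideanSpace.single j 1)) x (EuclideanSpace.single j 1) * Real.exp (inner ℝ ξ x))
      (Metric.closedBall (0 : Spc n) R) := fun j =>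
    integrableOn_ball_of_continuous ((hcont _).mul (by fun_prop)) R
  rw [integral_finsetSum _ fun j _ => hint j, full h subset_rfl]
  have : ∀ j : Fin n, ∫ x in Metric.closedBall (0 : Spc n) R,
      fderiv ℝ (fun y => fderiv ℝ h y (EuclideanSpace.single j 1)) x (EuclideanSpace.single j 1) *
        Real.exp (inner ℝ ξ x) = (ξ j) ^ 2 * ∫ x, h x * Real.exp (inner ℝ ξ x) := fun j => by
    rw [full _ ((tsupport_fderiv_apply_subset ℝ _).trans (tsupport_fderiv_apply_subset ℝ _)), one]
    simp [EuclideanSpace.inner_single_right]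
  simp_rw [this]
  rw [← Finset.sum_mul, EuclideanSpace.norm_sq_eq]
  simp

/-- The moments of a solution of `□w = N` satisfy `M'' = |ξ|² M + ∫ N e^{ξ·x}`. -/
theorem mom_dtD_dtD {w : STn n → ℝ} (hw : ContDiff ℝ 2 w) {t R : ℝ} (hR : t + 1 < R)
    (hs : ∀ x, t + 1 < ‖x‖ → w (t, x) = 0) (ξ : Spc n) :
    mom R ξ (dtD (dtD w)) t = ‖ξ‖ ^ 2 * mom R ξ w t + mom R ξ (boxD w) t := by
  rw [← mom_lapD hw hR hs ξ]
  have h1 : ∀ v, ContDiff ℝ 1 (dirD v w) := fun v => contDiff_dirD_s1 (by norm_num) hw v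
  have h2 : ∀ v, Continuous (dirD v (dirD v w)) := fun v =>
    (contDiff_dirD_s1 (m := 0) (by norm_num) (h1 v) v).continuous
  have h3 : Continuous (lapD w) := continuous_finsetSum _ fun j _ => h2 _
  have h4 := continuous_boxD hw
  unfold mom
  rw [← integral_add (integrableOn_ball_of_continuous (by fun_prop) R)
    (integrableOn_ball_of_continuous (by fun_prop) R)]
  congr 1
  ext x
  simp only [boxD]
  ring

end

section
variable {n : ℕ}

/-- Factoring `∂_t² - |ξ|²` into first order operators bounds the exponential moment of `∂_t w`
from below by that of the free solution. -/
theorem mom_dtD_lower {w : STn n → ℝ} (hw : ContDiff ℝ 2 w) {T R : ℝ} (hR : T + 1 ≤ R)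
    (hs : ∀ z : STn n, 0 ≤ z.1 → z.1 < T → z.1 + 1 < ‖z.2‖ → w z = 0)
    (hN : ∀ z : STn n, 0 < z.1 → z.1 < T → 0 ≤ boxD w z) (ξ : Spc n)
    {t : ℝ} (ht0 : 0 ≤ t) (htT : t < T) :
    (Real.exp (‖ξ‖ * t) * (mom R ξ (dtD w) 0 + ‖ξ‖ * mom R ξ w 0) +
      Real.exp (-(‖ξ‖ * t)) * (mom R ξ (dtD w) 0 - ‖ξ‖ * mom R ξ w 0)) / 2 ≤
        mom R ξ (dtD w) t := by
  set l := ‖ξ‖ with hl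
  set U := mom R ξ w with hU
  set U' := mom R ξ (dtD w) with hU'
  have h1 : ∀ s, HasDerivAt U (U' s) s := fun s =>
    hasDerivAt_mom (hw.of_le (by norm_num)) R ξ s
  have h2 : ∀ s, HasDerivAt U' (mom R ξ (dtD (dtD w)) s) s := fun s =>
    hasDerivAt_mom (contDiff_dirD_s1 (by norm_num) hw _) R ξ s
  have h3 : ∀ s, 0 < s → s < T → 0 ≤ mom R ξ (dtD (dtD w)) s - l ^ 2 * U s := fun s hs0 hsT => by
    rw [mom_dtD_dtD hw (by linarith) (fun x hx => hs (s, x) hs0.le hsT hx) ξ,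
      add_sub_cancel_left]
    exact integral_nonneg fun x => mul_nonneg (hN (s, x) hs0 hsT) (Real.exp_pos _).le
  -- `σ = ± l` gives the two factors
  have key : ∀ σ : ℝ, σ ^ 2 = l ^ 2 →
      U' 0 + σ * U 0 ≤ Real.exp (-(σ * t)) * (U' t + σ * U t) := fun σ hσ => by
    have hd : ∀ s, HasDerivAt (fun s => Real.exp (-(σ * s)) * (U' s + σ * U s))
        (Real.exp (-(σ * s)) * (mom R ξ (dtD (dtD w)) s - l ^ 2 * U s)) s := fun s => by
      have he : HasDerivAt (fun s => Real.exp (-(σ * s))) (Real.exp (-(σ * s)) * (-σ)) s := by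
        refine HasDerivAt.exp ?_
        exact (((hasDerivAt_id s).const_mul σ).neg).congr_deriv (by simp)
      refine (he.mul ((h2 s).add ((h1 s).const_mul σ))).congr_deriv ?_
      simp only [Pi.add_apply]
      rw [← hσ]
      ring
    have mono : MonotoneOn (fun s => Real.exp (-(σ * s)) * (U' s + σ * U s)) (Set.Icc 0 t) := by
      refine monotoneOn_of_hasDerivWithinAt_nonneg (convex_Icc 0 t)
        (fun s _ => (hd s).continuousAt.continuousWithinAt)
        (fun s _ => (hd s).hasDerivWithinAt) fun s hs' => ?_
      rw [interior_Icc] at hs'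
      exact mul_nonneg (Real.exp_pos _).le (h3 s hs'.1 (hs'.2.trans htT))
    simpa using mono (Set.left_mem_Icc.2 ht0) (Set.right_mem_Icc.2 ht0) ht0
  have k1 := mul_le_mul_of_nonneg_left (key l rfl) (Real.exp_pos (l * t)).le
  have k2 := mul_le_mul_of_nonneg_left (key (-l) (by ring)) (Real.exp_pos (-(l * t))).le
  rw [← mul_assoc, ← Real.exp_add, add_neg_cancel, Real.exp_zero, one_mul] at k1
  rw [← mul_assoc, ← Real.exp_add, show -(l * t) + -(-l * t) = 0 by ring, Real.exp_zero,
    one_mul] at k2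
  have e1 : U' 0 + -l * U 0 = U' 0 - l * U 0 := by ring
  rw [e1] at k2
  linarith

/-- For small `ξ` the exponential moment of the data `g + |ξ| f` is close to `∫ g > 0`. -/
theorem data_near {f g : Spc n → ℝ} (hf : Continuous f) (hfc : HasCompactSupport f)
    (hg : Continuous g) (hgc : HasCompactSupport g) (hpos : 0 < ∫ x, g x) :
    ∃ b > 0, ∀ ξ : Spc n, ‖ξ‖ ≤ b →
      (∫ x, g x) / 2 ≤ (∫ x, g x * Real.exp (inner ℝ ξ x)) +
        ‖ξ‖ * ∫ x, f x * Real.exp (inner ℝ ξ x) := by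
  have hcont : ∀ h : Spc n → ℝ, Continuous h → HasCompactSupport h →
      Continuous fun ξ : Spc n => ∫ x, h x * Real.exp (inner ℝ ξ x) := fun h hh hc => by
    have := continuous_parametric_integral_of_continuous (μ := (volume : Measure (Spc n)))
      (f := fun (ξ x : Spc n) => h x * Real.exp (inner ℝ ξ x)) (by fun_prop) hc
    refine this.congr fun ξ => ?_
    refine setIntegral_eq_integral_of_forall_compl_eq_zero fun x hx => ?_
    rw [image_eq_zero_of_notMem_tsupport hx, zero_mul]
  have hc : Continuous fun ξ : Spc n => (∫ x, g x * Real.exp (inner ℝ ξ x)) +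
        ‖ξ‖ * ∫ x, f x * Real.exp (inner ℝ ξ x) :=
    (hcont g hg hgc).add (continuous_norm.mul (hcont f hf hfc))
  have := hc.tendsto 0
  simp only [inner_zero_left, Real.exp_zero, mul_one, norm_zero, zero_mul, add_zero] at this
  obtain ⟨b, hb, hball⟩ := Metric.eventually_nhds_iff.1
    (this.eventually (lt_mem_nhds (half_lt_self hpos)))
  refine ⟨b / 2, half_pos hb, fun ξ hξ => (hball ?_).le⟩
  rw [dist_zero_right]
  linarith

/-- Uniform lower bound `∫ ∂_t w e^{ξ·x - |ξ|t} ≥ c ε` for all small frequencies. -/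
theorem exists_freq {f g : Spc n → ℝ} (hf : Continuous f) (hfc : HasCompactSupport f)
    (hg : Continuous g) (hgc : HasCompactSupport g) (hpos : 0 < ∫ x, g x) :
    ∃ b > 0, ∀ (ε T R : ℝ) (w : STn n → ℝ), 0 < ε → 0 < T → ContDiff ℝ 2 w → T + 1 ≤ R →
      (∀ z : STn n, 0 ≤ z.1 → z.1 < T → z.1 + 1 < ‖z.2‖ → w z = 0 ∧ dtD w z = 0) →
      (∀ z : STn n, 0 < z.1 → z.1 < T → 0 ≤ boxD w z) →
      (∀ x, w (0, x) = ε * f x) → (∀ x, dtD w (0, x) = ε * g x) →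
      ∀ ξ : Spc n, ‖ξ‖ ≤ b → ∀ t, 0 ≤ t → t < T →
        ε * (∫ x, g x) / 4 ≤ Real.exp (-(‖ξ‖ * t)) * mom R ξ (dtD w) t := by
  obtain ⟨b1, hb1, H1⟩ := data_near hf hfc hg hgc hpos
  obtain ⟨b2, hb2, H2⟩ := data_near (f := fun x => -f x) hf.neg
    (hfc.comp_left (g := fun y : ℝ => -y) neg_zero) hg hgc hpos
  refine ⟨min b1 b2, lt_min hb1 hb2, ?_⟩
  intro ε T R w hε hT hw hR hs hN hw0 hw1 ξ hξ t ht0 htT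
  have h1 := H1 ξ (hξ.trans (min_le_left _ _))
  have h2 := H2 ξ (hξ.trans (min_le_right _ _))
  simp only [neg_mul, integral_neg] at h2
  have full : ∀ v : STn n → ℝ, (∀ x, 1 < ‖x‖ → v (0, x) = 0) →
      mom R ξ v 0 = ∫ x, v (0, x) * Real.exp (inner ℝ ξ x) := fun v hv => by
    refine setIntegral_eq_integral_of_forall_compl_eq_zero fun x hx => ?_
    rw [mem_closedBall_zero_iff, not_le] at hx
    rw [hv x (by linarith), zero_mul]
  have e1 : mom R ξ w 0 = ε * ∫ x, f x * Real.exp (inner ℝ ξ x) := by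
    rw [full w fun x hx => (hs (0, x) le_rfl hT (by simpa using hx)).1, ← integral_const_mul]
    simp_rw [hw0, mul_assoc]
  have e2 : mom R ξ (dtD w) 0 = ε * ∫ x, g x * Real.exp (inner ℝ ξ x) := by
    rw [full (dtD w) fun x hx => (hs (0, x) le_rfl hT (by simpa using hx)).2,
      ← integral_const_mul]
    simp_rw [hw1, mul_assoc]
  have low := mom_dtD_lower hw hR (fun z h h' h'' => (hs z h h' h'').1) hN ξ ht0 htT
  rw [e1, e2] at low
  set I := ∫ x, g x
  set A := ∫ x, g x * Real.exp (inner ℝ ξ x)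
  set B := ∫ x, f x * Real.exp (inner ℝ ξ x)
  have hE : 0 < Real.exp (-(‖ξ‖ * t)) := Real.exp_pos _
  have hEE : Real.exp (-(‖ξ‖ * t)) * Real.exp (‖ξ‖ * t) = 1 := by
    rw [← Real.exp_add, neg_add_cancel, Real.exp_zero]
  have l1 : ε * I / 2 ≤ ε * A + ‖ξ‖ * (ε * B) := by nlinarith
  have l2 : 0 ≤ ε * A - ‖ξ‖ * (ε * B) := by nlinarith
  calc ε * I / 4 ≤ (ε * A + ‖ξ‖ * (ε * B)) / 2 := by linarith
    _ ≤ (Real.exp (-(‖ξ‖ * t)) * Real.exp (‖ξ‖ * t) * (ε * A + ‖ξ‖ * (ε * B)) +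
      Real.exp (-(‖ξ‖ * t)) * (Real.exp (-(‖ξ‖ * t)) * (ε * A - ‖ξ‖ * (ε * B)))) / 2 := by
        rw [hEE]
        have := mul_nonneg hE.le (mul_nonneg hE.le l2)
        linarith
    _ = Real.exp (-(‖ξ‖ * t)) * ((Real.exp (‖ξ‖ * t) * (ε * A + ‖ξ‖ * (ε * B)) +
      (Real.exp (-(‖ξ‖ * t)) * (ε * A - ‖ξ‖ * (ε * B)))) / 2) := by ring
    _ ≤ _ := by gcongr

end

/-! ### A superposition of exponential solutions concentrated on the light cone -/

section
variable {n : ℕ}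

/-- Hölder's inequality with the weight `ψ dx`. -/
theorem holder_ball {h ψ : Spc n → ℝ} (hh : Continuous h) (hψ : Continuous ψ)
    (hψ0 : ∀ x, 0 ≤ ψ x) {r : ℝ} (hr : 1 < r) (R : ℝ) :
    |∫ x in Metric.closedBall (0 : Spc n) R, h x * ψ x| ^ r ≤
      (∫ x in Metric.closedBall (0 : Spc n) R, |h x| ^ r * ψ x) *
        (∫ x in Metric.closedBall (0 : Spc n) R, ψ x) ^ (r - 1) := by
  have hr0 : 0 < r := by linarith
  set s := r / (r - 1) with hs
  have hrs : r.HolderConjugate s := Real.HolderConjugate.conjExponent hr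
  have hs0 : 0 < s := hrs.symm.pos
  have mem : ∀ (k : Spc n → ℝ) (e : ℝ≥0∞), Continuous k →
      MemLp k e (volume.restrict (Metric.closedBall (0 : Spc n) R)) := fun k e hk => by
    obtain ⟨M, hM⟩ := (isCompact_closedBall (0 : Spc n) R).exists_bound_of_continuousOn
      hk.continuousOn
    have : IsFiniteMeasure (volume.restrict (Metric.closedBall (0 : Spc n) R)) :=
      ⟨by simpa using (isCompact_closedBall (0 : Spc n) R).measure_lt_top⟩
    refine MemLp.of_bound hk.aestronglyMeasurable M ?_
    filter_upwards [ae_restrict_mem Metric.isClosed_closedBall.measurableSet] with x hx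
    exact hM x hx
  have c1 : Continuous fun x => ψ x ^ (1 / r) := hψ.rpow_const fun x => Or.inr (by positivity)
  have c2 : Continuous fun x => ψ x ^ (1 / s) := hψ.rpow_const fun x => Or.inr (by positivity)
  have H := integral_mul_le_Lp_mul_Lq_of_nonneg hrs
    (μ := volume.restrict (Metric.closedBall (0 : Spc n) R))
    (f := fun x => |h x| * ψ x ^ (1 / r)) (g := fun x => ψ x ^ (1 / s))
    (Filter.Eventually.of_forall fun x => mul_nonneg (abs_nonneg _) (Real.rpow_nonneg (hψ0 x) _))
    (Filter.Eventually.of_forall fun x => Real.rpow_nonneg (hψ0 x) _)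
    (mem _ _ (hh.abs.mul c1)) (mem _ _ c2)
  have a1 : ∀ x, |h x| * ψ x ^ (1 / r) * ψ x ^ (1 / s) = |h x| * ψ x := fun x => by
    rw [mul_assoc, ← Real.rpow_add_of_nonneg (hψ0 x) (by positivity) (by positivity),
      one_div, one_div, hrs.inv_add_inv_eq_one, Real.rpow_one]
  have a2 : ∀ x, (|h x| * ψ x ^ (1 / r)) ^ r = |h x| ^ r * ψ x := fun x => by
    rw [Real.mul_rpow (abs_nonneg _) (Real.rpow_nonneg (hψ0 x) _), ← Real.rpow_mul (hψ0 x),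
      one_div_mul_cancel hr0.ne', Real.rpow_one]
  have a3 : ∀ x, (ψ x ^ (1 / s)) ^ s = ψ x := fun x => by
    rw [← Real.rpow_mul (hψ0 x), one_div_mul_cancel hs0.ne', Real.rpow_one]
  simp only [a1, a2, a3] at H
  have hX : 0 ≤ ∫ x in Metric.closedBall (0 : Spc n) R, |h x| ^ r * ψ x :=
    integral_nonneg fun x => mul_nonneg (Real.rpow_nonneg (abs_nonneg _) _) (hψ0 x)
  have hY : 0 ≤ ∫ x in Metric.closedBall (0 : Spc n) R, ψ x := integral_nonneg hψ0
  have habs : |∫ x in Metric.closedBall (0 : Spc n) R, h x * ψ x| ≤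
      ∫ x in Metric.closedBall (0 : Spc n) R, |h x| * ψ x := by
    refine (abs_integral_le_integral_abs).trans_eq ?_
    congr 1
    ext x
    rw [abs_mul, abs_of_nonneg (hψ0 x)]
  refine (Real.rpow_le_rpow (abs_nonneg _) (habs.trans H) hr0.le).trans_eq ?_
  rw [Real.mul_rpow (by positivity) (by positivity), ← Real.rpow_mul hX, ← Real.rpow_mul hY,
    one_div_mul_cancel hr0.ne', Real.rpow_one]
  congr 2
  rw [hs]
  field_simp

/-- An anisotropic Gaussian: variance of order one along the unit vector `e` and of order `1/s`
orthogonally to it. -/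
theorem gauss_aniso {s : ℝ} (hs : 0 < s) {e : Spc n} (he : ‖e‖ = 1) :
    Integrable (fun ξ : Spc n =>
      Real.exp (-(s * (‖ξ‖ ^ 2 - (inner ℝ e ξ) ^ 2)) - (inner ℝ e ξ) ^ 2)) ∧
    ∫ ξ : Spc n, Real.exp (-(s * (‖ξ‖ ^ 2 - (inner ℝ e ξ) ^ 2)) - (inner ℝ e ξ) ^ 2) =
      √π * √(π / s) ^ (n - 1) := by
  have hn : 0 < n := by
    rcases Nat.eq_zero_or_pos n with h | h
    · subst h
      rw [Subsingleton.elim e 0, norm_zero] at he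
      norm_num at he
    · exact h
  set i0 : Fin n := ⟨0, hn⟩
  obtain ⟨B, hB⟩ := Orthonormal.exists_orthonormalBasis_extension_of_card_eq (𝕜 := ℝ) (E := Spc n)
    (ι := Fin n) (by simp) (v := fun _ => e) (s := {i0})
    ⟨fun _ => he, fun i j hij => (hij (Subsingleton.elim i j)).elim⟩
  have hBe : B i0 = e := hB i0 rfl
  set c : Fin n → ℝ := fun i => if i = i0 then 1 else s with hc
  have hcpos : ∀ i, 0 < c i := fun i => by simp only [hc]; split_ifs <;> positivity
  have mp := (PiLp.volume_preserving_ofLp (Fin n)).comp B.measurePreserving_repr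
  have emb : MeasurableEmbedding (WithLp.ofLp (p := 2) ∘ B.repr : Spc n → Fin n → ℝ) :=
    (MeasurableEquiv.toLp 2 (Fin n → ℝ)).symm.measurableEmbedding.comp
      B.repr.toHomeomorph.measurableEmbedding
  have hfun : ∀ ξ : Spc n,
      Real.exp (-(s * (‖ξ‖ ^ 2 - (inner ℝ e ξ) ^ 2)) - (inner ℝ e ξ) ^ 2) =
      (fun y : Fin n → ℝ => ∏ i, Real.exp (-c i * y i ^ 2))
        ((WithLp.ofLp (p := 2) ∘ B.repr) ξ) := fun ξ => by
    simp only [Function.comp]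
    rw [← Real.exp_sum]
    congr 1
    have h1 : ‖ξ‖ ^ 2 = ∑ i, (B.repr ξ i) ^ 2 := by
      rw [← B.repr.norm_map, EuclideanSpace.norm_sq_eq]
      simp
    have h2 : inner ℝ e ξ = B.repr ξ i0 := by rw [B.repr_apply_apply, hBe]
    rw [h1, h2, ← Finset.add_sum_erase _ _ (Finset.mem_univ i0),
      ← Finset.add_sum_erase _ (fun i => -c i * _) (Finset.mem_univ i0)]
    have h3 : ∑ i ∈ Finset.univ.erase i0, -c i * (B.repr ξ i) ^ 2 =
        -s * ∑ i ∈ Finset.univ.erase i0, (B.repr ξ i) ^ 2 := by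
      rw [Finset.mul_sum]
      refine Finset.sum_congr rfl fun i hi => ?_
      simp [hc, Finset.ne_of_mem_erase hi]
    rw [h3]
    simp only [hc, if_true]
    ring
  have hint : Integrable (fun y : Fin n → ℝ => ∏ i, Real.exp (-c i * y i ^ 2)) :=
    Integrable.fintype_prod fun i => integrable_exp_neg_mul_sq (hcpos i)
  constructor
  · simp_rw [hfun]
    exact mp.integrable_comp_of_integrable hint
  · simp_rw [hfun]
    rw [mp.integral_comp emb (fun y : Fin n → ℝ => ∏ i, Real.exp (-c i * y i ^ 2)),
      integral_fintype_prod_volume_eq_prod (fun i (y : ℝ) => Real.exp (-c i * y ^ 2))]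
    simp_rw [integral_gaussian]
    rw [← Finset.mul_prod_erase _ _ (Finset.mem_univ i0)]
    have : ∀ i ∈ Finset.univ.erase i0, √(π / c i) = √(π / s) := fun i hi => by
      simp [hc, Finset.ne_of_mem_erase hi]
    rw [Finset.prod_congr rfl this, Finset.prod_const, Finset.card_erase_of_mem (Finset.mem_univ _)]
    simp [hc]

end

section
variable {n : ℕ}

/-- The frequency shell `b/2 ≤ |ξ| ≤ b`. -/
def shell (n : ℕ) (b : ℝ) : Set (Spc n) := Metric.closedBall 0 b \ Metric.ball 0 (b / 2)

theorem mem_shell {b : ℝ} {ξ : Spc n} : ξ ∈ shell n b ↔ ‖ξ‖ ≤ b ∧ b / 2 ≤ ‖ξ‖ := by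
  simp [shell]

theorem isCompact_shell (b : ℝ) : IsCompact (shell n b) :=
  (isCompact_closedBall _ _).diff Metric.isOpen_ball

theorem shell_volume_pos (hn : 2 ≤ n) {b : ℝ} (hb : 0 < b) :
    0 < volume.real (shell n b) := by
  have : Nonempty (Fin n) := ⟨⟨0, by omega⟩⟩
  have hsub : Metric.ball (EuclideanSpace.single ⟨0, by omega⟩ (3 * b / 4) : Spc n) (b / 4) ⊆
      shell n b := fun ξ hξ => by
    rw [mem_ball_iff_norm] at hξ
    set e : Spc n := EuclideanSpace.single ⟨0, by omega⟩ (3 * b / 4)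
    have he : ‖e‖ = 3 * b / 4 := by
      rw [PiLp.norm_single, Real.norm_of_nonneg (by positivity)]
    have h1 := norm_sub_norm_le ξ e
    have h2 := norm_sub_norm_le e ξ
    rw [norm_sub_rev] at h2
    rw [mem_shell]
    constructor <;> linarith
  refine ENNReal.toReal_pos ?_ (isCompact_shell b).measure_lt_top.ne
  exact pos_iff_ne_zero.1
    ((Metric.measure_ball_pos volume _ (by positivity)).trans_le (measure_mono hsub))

/-- The superposition `∫_{b/2 ≤ |ξ| ≤ b} e^{ξ·x - |ξ|t} dξ` of exponential solutions of the wave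
equation. -/
noncomputable def coneW (b t : ℝ) (x : Spc n) : ℝ :=
  ∫ ξ in shell n b, Real.exp (inner ℝ ξ x - ‖ξ‖ * t)

theorem coneW_nonneg (b t : ℝ) (x : Spc n) : 0 ≤ coneW b t x :=
  integral_nonneg fun _ => (Real.exp_pos _).le

theorem continuous_coneW (b t : ℝ) : Continuous (coneW (n := n) b t) :=
  continuous_parametric_integral_of_continuous (μ := (volume : Measure (Spc n)))
    (f := fun (x ξ : Spc n) => Real.exp (inner ℝ ξ x - ‖ξ‖ * t)) (by fun_prop) (isCompact_shell b)

/-- The phase `|ξ|R - ξ·x` controls both the distance of `x` to the sphere of radius `R` and the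
part of `ξ` orthogonal to `x`. Here `L = |ξ|`, `ρ = |x|` and `y` is the component of `ξ` along
`x`. -/
theorem phase_bound {b L R ρ y : ℝ} (hb : 0 < b) (hL1 : b / 2 ≤ L) (hL2 : L ≤ b) (hρ : 0 ≤ ρ)
    (hρR : ρ ≤ R) (hy : |y| ≤ L) :
    b / 4 * (R - ρ) + R / (4 * b) * (L ^ 2 - y ^ 2) ≤ L * R - ρ * y := by
  obtain ⟨hy1, hy2⟩ := abs_le.1 hy
  have h0 : 0 ≤ L ^ 2 - y ^ 2 := by nlinarith
  have h1 : (L ^ 2 - y ^ 2) / (4 * b) ≤ L - y := by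
    rw [div_le_iff₀ (by positivity)]
    nlinarith
  have h2 : (L ^ 2 - y ^ 2) / (4 * b) ≤ b / 4 := by
    rw [div_le_iff₀ (by positivity)]
    nlinarith
  have h3 : R / (4 * b) * (L ^ 2 - y ^ 2) = R * ((L ^ 2 - y ^ 2) / (4 * b)) := by ring
  rw [h3]
  nlinarith [mul_le_mul_of_nonneg_left h1 hρ, mul_le_mul_of_nonneg_left h2 (sub_nonneg.2 hρR),
    mul_le_mul_of_nonneg_left hL1 (sub_nonneg.2 hρR)]

/-- Pointwise decay of `coneW`: it has size `t^{-(n-1)/2}` near the light cone and decays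
exponentially away from it. By `phase_bound` the frequencies are dominated by a Gaussian of width
`t^{-1/2}` in the `n - 1` directions orthogonal to `x`. -/
theorem coneW_bound (hn : 2 ≤ n) {b : ℝ} (hb : 0 < b) :
    ∃ C > 0, ∀ t : ℝ, 0 ≤ t → ∀ x : Spc n, ‖x‖ ≤ t + 1 →
      coneW b t x ≤ C * (t + 1) ^ (-((n : ℝ) - 1) / 2) * Real.exp (-(b / 4 * (t + 1 - ‖x‖))) := by
  refine ⟨Real.exp (b + b ^ 2) * √π * √(π * (4 * b)) ^ (n - 1), by positivity, ?_⟩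
  intro t ht x hx
  set R := t + 1 with hR
  have hRpos : 0 < R := by positivity
  obtain ⟨e, he, hxe⟩ : ∃ e : Spc n, ‖e‖ = 1 ∧ x = ‖x‖ • e := by
    by_cases h0 : x = 0
    · exact ⟨EuclideanSpace.single ⟨0, by omega⟩ 1, by simp, by simp [h0]⟩
    · have h0' : ‖x‖ ≠ 0 := norm_ne_zero_iff.2 h0
      exact ⟨‖x‖⁻¹ • x, by simp [norm_smul, h0'], by simp [smul_smul, h0']⟩
  obtain ⟨hint, hval⟩ := gauss_aniso (n := n) (s := R / (4 * b)) (by positivity) he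
  have hle : ∀ ξ ∈ shell n b, Real.exp (inner ℝ ξ x - ‖ξ‖ * t) ≤
      Real.exp (b + b ^ 2 - b / 4 * (R - ‖x‖)) *
      Real.exp (-(R / (4 * b) * (‖ξ‖ ^ 2 - (inner ℝ e ξ) ^ 2)) - (inner ℝ e ξ) ^ 2) := by
    intro ξ hξ
    obtain ⟨h1, h2⟩ := mem_shell.1 hξ
    rw [← Real.exp_add]
    refine Real.exp_le_exp.2 ?_
    have hin : inner ℝ ξ x = ‖x‖ * inner ℝ e ξ := by
      conv_lhs => rw [hxe]
      rw [inner_smul_right, real_inner_comm]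
    have hy : |inner ℝ e ξ| ≤ ‖ξ‖ := by simpa [he] using abs_real_inner_le_norm e ξ
    have := phase_bound hb h2 h1 (norm_nonneg x) hx hy
    have hy2 : (inner ℝ e ξ) ^ 2 ≤ b ^ 2 := by
      rw [← sq_abs]
      exact pow_le_pow_left₀ (abs_nonneg _) (hy.trans h1) 2
    rw [hin]
    have ht' : ‖ξ‖ * t = ‖ξ‖ * R - ‖ξ‖ := by rw [hR]; ring
    rw [ht']
    linarith
  have key : coneW b t x ≤ Real.exp (b + b ^ 2 - b / 4 * (R - ‖x‖)) *
      (√π * √(π / (R / (4 * b))) ^ (n - 1)) := by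
    rw [← hval, ← integral_const_mul]
    have hint' := hint.const_mul (Real.exp (b + b ^ 2 - b / 4 * (R - ‖x‖)))
    refine (setIntegral_mono_on ?_ hint'.integrableOn (isCompact_shell b).measurableSet hle).trans
      (setIntegral_le_integral hint' ?_)
    · exact (Continuous.continuousOn (by fun_prop)).integrableOn_compact (isCompact_shell b)
    · exact Filter.Eventually.of_forall fun ξ => by positivity
  refine key.trans_eq ?_
  have e1 : √(π / (R / (4 * b))) ^ (n - 1) =
      √(π * (4 * b)) ^ (n - 1) * R ^ (-((n : ℝ) - 1) / 2) := by
    have : π / (R / (4 * b)) = π * (4 * b) * R⁻¹ := by field_simp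
    rw [this, Real.sqrt_mul (by positivity), mul_pow]
    congr 1
    rw [Real.sqrt_eq_rpow, ← Real.rpow_natCast, ← Real.rpow_mul (by positivity),
      Real.inv_rpow hRpos.le, ← Real.rpow_neg hRpos.le, Nat.cast_sub (by omega)]
    congr 1
    push_cast
    ring
  rw [e1, sub_eq_add_neg, Real.exp_add]
  ring

/-- A weight concentrated in a layer of bounded width at the boundary sphere of the ball of radius
`R` has mass of order `R^{n-1}`. -/
theorem radial_bound (hn : 2 ≤ n) {c : ℝ} (hc : 0 < c) :
    ∃ C > 0, ∀ R : ℝ, 0 < R →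
      ∫ x in Metric.closedBall (0 : Spc n) R, Real.exp (-(c * (R - ‖x‖))) ≤
        C * R ^ ((n : ℝ) - 1) := by
  have : Nonempty (Fin n) := ⟨⟨0, by omega⟩⟩
  have hv : 0 < volume.real (Metric.ball (0 : Spc n) 1) :=
    ENNReal.toReal_pos (Metric.measure_ball_pos volume _ one_pos).ne' measure_ball_lt_top.ne
  refine ⟨n * volume.real (Metric.ball (0 : Spc n) 1) * (1 / c),
    by have : (0 : ℝ) < n := by exact_mod_cast (by omega : 0 < n)
       positivity, fun R hR => ?_⟩
  have e1 : ∫ x in Metric.closedBall (0 : Spc n) R, Real.exp (-(c * (R - ‖x‖))) =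
      ∫ x : Spc n, (Set.Iic R).indicator (fun y => Real.exp (-(c * (R - y)))) ‖x‖ := by
    rw [← integral_indicator Metric.isClosed_closedBall.measurableSet]
    congr 1
    ext x
    simp [Set.indicator]
  rw [e1, integral_fun_norm_addHaar]
  simp only [finrank_euclideanSpace, Fintype.card_fin, nsmul_eq_mul, smul_eq_mul]
  have e2 : ∫ y in Set.Ioi (0 : ℝ), y ^ (n - 1) *
      (Set.Iic R).indicator (fun y => Real.exp (-(c * (R - y)))) y ≤
      R ^ ((n : ℝ) - 1) * (1 / c) := by
    have s1 : ∀ y : ℝ, y ^ (n - 1) * (Set.Iic R).indicator (fun y => Real.exp (-(c * (R - y)))) y =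
        (Set.Iic R).indicator (fun y => y ^ (n - 1) * Real.exp (-(c * (R - y)))) y := fun y => by
      simp [Set.indicator]
    simp_rw [s1]
    rw [setIntegral_indicator measurableSet_Iic, Set.Ioi_inter_Iic,
      ← intervalIntegral.integral_of_le hR.le]
    have hRn : R ^ ((n : ℝ) - 1) = R ^ (n - 1) := by
      rw [← Real.rpow_natCast, Nat.cast_sub (by omega), Nat.cast_one]
    have prim : ∫ y in (0 : ℝ)..R, Real.exp (-(c * (R - y))) ≤ 1 / c := by
      have hd : ∀ y ∈ Set.uIcc 0 R, HasDerivAt (fun y => Real.exp (-(c * (R - y))) / c)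
          (Real.exp (-(c * (R - y)))) y := fun y _ => by
        have h1 : HasDerivAt (fun y => -(c * (R - y))) c y :=
          ((((hasDerivAt_id y).const_sub R).const_mul c).neg).congr_deriv (by simp)
        exact (h1.exp.div_const c).congr_deriv (by field_simp)
      rw [intervalIntegral.integral_eq_sub_of_hasDerivAt hd
        (Continuous.intervalIntegrable (by fun_prop) _ _)]
      have : 0 ≤ Real.exp (-(c * (R - 0))) / c := by positivity
      simp only [sub_self, mul_zero, neg_zero, Real.exp_zero]
      linarith
    calc ∫ y in (0 : ℝ)..R, y ^ (n - 1) * Real.exp (-(c * (R - y)))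
        ≤ ∫ y in (0 : ℝ)..R, R ^ (n - 1) * Real.exp (-(c * (R - y))) := by
          refine intervalIntegral.integral_mono_on hR.le
            (Continuous.intervalIntegrable (by fun_prop) _ _)
            (Continuous.intervalIntegrable (by fun_prop) _ _) fun y hy => ?_
          gcongr
          · exact hy.1
          · exact hy.2
      _ ≤ R ^ ((n : ℝ) - 1) * (1 / c) := by
          rw [intervalIntegral.integral_const_mul, hRn]
          gcongr
  calc _ ≤ n * (volume.real (Metric.ball (0 : Spc n) 1) * (R ^ ((n : ℝ) - 1) * (1 / c))) := by
        gcongr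
    _ = _ := by ring

end

section
variable {n : ℕ}

theorem shrink_ball {f : Spc n → ℝ} {ρ R : ℝ} (hR : ρ ≤ R) (hf : ∀ x, ρ < ‖x‖ → f x = 0) :
    ∫ x in Metric.closedBall (0 : Spc n) R, f x = ∫ x in Metric.closedBall (0 : Spc n) ρ, f x :=
  setIntegral_eq_of_subset_of_forall_sdiff_eq_zero Metric.isClosed_closedBall.measurableSet
    (Metric.closedBall_subset_closedBall hR) fun x hx => hf x (by simpa using hx.2)

theorem integral_mul_coneW {h : Spc n → ℝ} (hh : Continuous h) (b t ρ : ℝ) :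
    ∫ x in Metric.closedBall (0 : Spc n) ρ, h x * coneW b t x =
      ∫ ξ in shell n b, Real.exp (-(‖ξ‖ * t)) *
        ∫ x in Metric.closedBall (0 : Spc n) ρ, h x * Real.exp (inner ℝ ξ x) := by
  simp only [coneW, ← integral_const_mul]
  rw [integral_integral_swap]
  · congr 1
    ext ξ
    congr 1
    ext x
    rw [sub_eq_add_neg, Real.exp_add]
    ring
  · have hc : Continuous (Function.uncurry fun (x ξ : Spc n) =>
        h x * Real.exp (inner ℝ ξ x - ‖ξ‖ * t)) := by
      unfold Function.uncurry
      fun_prop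
    rw [Measure.prod_restrict]
    exact hc.continuousOn.integrableOn_compact
      ((isCompact_closedBall _ _).prod (isCompact_shell b))

/-- A function `h` supported in `|x| ≤ t + 1` whose exponential moments, normalised by `e^{-|ξ|t}`,
are at least `J` for all `|ξ| ≤ b` has `∫ |h|^r ≳ J^r (t+1)^{(n-3)/2}` for `r = (n+1)/(n-1)`.
Averaging over the shell turns the moments into `∫ h · coneW`, and Hölder's inequality uses both the
pointwise size and the mass of `coneW`; a single frequency would not give this power of `t`. -/
theorem integral_rpow_lower (hn : 2 ≤ n) {b : ℝ} (hb : 0 < b) :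
    ∃ c > 0, ∀ (t R J : ℝ) (h : Spc n → ℝ), 0 ≤ t → t + 1 ≤ R → 0 < J → Continuous h →
      (∀ x, t + 1 < ‖x‖ → h x = 0) →
      (∀ ξ : Spc n, ‖ξ‖ ≤ b → J ≤ Real.exp (-(‖ξ‖ * t)) *
        ∫ x in Metric.closedBall (0 : Spc n) R, h x * Real.exp (inner ℝ ξ x)) →
      c * J ^ (((n : ℝ) + 1) / ((n : ℝ) - 1)) * (t + 1) ^ (((n : ℝ) - 3) / 2) ≤
        ∫ x in Metric.closedBall (0 : Spc n) R, |h x| ^ (((n : ℝ) + 1) / ((n : ℝ) - 1)) := by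
  obtain ⟨C, hC, hCb⟩ := coneW_bound hn hb
  obtain ⟨D, hD, hDb⟩ := radial_bound hn (c := b / 4) (by positivity)
  have hV := shell_volume_pos hn hb
  set V := volume.real (shell n b) with hVdef
  have hn' : (2 : ℝ) ≤ n := by exact_mod_cast hn
  obtain ⟨N, hN⟩ : ∃ N : ℝ, N = (n : ℝ) - 1 := ⟨_, rfl⟩
  have hN1 : 1 ≤ N := by linarith
  have hNpos : 0 < N := by linarith
  set r := ((n : ℝ) + 1) / ((n : ℝ) - 1) with hr
  have hr1 : r - 1 = 2 / N := by rw [hr, ← hN, show (n : ℝ) = N + 1 by linarith]; field_simp; ring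
  have hr1' : 1 < r := by
    have : 0 < 2 / N := by positivity
    linarith
  refine ⟨V ^ r / (C * (C * D) ^ (2 / N)), by positivity, ?_⟩
  intro t R J h ht hR hJ hh hs hmom
  set ρ := t + 1 with hρ
  have hρ0 : 0 < ρ := by positivity
  have hr0 : r ≠ 0 := by linarith
  rw [shrink_ball hR (fun x hx => by rw [hs x hx, abs_zero, Real.zero_rpow hr0])]
  have hmom' : ∀ ξ ∈ shell n b, J ≤ Real.exp (-(‖ξ‖ * t)) *
        ∫ x in Metric.closedBall (0 : Spc n) ρ, h x * Real.exp (inner ℝ ξ x) := fun ξ hξ => by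
    rw [← shrink_ball hR (fun x hx => by rw [hs x hx, zero_mul])]
    exact hmom ξ (mem_shell.1 hξ).1
  have h1 : J * V ≤ ∫ x in Metric.closedBall (0 : Spc n) ρ, h x * coneW b t x := by
    rw [integral_mul_coneW hh]
    have hconst : ∫ _ in shell n b, J = J * V := by simp [hVdef, mul_comm, Measure.real]
    rw [← hconst]
    have hcm : Continuous fun ξ : Spc n =>
        ∫ x in Metric.closedBall (0 : Spc n) ρ, h x * Real.exp (inner ℝ ξ x) :=
      continuous_parametric_integral_of_continuous (μ := (volume : Measure (Spc n)))
        (f := fun (ξ x : Spc n) => h x * Real.exp (inner ℝ ξ x)) (by fun_prop)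
        (isCompact_closedBall _ _)
    refine setIntegral_mono_on ?_ ?_ (isCompact_shell b).measurableSet hmom'
    · exact continuousOn_const.integrableOn_compact (isCompact_shell b)
    · exact (Continuous.continuousOn (by fun_prop)).integrableOn_compact (isCompact_shell b)
  have hcW := continuous_coneW (n := n) b t
  have h2 := holder_ball hh hcW (coneW_nonneg b t) hr1' ρ
  set I := ∫ x in Metric.closedBall (0 : Spc n) ρ, |h x| ^ r with hI
  have hI0 : 0 ≤ I := integral_nonneg fun x => Real.rpow_nonneg (abs_nonneg _) _
  have hcr : Continuous fun x => |h x| ^ r := hh.abs.rpow_const fun x => Or.inr (by linarith)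
  have hWle : ∀ x ∈ Metric.closedBall (0 : Spc n) ρ, coneW b t x ≤
      C * ρ ^ (-N / 2) * Real.exp (-(b / 4 * (ρ - ‖x‖))) := fun x hx => by
    rw [hN]
    exact hCb t ht x (by simpa using hx)
  have h3 : ∫ x in Metric.closedBall (0 : Spc n) ρ, |h x| ^ r * coneW b t x ≤
      C * ρ ^ (-N / 2) * I := by
    rw [hI, ← integral_const_mul]
    refine setIntegral_mono_on (integrableOn_ball_of_continuous (by fun_prop) ρ)
      (integrableOn_ball_of_continuous (by fun_prop) ρ)
      Metric.isClosed_closedBall.measurableSet fun x hx => ?_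
    rw [mul_comm]
    refine mul_le_mul_of_nonneg_right ((hWle x hx).trans ?_) (Real.rpow_nonneg (abs_nonneg _) _)
    refine mul_le_of_le_one_right (by positivity) (Real.exp_le_one_iff.2 ?_)
    have : ‖x‖ ≤ ρ := by simpa using hx
    have : 0 ≤ b / 4 * (ρ - ‖x‖) := mul_nonneg (by positivity) (by linarith)
    linarith
  have h4 : ∫ x in Metric.closedBall (0 : Spc n) ρ, coneW b t x ≤ C * D * ρ ^ (N / 2) := by
    calc ∫ x in Metric.closedBall (0 : Spc n) ρ, coneW b t x
        ≤ ∫ x in Metric.closedBall (0 : Spc n) ρ,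
            C * ρ ^ (-N / 2) * Real.exp (-(b / 4 * (ρ - ‖x‖))) :=
          setIntegral_mono_on (integrableOn_ball_of_continuous hcW ρ)
            (integrableOn_ball_of_continuous (by fun_prop) ρ)
            Metric.isClosed_closedBall.measurableSet hWle
      _ ≤ C * ρ ^ (-N / 2) * (D * ρ ^ N) := by
          rw [integral_const_mul, hN]
          exact mul_le_mul_of_nonneg_left (hDb ρ hρ0) (by positivity)
      _ = C * D * (ρ ^ (-N / 2) * ρ ^ N) := by ring
      _ = _ := by rw [← Real.rpow_add hρ0]; congr 2; ring
  have hW0 : 0 ≤ ∫ x in Metric.closedBall (0 : Spc n) ρ, coneW b t x :=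
    integral_nonneg (coneW_nonneg b t)
  have h5 : (∫ x in Metric.closedBall (0 : Spc n) ρ, coneW b t x) ^ (r - 1) ≤
      (C * D) ^ (2 / N) * ρ := by
    rw [hr1]
    refine (Real.rpow_le_rpow hW0 h4 (by positivity)).trans_eq ?_
    rw [Real.mul_rpow (by positivity) (by positivity), ← Real.rpow_mul hρ0.le]
    congr 1
    rw [show N / 2 * (2 / N) = 1 by field_simp, Real.rpow_one]
  have h6 : (J * V) ^ r ≤ C * ρ ^ (-N / 2) * I * ((C * D) ^ (2 / N) * ρ) := by
    refine (Real.rpow_le_rpow (by positivity) (h1.trans (le_abs_self _)) (by linarith)).trans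
      (h2.trans ?_)
    exact mul_le_mul h3 h5 (Real.rpow_nonneg hW0 _) (by positivity)
  rw [Real.mul_rpow hJ.le hV.le] at h6
  have h7 : ρ ^ (((n : ℝ) - 3) / 2) * (ρ ^ (-N / 2) * ρ) = 1 := by
    nth_rewrite 3 [← Real.rpow_one ρ]
    rw [← Real.rpow_add hρ0, ← Real.rpow_add hρ0]
    rw [show ((n : ℝ) - 3) / 2 + (-N / 2 + 1) = 0 by rw [hN]; ring, Real.rpow_zero]
  rw [div_mul_eq_mul_div, div_mul_eq_mul_div, div_le_iff₀ (by positivity)]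
  calc V ^ r * J ^ r * ρ ^ (((n : ℝ) - 3) / 2) = J ^ r * V ^ r * ρ ^ (((n : ℝ) - 3) / 2) := by ring
    _ ≤ C * ρ ^ (-N / 2) * I * ((C * D) ^ (2 / N) * ρ) * ρ ^ (((n : ℝ) - 3) / 2) := by gcongr
    _ = I * (C * (C * D) ^ (2 / N)) * (ρ ^ (((n : ℝ) - 3) / 2) * (ρ ^ (-N / 2) * ρ)) := by ring
    _ = _ := by rw [h7, mul_one]

end

/-! ### The differential inequalities for the spatial averages -/

section
variable {n : ℕ}

/-- Hölder's inequality on a ball: the support radius `ρ` costs the factor `ρ^{-n(r-1)}`. -/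
theorem integral_rpow_lower_avg (hn : 2 ≤ n) {r : ℝ} (hr : 1 < r) :
    ∃ c > 0, ∀ (ρ R : ℝ) (h : Spc n → ℝ), 0 < ρ → ρ ≤ R → Continuous h →
      (∀ x, ρ < ‖x‖ → h x = 0) →
      c * ρ ^ (-((n : ℝ) * (r - 1))) * |∫ x in Metric.closedBall (0 : Spc n) R, h x| ^ r ≤
        ∫ x in Metric.closedBall (0 : Spc n) R, |h x| ^ r := by
  have : Nonempty (Fin n) := ⟨⟨0, by omega⟩⟩
  have hv : 0 < volume.real (Metric.ball (0 : Spc n) 1) :=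
    ENNReal.toReal_pos (Metric.measure_ball_pos volume _ one_pos).ne' measure_ball_lt_top.ne
  set V := volume.real (Metric.ball (0 : Spc n) 1)
  refine ⟨(V ^ (r - 1))⁻¹, by positivity, ?_⟩
  intro ρ R h hρ hR hh hs
  have hr0 : r ≠ 0 := by linarith
  rw [shrink_ball hR hs, shrink_ball hR (fun x hx => by rw [hs x hx, abs_zero, Real.zero_rpow hr0])]
  have H := holder_ball hh (ψ := fun _ => (1 : ℝ)) continuous_const (fun _ => zero_le_one) hr ρ
  simp only [mul_one] at H
  have hvol : ∫ _ in Metric.closedBall (0 : Spc n) ρ, (1 : ℝ) = ρ ^ (n : ℝ) * V := by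
    simp [V, Measure.addHaar_real_closedBall (volume : Measure (Spc n)) _ hρ.le]
  rw [hvol, Real.mul_rpow (by positivity) hv.le, ← Real.rpow_mul hρ.le] at H
  rw [Real.rpow_neg hρ.le, ← mul_inv, inv_mul_le_iff₀ (by positivity)]
  exact H.trans_eq (by ring)

/-- The averages `F = ∫ u`, `G = ∫ v` of a solution satisfy a coupled system of differential
inequalities in which the derivative nonlinearity contributes a forcing term bounded below by
`ε^{(n+1)/(n-1)} (1+t)^{(n-3)/2}`. -/
theorem moment_system (hn : 2 ≤ n) {p q : ℝ} (hp : 1 < p) (hq : 1 < q)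
    {f₁ g₁ f₂ g₂ : Spc n → ℝ}
    (hf₁ : Continuous f₁) (hf₁c : HasCompactSupport f₁)
    (hg₁ : Continuous g₁) (hg₁c : HasCompactSupport g₁)
    (hg₁pos : 0 < ∫ x, g₁ x) :
    ∃ c > (0 : ℝ), ∀ ε : ℝ, 0 < ε → ∀ T : ℝ, 1 < T →
      ∀ u v : STn n → ℝ, ContDiff ℝ 2 u → ContDiff ℝ 2 v →
      (∀ z : STn n, 0 < z.1 → z.1 < T → boxD u z = |v z| ^ p) →
      (∀ z : STn n, 0 < z.1 → z.1 < T →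
        boxD v z = |u z| ^ q + |dtD u z| ^ (((n : ℝ) + 1) / ((n : ℝ) - 1))) →
      (∀ x, u (0, x) = ε * f₁ x) → (∀ x, dtD u (0, x) = ε * g₁ x) →
      (∀ x, v (0, x) = ε * f₂ x) → (∀ x, dtD v (0, x) = ε * g₂ x) →
      (∀ z : STn n, 0 ≤ z.1 → z.1 < T → z.1 + 1 < ‖z.2‖ →
        u z = 0 ∧ v z = 0 ∧ dtD u z = 0 ∧ dtD v z = 0) →
      ∃ F F' F'' G G' G'' : ℝ → ℝ,
        (∀ t, HasDerivAt F (F' t) t) ∧ (∀ t, HasDerivAt F' (F'' t) t) ∧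
        (∀ t, HasDerivAt G (G' t) t) ∧ (∀ t, HasDerivAt G' (G'' t) t) ∧
        F 0 = ε * ∫ x, f₁ x ∧ F' 0 = ε * ∫ x, g₁ x ∧
        G 0 = ε * ∫ x, f₂ x ∧ G' 0 = ε * ∫ x, g₂ x ∧
        (∀ t, 0 < t → t < T → c * (t + 1) ^ (-((n : ℝ) * (p - 1))) * |G t| ^ p ≤ F'' t) ∧
        (∀ t, 0 < t → t < T → c * (t + 1) ^ (-((n : ℝ) * (q - 1))) * |F t| ^ q ≤ G'' t) ∧
        (∀ t, 0 < t → t < T →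
          c * ε ^ (((n : ℝ) + 1) / ((n : ℝ) - 1)) * (t + 1) ^ (((n : ℝ) - 3) / 2) ≤ G'' t) := by
  obtain ⟨c₁, hc₁, H₁⟩ := integral_rpow_lower_avg hn hp
  obtain ⟨c₂, hc₂, H₂⟩ := integral_rpow_lower_avg hn hq
  obtain ⟨b, hb, Hb⟩ := exists_freq hf₁ hf₁c hg₁ hg₁c hg₁pos
  obtain ⟨c₃, hc₃, H₃⟩ := integral_rpow_lower hn hb
  have hn' : (2 : ℝ) ≤ n := by exact_mod_cast hn
  set r := ((n : ℝ) + 1) / ((n : ℝ) - 1) with hr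
  have hr0 : 0 < r := div_pos (by linarith) (by linarith)
  set K := (∫ x, g₁ x) / 4 with hK
  have hK0 : 0 < K := by positivity
  refine ⟨min c₁ (min c₂ (c₃ * K ^ r)), by positivity, ?_⟩
  intro ε hε T hT u v hu hv hbu hbv hu0 hu1 hv0 hv1 hs
  -- any radius exceeding `t + 1` for all `t < T` makes the truncated moments full integrals
  set R := T + 2 with hR
  have mom0 : ∀ (w : STn n → ℝ) t, mom R 0 w t =
      ∫ x in Metric.closedBall (0 : Spc n) R, w (t, x) := fun w t => by simp [mom]
  have hdu : ContDiff ℝ 1 (dtD u) := contDiff_dirD_s1 (by norm_num) hu _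
  have hdv : ContDiff ℝ 1 (dtD v) := contDiff_dirD_s1 (by norm_num) hv _
  have init : ∀ (w : STn n → ℝ) (k : Spc n → ℝ), (∀ x, w (0, x) = ε * k x) →
      (∀ x, 1 < ‖x‖ → w (0, x) = 0) → mom R 0 w 0 = ε * ∫ x, k x := fun w k hw hw0 => by
    rw [mom0, setIntegral_eq_integral_of_forall_compl_eq_zero, ← integral_const_mul]
    · simp_rw [hw]
    · intro x hx
      refine hw0 x ?_
      have : R < ‖x‖ := by simpa using hx
      linarith
  have hs0 : ∀ x : Spc n, 1 < ‖x‖ →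
      u (0, x) = 0 ∧ v (0, x) = 0 ∧ dtD u (0, x) = 0 ∧ dtD v (0, x) = 0 := fun x hx =>
    hs (0, x) le_rfl (by simp; linarith) (by simpa using hx)
  have hFF : ∀ t, 0 < t → t < T → mom R 0 (dtD (dtD u)) t =
      ∫ x in Metric.closedBall (0 : Spc n) R, |v (t, x)| ^ p := fun t h0 h1 => by
    rw [mom_dtD_dtD hu (by linarith) (fun x hx => (hs (t, x) h0.le h1 hx).1) 0, mom0 (boxD u)]
    simp [hbu (t, _) h0 h1]
  have hGG : ∀ t, 0 < t → t < T → mom R 0 (dtD (dtD v)) t =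
      (∫ x in Metric.closedBall (0 : Spc n) R, |u (t, x)| ^ q) +
      ∫ x in Metric.closedBall (0 : Spc n) R, |dtD u (t, x)| ^ r := fun t h0 h1 => by
    have i1 : Continuous fun x => |u (t, x)| ^ q :=
      (hu.continuous.comp (by fun_prop : Continuous fun x : Spc n => (t, x))).abs.rpow_const
        fun x => Or.inr (by linarith)
    have i2 : Continuous fun x => |dtD u (t, x)| ^ r :=
      (hdu.continuous.comp (by fun_prop : Continuous fun x : Spc n => (t, x))).abs.rpow_const
        fun x => Or.inr hr0.le
    rw [mom_dtD_dtD hv (by linarith) (fun x hx => (hs (t, x) h0.le h1 hx).2.1) 0, mom0 (boxD v),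
      ← integral_add (integrableOn_ball_of_continuous i1 R) (integrableOn_ball_of_continuous i2 R)]
    simp [hbv (t, _) h0 h1]
  have nn : ∀ (k : Spc n → ℝ) (s : ℝ),
      0 ≤ ∫ x in Metric.closedBall (0 : Spc n) R, |k x| ^ s := fun k s =>
    integral_nonneg fun x => Real.rpow_nonneg (abs_nonneg _) _
  refine ⟨mom R 0 u, mom R 0 (dtD u), mom R 0 (dtD (dtD u)), mom R 0 v, mom R 0 (dtD v),
    mom R 0 (dtD (dtD v)), hasDerivAt_mom (hu.of_le (by norm_num)) R 0, hasDerivAt_mom hdu R 0,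
    hasDerivAt_mom (hv.of_le (by norm_num)) R 0, hasDerivAt_mom hdv R 0,
    init u f₁ hu0 fun x hx => (hs0 x hx).1, init _ g₁ hu1 fun x hx => (hs0 x hx).2.2.1,
    init v f₂ hv0 fun x hx => (hs0 x hx).2.1, init _ g₂ hv1 fun x hx => (hs0 x hx).2.2.2,
    fun t h0 h1 => ?_, fun t h0 h1 => ?_, fun t h0 h1 => ?_⟩
  · rw [hFF t h0 h1, mom0]
    refine le_trans ?_ (H₁ (t + 1) R (fun x => v (t, x)) (by linarith) (by linarith)
      (hv.continuous.comp (by fun_prop)) fun x hx => (hs (t, x) h0.le h1 hx).2.1)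
    gcongr
    exact min_le_left _ _
  · rw [hGG t h0 h1, mom0]
    refine le_trans (le_trans ?_ (H₂ (t + 1) R (fun x => u (t, x)) (by linarith) (by linarith)
      (hu.continuous.comp (by fun_prop)) fun x hx => (hs (t, x) h0.le h1 hx).1))
      (le_add_of_nonneg_right (nn _ _))
    gcongr
    exact (min_le_right _ _).trans (min_le_left _ _)
  · rw [hGG t h0 h1]
    refine le_trans (le_trans ?_ (H₃ t R (ε * K) (fun x => dtD u (t, x)) h0.le (by linarith)
      (by positivity) (hdu.continuous.comp (by fun_prop))
      (fun x hx => (hs (t, x) h0.le h1 hx).2.2.1) fun ξ hξ => ?_))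
      (le_add_of_nonneg_left (nn _ _))
    · rw [Real.mul_rpow hε.le hK0.le]
      calc _ ≤ c₃ * K ^ r * ε ^ r * (t + 1) ^ (((n : ℝ) - 3) / 2) := by
            gcongr
            exact (min_le_right _ _).trans (min_le_right _ _)
        _ = _ := by ring
    · have := Hb ε T R u hε (by linarith) hu (by linarith)
        (fun z h0 h1 h2 => ⟨(hs z h0 h1 h2).1, (hs z h0 h1 h2).2.2.1⟩)
        (fun z h0 h1 => by rw [hbu z h0 h1]; positivity) hu0 hu1 ξ hξ t h0.le h1
      rw [hK, ← mul_div_assoc]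
      exact this

end

/-! ### Lifespan of the system of differential inequalities -/

/-- The coupled differential inequalities satisfied on `(0,T)` by the averages `F`, `G` of a
solution, with data `F(0) = ε a₁`, `F'(0) = ε b₁`, `G(0) = ε a₂`, `G'(0) = ε b₂` in dimension `ν`;
the exponent `r` belongs to the derivative nonlinearity. -/
structure MomSys (ν p q r c a₁ b₁ a₂ b₂ ε T : ℝ) (F F' F'' G G' G'' : ℝ → ℝ) : Prop where
  dF : ∀ t, HasDerivAt F (F' t) t
  dF' : ∀ t, HasDerivAt F' (F'' t) t
  dG : ∀ t, HasDerivAt G (G' t) t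
  dG' : ∀ t, HasDerivAt G' (G'' t) t
  F0 : F 0 = ε * a₁
  F'0 : F' 0 = ε * b₁
  G0 : G 0 = ε * a₂
  G'0 : G' 0 = ε * b₂
  hF : ∀ t, 0 < t → t < T → c * (t + 1) ^ (-(ν * (p - 1))) * |G t| ^ p ≤ F'' t
  hG : ∀ t, 0 < t → t < T → c * (t + 1) ^ (-(ν * (q - 1))) * |F t| ^ q ≤ G'' t
  hR : ∀ t, 0 < t → t < T → c * ε ^ r * (t + 1) ^ ((ν - 3) / 2) ≤ G'' t

theorem rpow_lower_of_mem {y : ℝ} (h1 : 1 / 2 ≤ y) (h2 : y ≤ 2) (e : ℝ) :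
    (2 : ℝ) ^ (-|e|) ≤ y ^ e := by
  have hy : 0 < y := by linarith
  rcases le_total 0 e with he | he
  · rw [abs_of_nonneg he, Real.rpow_neg (by norm_num), ← Real.inv_rpow (by norm_num)]
    exact Real.rpow_le_rpow (by norm_num) (by linarith) he
  · rw [abs_of_nonpos he, neg_neg]
    exact Real.rpow_le_rpow_of_nonpos hy h2 he

section
variable {ν p q r c a₁ b₁ a₂ b₂ ε T : ℝ} {F F' F'' G G' G'' : ℝ → ℝ}

theorem MomSys.F_lower (S : MomSys ν p q r c a₁ b₁ a₂ b₂ ε T F F' F'' G G' G'') (hc : 0 < c)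
    {t : ℝ} (h0 : 0 ≤ t) (h1 : t ≤ T) : ε * b₁ ≤ F' t ∧ ε * (a₁ + b₁ * t) ≤ F t := by
  obtain ⟨h, h'⟩ := taylor_lower S.dF S.dF' h0 (m := 0) fun s hs =>
    le_trans (by have := hs.1; positivity) (S.hF s hs.1 (hs.2.trans_le h1))
  rw [S.F0, S.F'0] at *
  constructor <;> linarith

theorem MomSys.G_lower (S : MomSys ν p q r c a₁ b₁ a₂ b₂ ε T F F' F'' G G' G'') (hc : 0 < c)
    {t : ℝ} (h0 : 0 ≤ t) (h1 : t ≤ T) : ε * b₂ ≤ G' t ∧ ε * (a₂ + b₂ * t) ≤ G t := by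
  obtain ⟨h, h'⟩ := taylor_lower S.dG S.dG' h0 (m := 0) fun s hs =>
    le_trans (by have := hs.1; positivity) (S.hG s hs.1 (hs.2.trans_le h1))
  rw [S.G0, S.G'0] at *
  constructor <;> linarith

/-- If `F(τ) ≥ 0` and `G(τ) ≥ γ`, survival up to time `2τ` limits the size of `γ`. -/
theorem MomSys.blow (S : MomSys ν p q r c a₁ b₁ a₂ b₂ ε T F F' F'' G G' G'') (hc : 0 < c)
    (hν : 0 < ν) (hp : 1 < p) (hq : 1 < q) (hb₁ : 0 < b₁) (hb₂ : 0 < b₂) (hε : 0 < ε)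
    {τ m γ : ℝ} (hτ : 0 < τ) (hτT : 2 * τ ≤ T) (hm : 2 * τ + 1 ≤ m) (hγ : 0 < γ) (hF : 0 ≤ F τ)
    (hG : γ ≤ G τ) :
    c ^ (1 + q) * m ^ (-(ν * (p * q - 1))) * γ ^ (p * q - 1) * τ ^ (2 * q + 2) ≤ katoC p q := by
  have hm0 : 0 < m := by linarith
  have mono : ∀ e : ℝ, 0 ≤ e → ∀ t ∈ Set.Ioo τ (2 * τ), m ^ (-e) ≤ (t + 1) ^ (-e) :=
    fun e he t ht => Real.rpow_le_rpow_of_nonpos (by linarith [ht.1]) (by linarith [ht.2])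
      (by linarith)
  have e1 : 0 ≤ ν * (p - 1) := mul_nonneg hν.le (by linarith)
  have e2 : 0 ≤ ν * (q - 1) := mul_nonneg hν.le (by linarith)
  have K := kato_blowup hp hq hτ (α := c * m ^ (-(ν * (p - 1)))) (β := c * m ^ (-(ν * (q - 1))))
    (by positivity) (by positivity) hγ S.dF S.dF' S.dG S.dG'
    (fun t ht => le_trans (mul_le_mul_of_nonneg_right
        (mul_le_mul_of_nonneg_left (mono _ e1 t ht) hc.le) (by positivity))
      (S.hF t (by linarith [ht.1]) (by linarith [ht.2])))
    (fun t ht => le_trans (mul_le_mul_of_nonneg_right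
        (mul_le_mul_of_nonneg_left (mono _ e2 t ht) hc.le) (by positivity))
      (S.hG t (by linarith [ht.1]) (by linarith [ht.2])))
    hF (le_trans (by positivity) (S.F_lower hc hτ.le (by linarith)).1)
    (le_trans (by positivity) (S.G_lower hc hτ.le (by linarith)).1) hG
  refine le_of_eq_of_le ?_ K
  rw [Real.mul_rpow hc.le (by positivity), ← Real.rpow_mul hm0.le, Real.rpow_add hc, Real.rpow_one,
    show -(ν * (p * q - 1)) = -(ν * (q - 1)) + -(ν * (p - 1)) * q by ring, Real.rpow_add hm0]
  ring

/-- For large data the system has no solution on `(0,T)` with `T > 1`: the forcing term alone makes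
`G` large at time `1/4`, then `F` is nonnegative at time `1/2`, and `MomSys.blow` applies with
`τ = 1/2`. -/
theorem MomSys.large (hc : 0 < c) (hν : 0 < ν) (hp : 1 < p) (hq : 1 < q) (hr : 1 < r)
    (hb₁ : 0 < b₁) (hb₂ : 0 < b₂) :
    ∃ ε₀ : ℝ, 0 < ε₀ ∧ ∀ ε T : ℝ, ∀ F F' F'' G G' G'' : ℝ → ℝ, ε₀ ≤ ε → 1 < T →
      ¬ MomSys ν p q r c a₁ b₁ a₂ b₂ ε T F F' F'' G G' G'' := by
  set d : ℝ := 2 ^ (-|(ν - 3) / 2|) with hd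
  have hd0 : 0 < d := by positivity
  set k := c * 2 ^ (-(ν * (p - 1))) * (c * d / 64) ^ p with hk
  have hk0 : 0 < k := by positivity
  have hpq : 0 < p * q - 1 := by nlinarith
  set M := c ^ (1 + q) * 2 ^ (-(ν * (p * q - 1))) * (c * d / 64) ^ (p * q - 1) *
    (1 / 2 : ℝ) ^ (2 * q + 2) with hM
  have hM0 : 0 < M := by positivity
  have ev : ∀ (s L : ℝ), 0 < s → ∀ᶠ ε : ℝ in Filter.atTop, L < ε ^ s := fun s L hs =>
    (tendsto_rpow_atTop hs).eventually_gt_atTop L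
  have hrp : 0 < r * p - 1 := by nlinarith
  obtain ⟨ε₀, hε₀⟩ := Filter.eventually_atTop.1 ((ev (r - 1) (64 * |a₂| / (c * d)) (by linarith)).and
    ((ev (r * p - 1) (32 * |a₁| / k) hrp).and (ev (r * (p * q - 1)) (katoC p q / M)
      (by positivity))))
  refine ⟨max ε₀ 1, by positivity, ?_⟩
  intro ε T F F' F'' G G' G'' hε' hT S
  have hε : 0 < ε := by linarith [le_max_right ε₀ 1]
  obtain ⟨h1, h2, h3⟩ := hε₀ ε ((le_max_left _ _).trans hε')
  rw [div_lt_iff₀ (by positivity)] at h1 h2 h3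
  have er : ε ^ r = ε ^ (r - 1) * ε := by
    rw [← Real.rpow_add_one hε.ne']; congr 1; ring
  have erp : (ε ^ r) ^ p = ε ^ (r * p - 1) * ε := by
    rw [← Real.rpow_mul hε.le, ← Real.rpow_add_one hε.ne']; congr 1; ring
  have hGlow : ∀ t, 1 / 4 ≤ t → t ≤ 1 → c * d / 64 * ε ^ r ≤ G t := fun t ht0 ht1 => by
    obtain ⟨-, h⟩ := taylor_lower S.dG S.dG' (show (0 : ℝ) ≤ t by linarith)
      (m := c * ε ^ r * d) fun s hs => le_trans (by
        gcongr
        exact rpow_lower_of_mem (by linarith [hs.1]) (by linarith [hs.2]) _)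
      (S.hR s hs.1 (by linarith [hs.2]))
    rw [S.G0, S.G'0] at h
    have i1 : c * ε ^ r * d * (1 / 4) ^ 2 ≤ c * ε ^ r * d * (t - 0) ^ 2 := by gcongr; linarith
    have i2 : 64 * |a₂| * ε ≤ c * d * ε ^ r := by
      rw [er]; linarith [mul_le_mul_of_nonneg_right h1.le hε.le]
    have i3 : -(|a₂| * ε) ≤ ε * a₂ := by nlinarith [neg_abs_le a₂]
    have i4 : 0 ≤ ε * b₂ * (t - 0) := mul_nonneg (by positivity) (by linarith)
    linarith
  have hF : 0 ≤ F (1 / 2) := by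
    obtain ⟨f1, f2⟩ := S.F_lower hc (t := 1 / 4) (by norm_num) (by linarith)
    obtain ⟨-, h⟩ := taylor_lower S.dF S.dF' (show (1 / 4 : ℝ) ≤ 1 / 2 by norm_num)
      (m := k * (ε ^ r) ^ p) fun s hs => le_trans (by
        have g1 := hGlow s hs.1.le (by linarith [hs.2])
        have g2 : (c * d / 64) ^ p * (ε ^ r) ^ p ≤ |G s| ^ p := by
          rw [← Real.mul_rpow (by positivity) (by positivity)]
          exact Real.rpow_le_rpow (by positivity) (g1.trans (le_abs_self _)) (by linarith)
        have g3 : (2 : ℝ) ^ (-(ν * (p - 1))) ≤ (s + 1) ^ (-(ν * (p - 1))) :=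
          Real.rpow_le_rpow_of_nonpos (by linarith [hs.1]) (by linarith [hs.2])
            (neg_nonpos.2 (mul_nonneg hν.le (by linarith)))
        rw [hk, mul_assoc]
        exact mul_le_mul (mul_le_mul_of_nonneg_left g3 hc.le) g2 (by positivity)
          (mul_nonneg hc.le (Real.rpow_nonneg (by linarith [hs.1]) _)))
      (S.hF s (by linarith [hs.1]) (by linarith [hs.2]))
    rw [erp] at h
    have i2 : 32 * |a₁| * ε ≤ ε ^ (r * p - 1) * k * ε := mul_le_mul_of_nonneg_right h2.le hε.le
    have i3 : -(|a₁| * ε) ≤ ε * a₁ := by nlinarith [neg_abs_le a₁]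
    have i4 : 0 ≤ ε * b₁ := by positivity
    linarith
  have B := S.blow hc hν hp hq hb₁ hb₂ hε (τ := 1 / 2) (m := 2) (by norm_num) (by linarith)
    (by norm_num) (by positivity) hF (hGlow _ (by norm_num) (by norm_num))
  rw [Real.mul_rpow (by positivity) (by positivity), ← Real.rpow_mul hε.le] at B
  have : ε ^ (r * (p * q - 1)) * M ≤ katoC p q := le_of_eq_of_le (by rw [hM]; ring) B
  linarith

/-- The lifespan bound once `T` exceeds a threshold independent of `ε`: the threshold makes `F(T/4)`
and `G(T/8)` nonnegative, the forcing term gives `G(T/4) ≳ ε^r T^{(ν+1)/2}`, and `MomSys.blow`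
with `τ = T/4` bounds `T`. -/
theorem MomSys.small (hc : 0 < c) (hν : 0 < ν) (hp : 1 < p) (hq : 1 < q)
    (hb₁ : 0 < b₁) (hb₂ : 0 < b₂) (hD : 0 < 4 * q - (ν - 1) * p * q + ν + 3) :
    ∃ τ₀ > (0 : ℝ), ∃ C > (0 : ℝ), ∀ ε T : ℝ, ∀ F F' F'' G G' G'' : ℝ → ℝ, 0 < ε → 4 * τ₀ < T →
      MomSys ν p q r c a₁ b₁ a₂ b₂ ε T F F' F'' G G' G'' →
      T ≤ C * ε ^ (-(r * (p * q - 1) / ((4 * q - (ν - 1) * p * q + ν + 3) / 2))) := by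
  set D := (4 * q - (ν - 1) * p * q + ν + 3) / 2 with hDdef
  have hD0 : 0 < D := by positivity
  set e := (ν - 3) / 2 with he
  set d : ℝ := 2 ^ (-|e|) with hd
  have hd0 : 0 < d := by positivity
  set M := c ^ (1 + q) * 3 ^ (-(ν * (p * q - 1))) * (c * d / 8) ^ (p * q - 1) with hM
  have hM0 : 0 < M := by positivity
  have hK : 0 < katoC p q := katoC_pos p q
  refine ⟨max 1 (max (|a₁| / b₁) (2 * |a₂| / b₂)), by positivity,
    4 * (katoC p q / M) ^ (1 / D), by positivity, ?_⟩
  intro ε T F F' F'' G G' G'' hε hT S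
  set τ := T / 4 with hτ
  have hmax : max 1 (max (|a₁| / b₁) (2 * |a₂| / b₂)) ≤ τ := by rw [hτ]; linarith
  have hτ1 : 1 ≤ τ := (le_max_left _ _).trans hmax
  have hτ0 : 0 < τ := by linarith
  have ha1 : |a₁| ≤ τ * b₁ :=
    (div_le_iff₀ hb₁).1 (((le_max_left _ _).trans (le_max_right _ _)).trans hmax)
  have ha2 : 2 * |a₂| ≤ τ * b₂ :=
    (div_le_iff₀ hb₂).1 (((le_max_right _ _).trans (le_max_right _ _)).trans hmax)
  have hF : 0 ≤ F τ := le_trans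
    (mul_nonneg hε.le (by linarith [neg_abs_le a₁])) (S.F_lower hc hτ0.le (by linarith)).2
  obtain ⟨g1, g2⟩ := S.G_lower hc (t := τ / 2) (by positivity) (by linarith)
  have g3 : 0 ≤ G (τ / 2) := le_trans (mul_nonneg hε.le (by linarith [neg_abs_le a₂])) g2
  have g4 : 0 ≤ G' (τ / 2) := le_trans (by positivity) g1
  have hG : c * d / 8 * (ε ^ r * τ ^ (e + 2)) ≤ G τ := by
    obtain ⟨-, h⟩ := taylor_lower S.dG S.dG' (show τ / 2 ≤ τ by linarith)
      (m := c * ε ^ r * (τ ^ e * d)) fun s hs => le_trans (by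
        have hs1 := hs.1
        have hs2 := hs.2
        have : (s + 1) ^ e = τ ^ e * ((s + 1) / τ) ^ e := by
          rw [← Real.mul_rpow hτ0.le (div_nonneg (by linarith) hτ0.le), mul_div_cancel₀ _ hτ0.ne']
        rw [this]
        gcongr
        refine rpow_lower_of_mem ?_ ?_ _
        · rw [le_div_iff₀ hτ0]; linarith
        · rw [div_le_iff₀ hτ0]; linarith)
      (S.hR s (by linarith [hs.1]) (by linarith [hs.2]))
    have i1 : 0 ≤ G' (τ / 2) * (τ - τ / 2) := mul_nonneg g4 (by linarith)
    have i2 : τ ^ (e + 2) = τ ^ e * τ ^ 2 := by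
      rw [Real.rpow_add hτ0]; norm_num
    rw [i2]
    nlinarith
  have B := S.blow hc hν hp hq hb₁ hb₂ hε (τ := τ) (m := 3 * τ) hτ0 (by linarith)
    (by linarith) (by positivity) hF hG
  have hεr : 0 < ε ^ r := by positivity
  have B' : M * (ε ^ (r * (p * q - 1)) * τ ^ D) ≤ katoC p q := by
    refine le_of_eq_of_le ?_ B
    rw [Real.mul_rpow (x := 3) (by norm_num) hτ0.le, Real.mul_rpow (by positivity) (by positivity),
      Real.mul_rpow hεr.le (by positivity), ← Real.rpow_mul hε.le, ← Real.rpow_mul hτ0.le,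
      show D = -(ν * (p * q - 1)) + (e + 2) * (p * q - 1) + (2 * q + 2) by rw [hDdef, he]; ring,
      Real.rpow_add hτ0, Real.rpow_add hτ0, hM]
    ring
  have h1 : τ ^ D ≤ katoC p q / M * ε ^ (-(r * (p * q - 1))) := by
    rw [Real.rpow_neg hε.le, div_mul_eq_mul_div, le_div_iff₀ hM0, ← div_eq_mul_inv,
      le_div_iff₀ (by positivity)]
    linarith
  have h2 := Real.rpow_le_rpow (by positivity) h1 (show 0 ≤ 1 / D by positivity)
  rw [← Real.rpow_mul hτ0.le, mul_one_div_cancel hD0.ne', Real.rpow_one,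
    Real.mul_rpow (by positivity) (by positivity), ← Real.rpow_mul hε.le,
    show -(r * (p * q - 1)) * (1 / D) = -(r * (p * q - 1) / D) by ring] at h2
  have : T = 4 * τ := by rw [hτ]; ring
  rw [this]
  linarith

end

/-- Lifespan upper bound (estimate (2.14) of Hidano–Yokoyama). -/
theorem lifespan_bound (n : ℕ) (hn : 2 ≤ n) (p q : ℝ) (hp : 1 < p) (hq : 1 < q)
    (hpq : 0 < 4 * q - ((n : ℝ) - 1) * p * q + n + 3)
    (f₁ g₁ f₂ g₂ : Spc n → ℝ)
    (hf₁ : ContDiff ℝ ∞ f₁) (hf₁c : HasCompactSupport f₁)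
    (hg₁ : ContDiff ℝ ∞ g₁) (hg₁c : HasCompactSupport g₁)
    (hf₂ : ContDiff ℝ ∞ f₂) (hf₂c : HasCompactSupport f₂)
    (hg₂ : ContDiff ℝ ∞ g₂) (hg₂c : HasCompactSupport g₂)
    (hg₁pos : 0 < ∫ x, g₁ x) (hg₂pos : 0 < ∫ x, g₂ x) :
    ∃ C > (0 : ℝ), ∀ ε : ℝ, 0 < ε → ∀ T : ℝ, 1 < T →
      ∀ u v : STn n → ℝ, ContDiff ℝ 2 u → ContDiff ℝ 2 v →
      (∀ z : STn n, 0 < z.1 → z.1 < T → boxD u z = |v z| ^ p) →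
      (∀ z : STn n, 0 < z.1 → z.1 < T →
        boxD v z = |u z| ^ q + |dtD u z| ^ (((n : ℝ) + 1) / ((n : ℝ) - 1))) →
      (∀ x, u (0, x) = ε * f₁ x) → (∀ x, dtD u (0, x) = ε * g₁ x) →
      (∀ x, v (0, x) = ε * f₂ x) → (∀ x, dtD v (0, x) = ε * g₂ x) →
      (∀ z : STn n, 0 ≤ z.1 → z.1 < T → z.1 + 1 < ‖z.2‖ →
        u z = 0 ∧ v z = 0 ∧ dtD u z = 0 ∧ dtD v z = 0) →
      T ≤ C * ε ^ (-(2 * ((n : ℝ) + 1) * (p * q - 1)) /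
            (((n : ℝ) - 1) * (4 * q - ((n : ℝ) - 1) * p * q + n + 3))) := by
  have hn' : (2 : ℝ) ≤ n := by exact_mod_cast hn
  have hn1 : (0 : ℝ) < (n : ℝ) - 1 := by linarith
  set r := ((n : ℝ) + 1) / ((n : ℝ) - 1) with hr
  have hr1 : 1 < r := by rw [hr, one_lt_div hn1]; linarith
  have hpq1 : 0 < p * q - 1 := by nlinarith
  set κ := r * (p * q - 1) / ((4 * q - ((n : ℝ) - 1) * p * q + n + 3) / 2) with hκ
  have hκ0 : 0 < κ := by positivity
  have hexp : -(2 * ((n : ℝ) + 1) * (p * q - 1)) /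
      (((n : ℝ) - 1) * (4 * q - ((n : ℝ) - 1) * p * q + n + 3)) = -κ := by
    rw [hκ, hr]
    field_simp
  obtain ⟨c, hc, Hc⟩ := moment_system (f₂ := f₂) (g₂ := g₂) hn hp hq hf₁.continuous hf₁c
    hg₁.continuous hg₁c hg₁pos
  obtain ⟨ε₀, hε₀, HL⟩ := MomSys.large (a₁ := ∫ x, f₁ x) (a₂ := ∫ x, f₂ x) hc
    (show (0 : ℝ) < n by linarith) hp hq hr1 hg₁pos hg₂pos
  obtain ⟨τ₀, hτ₀, C, hC, HS⟩ := MomSys.small (r := r) (a₁ := ∫ x, f₁ x) (a₂ := ∫ x, f₂ x) hc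
    (show (0 : ℝ) < n by linarith) hp hq hg₁pos hg₂pos hpq
  -- the second entry covers `T ≤ 4 τ₀`, where only `ε < ε₀` is available
  refine ⟨max C (4 * τ₀ * ε₀ ^ κ), by positivity, ?_⟩
  intro ε hε T hT u v hu hv hbu hbv hu0 hu1 hv0 hv1 hs
  obtain ⟨F, F', F'', G, G', G'', s1, s2, s3, s4, s5, s6, s7, s8, s9, s10, s11⟩ :=
    Hc ε hε T hT u v hu hv hbu hbv hu0 hu1 hv0 hv1 hs
  have S : MomSys n p q r c (∫ x, f₁ x) (∫ x, g₁ x) (∫ x, f₂ x) (∫ x, g₂ x) ε T F F' F'' G G' G'' :=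
    ⟨s1, s2, s3, s4, s5, s6, s7, s8, s9, s10, s11⟩
  have hlt : ε < ε₀ := by
    by_contra! h
    exact HL ε T F F' F'' G G' G'' h hT S
  rw [hexp]
  rcases lt_or_ge (4 * τ₀) T with h | h
  · exact (HS ε T F F' F'' G G' G'' hε h S).trans
      (mul_le_mul_of_nonneg_right (le_max_left _ _) (by positivity))
  · refine le_trans ?_ (mul_le_mul_of_nonneg_right (le_max_right _ _) (by positivity))
    have h1 : 1 ≤ ε₀ ^ κ * ε ^ (-κ) := by
      rw [Real.rpow_neg hε.le, ← div_eq_mul_inv, one_le_div (by positivity)]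
      exact Real.rpow_le_rpow hε.le hlt.le hκ0.le
    rw [mul_assoc]
    exact h.trans (le_mul_of_one_le_right (by positivity) h1)
end
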